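/- Calabi-type C¹ estimate (Proposition 4.1 in coordinates): let (g, β) be a smooth solution of the coordinate pluriclosed flow on [0,τ)×B_R(0) ⊆ ℝ×ℂⁿ with τ ≤ 1 and 0 < R ≤ 1, with generalized metric G := G(g,β); let G̃ := G(g̃,β̃) be the generalized metric of a fixed smooth background (g̃,β̃) on B_R(0), and fix Λ ≥ 1 with Λ⁻¹·G̃ ≤ G ≤ Λ·G̃ (Loewner order) on [0,τ)×B_R(0). Then there exists a constant K, depending only on n, Λ, and upper bounds on B_R(0) for the entries of g̃, g̃⁻¹, β̃ and their Wirtinger derivatives up to order two, such that for every t ∈ (0,τ) and every x ∈ B_{R/2}(0): |Υ|²_{g⁻¹,G⁻¹,G}(x,t) ≤ K·(1/t + R⁻⁴), where Υ is the difference of the Chern connections of G and G̃. -/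

import Mathlib

open Matrix
open scoped ComplexOrder

noncomputable section

/-- Spatial Wirtinger derivative `∂ᵢ f = ½(∂f/∂xᵢ − i·∂f/∂yᵢ)` of `f : ℝ × ℂⁿ → ℂ`,
computed via the real Fréchet derivative in the spatial directions. -/
def wdP {n : ℕ} (i : Fin n) (f : ℝ × (Fin n → ℂ) → ℂ) (p : ℝ × (Fin n → ℂ)) : ℂ :=
  (fderiv ℝ f p (0, Pi.single i 1) - Complex.I * fderiv ℝ f p (0, Pi.single i Complex.I)) / 2

/-- Spatial conjugate Wirtinger derivative `∂_{ī} f = ½(∂f/∂xᵢ + i·∂f/∂yᵢ)`. -/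
def wdbP {n : ℕ} (i : Fin n) (f : ℝ × (Fin n → ℂ) → ℂ) (p : ℝ × (Fin n → ℂ)) : ℂ :=
  (fderiv ℝ f p (0, Pi.single i 1) + Complex.I * fderiv ℝ f p (0, Pi.single i Complex.I)) / 2

/-- Time derivative `∂ₜ f` of `f : ℝ × ℂⁿ → ℂ`. -/
def dtP {n : ℕ} (f : ℝ × (Fin n → ℂ) → ℂ) (p : ℝ × (Fin n → ℂ)) : ℂ :=
  fderiv ℝ f p (1, 0)

/-- Entrywise spatial Wirtinger derivative of a matrix-valued map. -/
def wdPM {n : ℕ} {ι κ : Type*} (i : Fin n) (A : ℝ × (Fin n → ℂ) → Matrix ι κ ℂ)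
    (p : ℝ × (Fin n → ℂ)) : Matrix ι κ ℂ :=
  Matrix.of fun a b => wdP i (fun q => A q a b) p

/-- Entrywise spatial conjugate Wirtinger derivative of a matrix-valued map. -/
def wdbPM {n : ℕ} {ι κ : Type*} (i : Fin n) (A : ℝ × (Fin n → ℂ) → Matrix ι κ ℂ)
    (p : ℝ × (Fin n → ℂ)) : Matrix ι κ ℂ :=
  Matrix.of fun a b => wdbP i (fun q => A q a b) p

/-- Entrywise time derivative of a matrix-valued map. -/
def dtPM {n : ℕ} {ι κ : Type*} (A : ℝ × (Fin n → ℂ) → Matrix ι κ ℂ)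
    (p : ℝ × (Fin n → ℂ)) : Matrix ι κ ℂ :=
  Matrix.of fun a b => dtP (fun q => A q a b) p

/-- The generalized metric associated to a Hermitian metric `g` and a `(2,0)`-form
(antisymmetric matrix) `β`, as a `2n × 2n` block matrix on `T ⊕ T*`. -/
def genMetric {n : ℕ} (g β : Matrix (Fin n) (Fin n) ℂ) :
    Matrix (Fin n ⊕ Fin n) (Fin n ⊕ Fin n) ℂ :=
  Matrix.fromBlocks (g + β * (g⁻¹).map (starRingEnd ℂ) * βᴴ) (β * (g⁻¹).map (starRingEnd ℂ))
    ((g⁻¹).map (starRingEnd ℂ) * βᴴ) ((g⁻¹).map (starRingEnd ℂ))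

/-- Lowered Chern curvature `Ω^h_{ij̄αβ̄} = −∂ᵢ∂_{j̄}h_{αβ̄} + Σ ∂ᵢh_{αγ̄}·h^{γ̄δ}·∂_{j̄}h_{δβ̄}`
of a (time-dependent) Hermitian matrix field `h`, where `h^{γ̄δ} = (h⁻¹) γ δ`. -/
def chernP {n : ℕ} {ι : Type*} [Fintype ι] [DecidableEq ι]
    (h : ℝ × (Fin n → ℂ) → Matrix ι ι ℂ) (i j : Fin n) (a b : ι) (p : ℝ × (Fin n → ℂ)) : ℂ :=
  - wdP i (fun q => wdbP j (fun r => h r a b) q) p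
    + ∑ c : ι, ∑ d : ι, wdP i (fun q => h q a c) p * (h p)⁻¹ c d * wdbP j (fun q => h q d b) p

/-- Chern torsion `T_{ijk̄} = ∂ᵢ g_{jk̄} − ∂ⱼ g_{ik̄}`. -/
def torsionP {n : ℕ} (g : ℝ × (Fin n → ℂ) → Matrix (Fin n) (Fin n) ℂ)
    (i j k : Fin n) (p : ℝ × (Fin n → ℂ)) : ℂ :=
  wdP i (fun q => g q j k) p - wdP j (fun q => g q i k) p

/-- Trace with respect to `g` of the lowered Chern curvature of `h`:
`Σ g^{j̄i}·Ω^h_{ij̄ab̄}`. -/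
def traceChernP {n : ℕ} {ι : Type*} [Fintype ι] [DecidableEq ι]
    (g : ℝ × (Fin n → ℂ) → Matrix (Fin n) (Fin n) ℂ)
    (h : ℝ × (Fin n → ℂ) → Matrix ι ι ℂ) (a b : ι) (p : ℝ × (Fin n → ℂ)) : ℂ :=
  ∑ i : Fin n, ∑ j : Fin n, (g p)⁻¹ j i * chernP h i j a b p

/-- `T²_{ab̄} = Σ T_{aln̄}·conj(T_{bkm̄})·g^{k̄l}·g^{n̄m}`. -/
def torsionSqP {n : ℕ} (g : ℝ × (Fin n → ℂ) → Matrix (Fin n) (Fin n) ℂ)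
    (a b : Fin n) (p : ℝ × (Fin n → ℂ)) : ℂ :=
  ∑ k : Fin n, ∑ l : Fin n, ∑ m : Fin n, ∑ m' : Fin n,
    torsionP g a l m' p * (starRingEnd ℂ) (torsionP g b k m p) * (g p)⁻¹ k l * (g p)⁻¹ m' m

/-- Second Chern covariant derivative
`∇ᵢ∇_{j̄}β_{ab} = ∂ᵢ∂_{j̄}β_{ab} − Σ g^{k̄l}·∂ᵢg_{ak̄}·∂_{j̄}β_{lb} − Σ g^{k̄l}·∂ᵢg_{bk̄}·∂_{j̄}β_{al}`. -/
def nabla2betaP {n : ℕ} (g β : ℝ × (Fin n → ℂ) → Matrix (Fin n) (Fin n) ℂ)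
    (i j a b : Fin n) (p : ℝ × (Fin n → ℂ)) : ℂ :=
  wdP i (fun q => wdbP j (fun r => β r a b) q) p
    - ∑ k : Fin n, ∑ l : Fin n,
        (g p)⁻¹ k l * wdP i (fun q => g q a k) p * wdbP j (fun q => β q l b) p
    - ∑ k : Fin n, ∑ l : Fin n,
        (g p)⁻¹ k l * wdP i (fun q => g q b k) p * wdbP j (fun q => β q a l) p

/-- `Δ_g β_{ab} = Σ g^{j̄i}·∇ᵢ∇_{j̄}β_{ab}`. -/
def lapBetaP {n : ℕ} (g β : ℝ × (Fin n → ℂ) → Matrix (Fin n) (Fin n) ℂ)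
    (a b : Fin n) (p : ℝ × (Fin n → ℂ)) : ℂ :=
  ∑ i : Fin n, ∑ j : Fin n, (g p)⁻¹ j i * nabla2betaP g β i j a b p


/-- The Wirtinger derivative `∂ᵢ f` of a function `f : ℂⁿ → ℂ`. -/
def wd {n : ℕ} (i : Fin n) (f : (Fin n → ℂ) → ℂ) (z : Fin n → ℂ) : ℂ :=
  (fderiv ℝ f z (Pi.single i 1) - Complex.I * fderiv ℝ f z (Pi.single i Complex.I)) / 2

/-- The conjugate Wirtinger derivative `∂_{ī} f` of a function `f : ℂⁿ → ℂ`. -/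
def wdb {n : ℕ} (i : Fin n) (f : (Fin n → ℂ) → ℂ) (z : Fin n → ℂ) : ℂ :=
  (fderiv ℝ f z (Pi.single i 1) + Complex.I * fderiv ℝ f z (Pi.single i Complex.I)) / 2


/-- The Laplacian `Δ f = Σ g^{n̄m}·∂_m∂_{n̄} f` associated to `g`. -/
def lapP {n : ℕ} (g : ℝ × (Fin n → ℂ) → Matrix (Fin n) (Fin n) ℂ)
    (f : ℝ × (Fin n → ℂ) → ℂ) (p : ℝ × (Fin n → ℂ)) : ℂ :=
  ∑ m' : Fin n, ∑ n' : Fin n, (g p)⁻¹ n' m' * wdP m' (fun q => wdbP n' f q) p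

/-- Difference of Chern connections `Υᵢ{}_A{}^D = Σ_C (∂ᵢG_{AC̄}·G^{C̄D} − ∂ᵢG̃_{AC̄}·G̃^{C̄D})`. -/
def UpsP {n : ℕ} {ι : Type*} [Fintype ι] [DecidableEq ι]
    (G Gt : ℝ × (Fin n → ℂ) → Matrix ι ι ℂ) (i : Fin n) (A D : ι)
    (p : ℝ × (Fin n → ℂ)) : ℂ :=
  ∑ C : ι, (wdP i (fun q => G q A C) p * (G p)⁻¹ C D
    - wdP i (fun q => Gt q A C) p * (Gt p)⁻¹ C D)

/-- `|Υ|²_{g⁻¹,G⁻¹,H} = Σ g^{j̄i}·G^{B̄A}·H_{DĒ}·Υᵢ{}_A{}^D·conj(Υⱼ{}_B{}^E)`. -/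
def upsNormP {n : ℕ} {ι : Type*} [Fintype ι] [DecidableEq ι]
    (g : ℝ × (Fin n → ℂ) → Matrix (Fin n) (Fin n) ℂ)
    (G Gt H : ℝ × (Fin n → ℂ) → Matrix ι ι ℂ) (p : ℝ × (Fin n → ℂ)) : ℂ :=
  ∑ i : Fin n, ∑ j : Fin n, ∑ A : ι, ∑ B : ι, ∑ D : ι, ∑ E : ι,
    (g p)⁻¹ j i * (G p)⁻¹ B A * H p D E * UpsP G Gt i A D p *
      (starRingEnd ℂ) (UpsP G Gt j B E p)


/-- `f` and its Wirtinger derivatives up to order two are bounded by `B` at `z`. -/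
def BoundedDerivs2 {n : ℕ} (B : ℝ) (f : (Fin n → ℂ) → ℂ) (z : Fin n → ℂ) : Prop :=
  ‖f z‖ ≤ B ∧ (∀ i : Fin n, ‖wd i f z‖ ≤ B ∧ ‖wdb i f z‖ ≤ B) ∧
    (∀ i j : Fin n, ‖wd i (wd j f) z‖ ≤ B ∧ ‖wd i (wdb j f) z‖ ≤ B ∧
      ‖wdb i (wd j f) z‖ ≤ B ∧ ‖wdb i (wdb j f) z‖ ≤ B)

/-- The Euclidean ball `B_R(0) ⊆ ℂⁿ`. -/
def eball {n : ℕ} (R : ℝ) : Set (Fin n → ℂ) :=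
  {z : Fin n → ℂ | ∑ i : Fin n, Complex.normSq (z i) < R ^ 2}

/-!
On an open set of space-time the smooth functions form a `⋆`-algebra `A` carrying commuting
derivations `∂ₜ`, `∂ᵢ`, `∂_{ī}`, so that the evolution equations are identities between matrices
over `A`.  The pluriclosed flow of `(g, β)` is equivalent to the flow
`∂ₜG = Σ g^{j̄i} (∂ᵢ∂_{j̄}G - ∂ᵢG G⁻¹ ∂_{j̄}G)` of the generalized metric, from which
`f = |∂G G⁻¹|²` satisfies `(∂ₜ - Δ_g) f ≤ 0` and `u = tr G` satisfies
`(∂ₜ - Δ_g) u ≤ -c f`.  With a parabolic cutoff `ψφ²`, the maximum principle applied to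
`ψφ² f + C u` bounds `f` by a multiple of `1/t + R⁻²`.  Finally `Υ` is the difference of
`∂G G⁻¹` and the same expression for the background, which is bounded.
-/

namespace PluriclosedFlow

section MatrixDerivation

variable {R A : Type*} [CommRing R] [CommRing A] [Algebra R A]
variable {κ μ ν : Type*}

lemma map_derivation_add (δ : Derivation R A A) (M N : Matrix μ ν A) :
    (M + N).map δ = M.map δ + N.map δ :=
  Matrix.map_add δ (map_add δ) M N

lemma map_derivation_sub (δ : Derivation R A A) (M N : Matrix μ ν A) :
    (M - N).map δ = M.map δ - N.map δ :=
  Matrix.map_sub δ (map_sub δ) M N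

lemma map_derivation_neg (δ : Derivation R A A) (M : Matrix μ ν A) :
    (-M).map δ = -M.map δ := by
  ext; simp only [map_apply, Matrix.neg_apply, map_neg]

lemma map_derivation_sum {σ : Type*} (s : Finset σ) (δ : Derivation R A A)
    (M : σ → Matrix μ ν A) : (∑ i ∈ s, M i).map δ = ∑ i ∈ s, (M i).map δ := by
  ext; simp only [map_apply, Matrix.sum_apply, map_sum]

lemma map_derivation_smul (δ : Derivation R A A) (x : A) (M : Matrix μ ν A) :
    (x • M).map δ = x • M.map δ + δ x • M := by
  ext; simp [mul_comm]

lemma derivation_trace [Fintype κ] (δ : Derivation R A A) (M : Matrix κ κ A) :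
    δ (trace M) = trace (M.map δ) := by
  simp only [trace, map_sum, diag_apply, map_apply]

lemma map_derivation_mul [Fintype κ] (δ : Derivation R A A) (M : Matrix μ κ A)
    (N : Matrix κ ν A) : (M * N).map δ = M.map δ * N + M * N.map δ := by
  ext a b
  simp only [map_apply, mul_apply, Matrix.add_apply, map_sum, Derivation.leibniz, smul_eq_mul,
    ← Finset.sum_add_distrib]
  exact Finset.sum_congr rfl fun _ _ => by ring

lemma map_derivation_one [DecidableEq κ] (δ : Derivation R A A) :
    (1 : Matrix κ κ A).map δ = 0 := by
  ext a b
  by_cases h : a = b <;> simp [one_apply, h]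

lemma map_derivation_inverse [Fintype κ] [DecidableEq κ] (δ : Derivation R A A)
    {g h : Matrix κ κ A} (gh : g * h = 1) (hg : h * g = 1) :
    h.map δ = -(h * g.map δ * h) := by
  have product_rule : 0 = g.map δ * h + g * h.map δ := by
    rw [← map_derivation_one δ, ← gh, map_derivation_mul]
  have : h * (g.map δ * h + g * h.map δ) = 0 := by rw [← product_rule, mul_zero]
  rw [mul_add, ← mul_assoc h g, hg, one_mul, ← mul_assoc] at this
  exact eq_neg_of_add_eq_zero_right this

lemma sum_smul_derivation_apply {ι : Type*} (s : Finset ι) (c : ι → A)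
    (δ : ι → Derivation R A A) (x : A) : (∑ j ∈ s, c j • δ j) x = ∑ j ∈ s, c j * δ j x := by
  rw [← Derivation.coeFnAddMonoidHom_apply, map_sum, Finset.sum_apply]
  rfl

lemma map_sum_smul_derivation {ι : Type*} (s : Finset ι) (c : ι → A)
    (δ : ι → Derivation R A A) (M : Matrix μ ν A) :
    M.map (∑ j ∈ s, c j • δ j : Derivation R A A) = ∑ j ∈ s, c j • M.map (δ j) := by
  ext
  simp only [map_apply, sum_smul_derivation_apply, Matrix.sum_apply, Matrix.smul_apply, smul_eq_mul]

lemma transpose_map_derivation (δ : Derivation R A A) (M : Matrix μ ν A) :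
    Mᵀ.map δ = (M.map δ)ᵀ :=
  transpose_map.symm

variable [Fintype κ]

/-- The logarithmic derivative `(δG)·G⁻¹` of an invertible matrix `G` with inverse `H`: the
connection matrix of the metric `G` in the direction of the derivation `δ`. -/
def logDeriv (G H : Matrix κ κ A) (δ : Derivation R A A) : Matrix κ κ A := G.map δ * H

lemma logDeriv_sum_smul (G H : Matrix κ κ A) {ι : Type*} (s : Finset ι) (c : ι → A)
    (δ : ι → Derivation R A A) :
    logDeriv G H (∑ j ∈ s, c j • δ j) = ∑ j ∈ s, c j • logDeriv G H (δ j) := by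
  simp only [logDeriv, map_sum_smul_derivation, Finset.sum_mul, smul_mul]

lemma logDeriv_neg (G H : Matrix κ κ A) (δ : Derivation R A A) :
    logDeriv G H (-δ) = -logDeriv G H δ := by
  rw [logDeriv, logDeriv, ← neg_mul]
  rfl

lemma logDeriv_zero (G H : Matrix κ κ A) : logDeriv G H (0 : Derivation R A A) = 0 := by
  simpa using logDeriv_sum_smul G H ∅ (fun _ : κ => (0 : A)) (fun _ => (0 : Derivation R A A))

variable [DecidableEq κ]

lemma map_eq_logDeriv_mul {G H : Matrix κ κ A} (HG : H * G = 1) (δ : Derivation R A A) :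
    G.map δ = logDeriv G H δ * G := by
  rw [logDeriv, mul_assoc, HG, mul_one]

lemma map_inverse_eq_mul_logDeriv {G H : Matrix κ κ A} (GH : G * H = 1) (HG : H * G = 1)
    (δ : Derivation R A A) : H.map δ = -(H * logDeriv G H δ) := by
  rw [map_derivation_inverse δ GH HG, logDeriv, mul_assoc]

lemma logDeriv_mul (G₁ H₁ : Matrix κ κ A) {G₂ H₂ : Matrix κ κ A} (GH₂ : G₂ * H₂ = 1)
    (δ : Derivation R A A) : logDeriv (G₁ * G₂) (H₂ * H₁) δ
      = logDeriv G₁ H₁ δ + G₁ * logDeriv G₂ H₂ δ * H₁ := by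
  have cancel : G₁.map δ * G₂ * (H₂ * H₁) = G₁.map δ * H₁ := by
    rw [mul_assoc, ← mul_assoc G₂, GH₂, one_mul]
  rw [logDeriv, map_derivation_mul, add_mul, cancel]
  simp only [logDeriv, mul_assoc]

lemma map_logDeriv {G H : Matrix κ κ A} (GH : G * H = 1) (HG : H * G = 1)
    (δ ε : Derivation R A A) : (logDeriv G H δ).map ε
      = (G.map δ).map ε * H - logDeriv G H δ * logDeriv G H ε := by
  rw [logDeriv, map_derivation_mul, map_inverse_eq_mul_logDeriv GH HG, mul_neg, ← mul_assoc,
    ← sub_eq_add_neg]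

lemma maurer_cartan {G H : Matrix κ κ A} (GH : G * H = 1) (HG : H * G = 1)
    (δ ε : Derivation R A A) : (logDeriv G H δ).map ε = (logDeriv G H ε).map δ
      + (logDeriv G H ε * logDeriv G H δ - logDeriv G H δ * logDeriv G H ε)
      + logDeriv G H ⁅ε, δ⁆ := by
  have bracket : G.map (⁅ε, δ⁆ : Derivation R A A) = (G.map δ).map ε - (G.map ε).map δ := by
    ext; simp only [map_apply, Matrix.sub_apply, Derivation.commutator_apply]
  rw [map_logDeriv GH HG, map_logDeriv GH HG, logDeriv.eq_1 G H ⁅ε, δ⁆, bracket, sub_mul]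
  abel

lemma sum_map_logDeriv {G H : Matrix κ κ A} (GH : G * H = 1) (HG : H * G = 1) {ι : Type*}
    (s : Finset ι) (d D : ι → Derivation R A A) : ∑ i ∈ s, (logDeriv G H (d i)).map (D i)
      = (∑ i ∈ s, ((G.map (d i)).map (D i) - G.map (d i) * H * G.map (D i))) * H := by
  rw [Finset.sum_mul]
  refine Finset.sum_congr rfl fun i _ => ?_
  rw [map_logDeriv GH HG, sub_mul]
  simp only [logDeriv, mul_assoc]

end MatrixDerivation

section TripleSums

variable {ι κ μ A : Type*} [Fintype ι] [Fintype κ] [Fintype μ] [AddCommMonoid A]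

lemma sum_reverse (F : ι → κ → μ → A) :
    ∑ i, ∑ k, ∑ m, F i k m = ∑ m, ∑ k, ∑ i, F i k m := by
  rw [Finset.sum_comm, Finset.sum_comm (s := (Finset.univ : Finset μ))]
  exact Finset.sum_congr rfl fun _ _ => Finset.sum_comm

end TripleSums

/-- The algebraic skeleton of a flow of Hermitian metrics in coordinates: commuting derivations
`dt = ∂ₜ`, `d i = ∂ᵢ`, `db i = ∂_{ī}` of an algebra of functions, a metric `g` on the base and a
metric `G` on a bundle, with inverses `h` and `H`. Compatibility with conjugation is the separate
property `FlowData.IsHermitian`, so that the commutation formulas stay purely algebraic. -/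
structure FlowData (ι κ A : Type*) [Fintype ι] [DecidableEq ι] [Fintype κ] [DecidableEq κ]
    [CommRing A] [Algebra ℂ A] where
  dt : Derivation ℂ A A
  d : ι → Derivation ℂ A A
  db : ι → Derivation ℂ A A
  d_d : ∀ i j x, d i (d j x) = d j (d i x)
  d_db : ∀ i j x, d i (db j x) = db j (d i x)
  db_db : ∀ i j x, db i (db j x) = db j (db i x)
  dt_d : ∀ i x, dt (d i x) = d i (dt x)
  dt_db : ∀ i x, dt (db i x) = db i (dt x)
  g : Matrix ι ι A
  h : Matrix ι ι A
  G : Matrix κ κ A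
  H : Matrix κ κ A
  g_mul_h : g * h = 1
  h_mul_g : h * g = 1
  G_mul_H : G * H = 1
  H_mul_G : H * G = 1

namespace FlowData

variable {A : Type*} [CommRing A] [Algebra ℂ A]
variable {ι κ : Type*} [Fintype ι] [DecidableEq ι] [Fintype κ] [DecidableEq κ]
variable (S : FlowData ι κ A)

/-- The antiholomorphic derivation with index raised by the metric, `g^{j̄i}∂_{j̄}`. -/
def D (i : ι) : Derivation ℂ A A := ∑ j, S.h j i • S.db j

/-- The Chern connection `∂ₖg·g⁻¹` of the base metric. -/
def θ (k : ι) : Matrix ι ι A := logDeriv S.g S.h (S.d k)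

/-- The Chern connection `∂ₖG·G⁻¹` of the bundle metric. -/
def Γ (k : ι) : Matrix κ κ A := logDeriv S.G S.H (S.d k)

/-- The logarithmic derivative of the bundle metric in the raised antiholomorphic direction; up to
raising indices it is the conjugate of `Γ`. -/
def Γbar (k : ι) : Matrix κ κ A := logDeriv S.G S.H (S.D k)

/-- The (negative of the) Chern curvature of the bundle metric, with its antiholomorphic index
raised: `g^{j̄k}∂_{j̄}Γᵢ`. -/
def Ω (i k : ι) : Matrix κ κ A := (S.Γ i).map (S.D k)

/-- The trace over the base of the curvature `Ω`. -/
def trΩ : Matrix κ κ A := ∑ i, S.Ω i i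

/-- The covariant derivative of `Γ` in holomorphic directions. -/
def nablaΓ (i k : ι) : Matrix κ κ A :=
  (S.Γ k).map (S.d i) - (S.Γ i * S.Γ k - S.Γ k * S.Γ i) - ∑ l, S.θ i k l • S.Γ l

/-- The conjugate torsion of the base metric with two indices raised: the structure constants of
the derivations `D`. -/
def τ (k i c : ι) : A := logDeriv S.g S.h (S.D i) c k - logDeriv S.g S.h (S.D k) c i

/-- The squared norm `|Γ|²` of the Chern connection of the bundle metric; it is the comparison
with the flat background. -/
def energy : A := ∑ k, trace (S.Γ k * S.Γbar k)

/-- The Chern Laplacian `g^{j̄i}∂ᵢ∂_{j̄}`. -/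
def lap (x : A) : A := ∑ i, S.D i (S.d i x)

/-- The curvature corrected by torsion, which completes the square in the evolution equation of
the energy. -/
def torsionΩ (l k : ι) : Matrix κ κ A := S.Ω l k - ∑ c, S.τ c k l • S.Γ c

/-- The adjoint of `torsionΩ`, written without conjugation. -/
def torsionΩbar (k l : ι) : Matrix κ κ A := S.Ω k l - ∑ m, (S.θ k m l - S.θ m k l) • S.Γbar m

lemma D_apply (i : ι) (x : A) : S.D i x = ∑ j, S.h j i * S.db j x :=
  sum_smul_derivation_apply _ _ _ _

section Commutators

lemma derivation_D (δ : Derivation ℂ A A) (i : ι) (x : A) :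
    δ (S.D i x) = ∑ j, S.h j i * δ (S.db j x) - ∑ c, logDeriv S.g S.h δ c i * S.D c x := by
  have derivation_h (j : ι) : δ (S.h j i) = -∑ c, S.h j c * logDeriv S.g S.h δ c i :=
    congrFun₂ (map_inverse_eq_mul_logDeriv S.g_mul_h S.h_mul_g δ) j i
  simp only [D_apply, map_sum, Derivation.leibniz, smul_eq_mul, derivation_h,
    Finset.sum_add_distrib, sub_eq_add_neg, ← Finset.sum_neg_distrib, Finset.mul_sum]
  congr 1
  rw [Finset.sum_comm]
  exact Finset.sum_congr rfl fun _ _ => Finset.sum_congr rfl fun _ _ => by ring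

lemma lie_D_of_commute {δ : Derivation ℂ A A} (hδ : ∀ j x, δ (S.db j x) = S.db j (δ x)) (i : ι) :
    ⁅δ, S.D i⁆ = -∑ c, logDeriv S.g S.h δ c i • S.D c := by
  ext x
  rw [Derivation.commutator_apply, derivation_D, Derivation.neg_apply, sum_smul_derivation_apply,
    S.D_apply i (δ x)]
  simp only [hδ]
  ring

lemma lie_d_D (k i : ι) : ⁅S.d k, S.D i⁆ = -∑ c, S.θ k c i • S.D c :=
  S.lie_D_of_commute (S.d_db k) i

lemma lie_dt_D (i : ι) : ⁅S.dt, S.D i⁆ = -∑ c, logDeriv S.g S.h S.dt c i • S.D c :=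
  S.lie_D_of_commute S.dt_db i

lemma lie_D_D (k i : ι) : ⁅S.D k, S.D i⁆ = ∑ c, S.τ k i c • S.D c := by
  ext x
  have second_order_symm : ∑ j, S.h j i * S.D k (S.db j x) = ∑ j, S.h j k * S.D i (S.db j x) := by
    simp only [D_apply, Finset.mul_sum]
    rw [Finset.sum_comm]
    refine Finset.sum_congr rfl fun _ _ => Finset.sum_congr rfl fun _ _ => ?_
    rw [S.db_db]
    ring
  rw [Derivation.commutator_apply, derivation_D, derivation_D, second_order_symm,
    sum_smul_derivation_apply]
  simp only [τ, sub_mul, Finset.sum_sub_distrib]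
  ring

lemma lie_d_d (k i : ι) : ⁅S.d k, S.d i⁆ = 0 := by
  ext x
  rw [Derivation.commutator_apply, S.d_d, sub_self, Derivation.zero_apply]

lemma lie_dt_d (i : ι) : ⁅S.dt, S.d i⁆ = 0 := by
  ext x
  rw [Derivation.commutator_apply, S.dt_d, sub_self, Derivation.zero_apply]

lemma map_map_eq_add_map_lie {μ ν : Type*} (δ ε : Derivation ℂ A A) (M : Matrix μ ν A) :
    (M.map ε).map δ = (M.map δ).map ε + M.map (⁅δ, ε⁆ : Derivation ℂ A A) := by
  ext; simp [Derivation.commutator_apply]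

end Commutators

section StructureEquations

lemma map_d_Γbar (i k : ι) : (S.Γbar k).map (S.d i)
    = S.Ω i k + (S.Γ i * S.Γbar k - S.Γbar k * S.Γ i) - ∑ l, S.θ i l k • S.Γbar l := by
  rw [Γbar, maurer_cartan S.G_mul_H S.H_mul_G, lie_d_D, logDeriv_neg, logDeriv_sum_smul,
    ← sub_eq_add_neg]
  rfl

lemma map_d_Γ (i k : ι) : (S.Γ k).map (S.d i)
    = S.nablaΓ i k + (S.Γ i * S.Γ k - S.Γ k * S.Γ i) + ∑ l, S.θ i k l • S.Γ l := by
  rw [nablaΓ]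
  abel

lemma map_d_Γ_comm (i k : ι) : (S.Γ i).map (S.d k)
    = (S.Γ k).map (S.d i) + (S.Γ k * S.Γ i - S.Γ i * S.Γ k) := by
  rw [Γ, maurer_cartan S.G_mul_H S.H_mul_G, lie_d_d, logDeriv_zero, add_zero]
  rfl

lemma d_trace_Γ_mul_Γbar (i k : ι) : S.d i (trace (S.Γ k * S.Γbar k))
    = trace (S.nablaΓ i k * S.Γbar k + S.Γ k * S.Ω i k)
      + ∑ l, S.θ i k l * trace (S.Γ l * S.Γbar k)
      - ∑ l, S.θ i l k * trace (S.Γ k * S.Γbar l) := by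
  have cyclic : trace (S.Γ k * S.Γbar k * S.Γ i) = trace (S.Γ i * S.Γ k * S.Γbar k) := by
    rw [trace_mul_comm, mul_assoc]
  rw [derivation_trace, map_derivation_mul, map_d_Γbar, map_d_Γ]
  simp only [mul_add, add_mul, mul_sub, sub_mul, trace_add, trace_sub, ← mul_assoc, cyclic,
    Finset.mul_sum, Finset.sum_mul, Matrix.smul_mul, Matrix.mul_smul, trace_sum, trace_smul,
    smul_eq_mul]
  ring

lemma d_energy (i : ι) :
    S.d i S.energy = ∑ k, trace (S.nablaΓ i k * S.Γbar k + S.Γ k * S.Ω i k) := by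
  rw [energy, map_sum]
  simp only [d_trace_Γ_mul_Γbar, Finset.sum_add_distrib, Finset.sum_sub_distrib]
  rw [Finset.sum_comm (f := fun k l => S.θ i l k * trace (S.Γ k * S.Γbar l))]
  ring

lemma lap_energy : S.lap S.energy = ∑ i, ∑ k, (trace ((S.nablaΓ i k).map (S.D i) * S.Γbar k)
    + trace (S.nablaΓ i k * (S.Γbar k).map (S.D i)) + trace (S.Ω k i * S.Ω i k)
    + trace (S.Γ k * (S.Ω i k).map (S.D i))) := by
  refine Finset.sum_congr rfl fun i _ => ?_
  rw [d_energy, map_sum]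
  refine Finset.sum_congr rfl fun k _ => ?_
  rw [derivation_trace, map_derivation_add, map_derivation_mul, map_derivation_mul]
  simp only [trace_add, Ω, add_assoc]

lemma map_d_Ω_self (i k : ι) : (S.Ω i i).map (S.d k) = (S.nablaΓ i k).map (S.D i)
    + ∑ l, S.θ i k l • S.Ω l i + ∑ l, S.D i (S.θ i k l) • S.Γ l - ∑ c, S.θ k c i • S.Ω i c := by
  have antisymm : (S.Γ k * S.Γ i - S.Γ i * S.Γ k).map (S.D i)
      = -(S.Γ i * S.Γ k - S.Γ k * S.Γ i).map (S.D i) := by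
    rw [← map_derivation_neg, neg_sub]
  rw [Ω, map_map_eq_add_map_lie, lie_d_D, map_d_Γ_comm, nablaΓ, map_derivation_sub,
    map_derivation_sub, map_derivation_sum, map_derivation_add, antisymm,
    ← Finset.sum_neg_distrib]
  simp only [← neg_smul, map_sum_smul_derivation]
  simp only [neg_smul, Finset.sum_neg_distrib, map_derivation_smul, Finset.sum_add_distrib, Ω]
  abel

lemma map_d_trΩ (k : ι) : S.trΩ.map (S.d k) = ∑ i, (S.nablaΓ i k).map (S.D i)
    + ∑ i, ∑ l, (S.θ i k l - S.θ k i l) • S.Ω l i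
    + ∑ l, (∑ i, S.D i (S.θ i k l)) • S.Γ l := by
  rw [trΩ, map_derivation_sum]
  simp only [map_d_Ω_self, Finset.sum_add_distrib, Finset.sum_sub_distrib, sub_smul,
    Finset.sum_smul]
  rw [Finset.sum_comm (f := fun i c => S.θ k c i • S.Ω i c),
    Finset.sum_comm (f := fun l i => S.D i (S.θ i k l) • S.Γ l)]
  abel

lemma map_D_trΩ (k : ι) : S.trΩ.map (S.D k)
    = ∑ i, (S.Ω i k).map (S.D i) + ∑ i, ∑ c, S.τ k i c • S.Ω i c := by
  rw [trΩ, map_derivation_sum, ← Finset.sum_add_distrib]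
  refine Finset.sum_congr rfl fun i _ => ?_
  rw [Ω, map_map_eq_add_map_lie, lie_D_D, map_sum_smul_derivation]
  rfl

lemma trace_torsionΩ_mul_torsionΩbar (l k : ι) :
    trace (S.torsionΩ l k * S.torsionΩbar k l) = trace (S.Ω l k * S.Ω k l)
      - ∑ m, (S.θ k m l - S.θ m k l) * trace (S.Ω l k * S.Γbar m)
      - ∑ c, S.τ c k l * trace (S.Γ c * S.Ω k l)
      + ∑ c, ∑ m, S.τ c k l * (S.θ k m l - S.θ m k l) * trace (S.Γ c * S.Γbar m) := by
  rw [torsionΩ, torsionΩbar, sub_mul, mul_sub, mul_sub, trace_sub, trace_sub, trace_sub]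
  simp only [Finset.mul_sum, Finset.sum_mul, trace_sum, Matrix.smul_mul, Matrix.mul_smul,
    trace_smul, smul_eq_mul]
  rw [Finset.sum_comm (f := fun m c =>
    (S.θ k m l - S.θ m k l) * (S.τ c k l * trace (S.Γ c * S.Γbar m)))]
  simp only [mul_assoc, mul_left_comm (S.θ _ _ _ - _) (S.τ _ _ _)]
  ring

end StructureEquations

section EnergyEvolution

/-- The evolution equation `∂ₜG = g^{j̄i}(∂ᵢ∂_{j̄}G − ∂ᵢG·G⁻¹·∂_{j̄}G)` of the bundle metric. -/
def BundleFlow : Prop :=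
  S.G.map S.dt = ∑ i, ((S.G.map (S.d i)).map (S.D i) - S.G.map (S.d i) * S.H * S.G.map (S.D i))

/-- The evolution equation of the base metric, with the torsion square expressed through `τ`. -/
def MetricFlow : Prop :=
  logDeriv S.g S.h S.dt = ∑ i, (S.θ i).map (S.D i)
    + Matrix.of fun m c => ∑ k, ∑ l, S.τ c k l * (S.θ k m l - S.θ m k l)

variable {S}

lemma logDeriv_dt_eq_trΩ (hG : S.BundleFlow) : logDeriv S.G S.H S.dt = S.trΩ := by
  rw [logDeriv, hG, ← sum_map_logDeriv S.G_mul_H S.H_mul_G]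
  rfl

lemma map_dt_Γ (hG : S.BundleFlow) (k : ι) :
    (S.Γ k).map S.dt = S.trΩ.map (S.d k) + (S.trΩ * S.Γ k - S.Γ k * S.trΩ) := by
  rw [Γ, maurer_cartan S.G_mul_H S.H_mul_G, lie_dt_d, logDeriv_zero, logDeriv_dt_eq_trΩ hG,
    add_zero]

lemma map_dt_Γbar (hG : S.BundleFlow) (k : ι) : (S.Γbar k).map S.dt = S.trΩ.map (S.D k)
    + (S.trΩ * S.Γbar k - S.Γbar k * S.trΩ) - ∑ c, logDeriv S.g S.h S.dt c k • S.Γbar c := by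
  rw [Γbar, maurer_cartan S.G_mul_H S.H_mul_G, lie_dt_D, logDeriv_neg, logDeriv_sum_smul,
    logDeriv_dt_eq_trΩ hG, ← sub_eq_add_neg]
  rfl

lemma dt_energy (hG : S.BundleFlow) : S.dt S.energy
    = ∑ k, (trace (S.trΩ.map (S.d k) * S.Γbar k) + trace (S.Γ k * S.trΩ.map (S.D k))
      - ∑ c, logDeriv S.g S.h S.dt c k * trace (S.Γ k * S.Γbar c)) := by
  rw [energy, map_sum]
  refine Finset.sum_congr rfl fun k _ => ?_
  have cyclic : trace (S.Γ k * S.Γbar k * S.trΩ) = trace (S.trΩ * S.Γ k * S.Γbar k) := by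
    rw [trace_mul_comm, mul_assoc]
  rw [derivation_trace, map_derivation_mul, map_dt_Γ hG, map_dt_Γbar hG]
  simp only [mul_add, add_mul, mul_sub, sub_mul, trace_add, trace_sub, ← mul_assoc, cyclic,
    Finset.mul_sum, Matrix.mul_smul, trace_sum, trace_smul, smul_eq_mul]
  ring

lemma sum_trace_map_d_trΩ : ∑ k, trace (S.trΩ.map (S.d k) * S.Γbar k)
    = ∑ i, ∑ k, trace ((S.nablaΓ i k).map (S.D i) * S.Γbar k)
      + ∑ l, ∑ k, ∑ m, (S.θ k m l - S.θ m k l) * trace (S.Ω l k * S.Γbar m)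
      + ∑ c, ∑ k, (∑ i, S.D i (S.θ i c k)) * trace (S.Γ k * S.Γbar c) := by
  simp only [map_d_trΩ, add_mul, trace_add, Finset.sum_add_distrib, Finset.sum_mul,
    Matrix.smul_mul, trace_sum, trace_smul, smul_eq_mul]
  rw [Finset.sum_comm (f := fun k i => trace ((S.nablaΓ i k).map (S.D i) * S.Γbar k)),
    sum_reverse fun k i l => (S.θ i k l - S.θ k i l) * trace (S.Ω l i * S.Γbar k)]

lemma sum_trace_map_D_trΩ : ∑ k, trace (S.Γ k * S.trΩ.map (S.D k))
    = ∑ i, ∑ k, trace (S.Γ k * (S.Ω i k).map (S.D i))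
      + ∑ l, ∑ k, ∑ c, S.τ c k l * trace (S.Γ c * S.Ω k l) := by
  simp only [map_D_trΩ, mul_add, trace_add, Finset.sum_add_distrib, Finset.mul_sum,
    Matrix.mul_smul, trace_sum, trace_smul, smul_eq_mul]
  rw [Finset.sum_comm (f := fun k i => trace (S.Γ k * (S.Ω i k).map (S.D i))),
    sum_reverse fun k i c => S.τ k i c * trace (S.Γ k * S.Ω i c)]

lemma sum_logDeriv_dt_mul_trace (hg : S.MetricFlow) :
    ∑ k, ∑ c, logDeriv S.g S.h S.dt c k * trace (S.Γ k * S.Γbar c)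
      = ∑ c, ∑ k, (∑ i, S.D i (S.θ i c k)) * trace (S.Γ k * S.Γbar c)
        + ∑ l, ∑ k, ∑ c, ∑ m,
          S.τ c k l * (S.θ k m l - S.θ m k l) * trace (S.Γ c * S.Γbar m) := by
  rw [hg]
  simp only [Matrix.add_apply, Matrix.sum_apply, map_apply, of_apply, add_mul,
    Finset.sum_add_distrib]
  congr 1
  · exact Finset.sum_comm
  simp only [Finset.sum_mul]
  rw [Finset.sum_congr rfl fun c _ => sum_reverse fun m k l =>
      S.τ c k l * (S.θ k m l - S.θ m k l) * trace (S.Γ c * S.Γbar m),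
    sum_reverse, Finset.sum_comm]

theorem heat_energy (hG : S.BundleFlow) (hg : S.MetricFlow) :
    S.dt S.energy - S.lap S.energy
      = -∑ l, ∑ k, trace (S.torsionΩ l k * S.torsionΩbar k l)
        - ∑ i, ∑ k, trace (S.nablaΓ i k * (S.Γbar k).map (S.D i)) := by
  rw [dt_energy hG, lap_energy]
  simp only [trace_torsionΩ_mul_torsionΩbar, Finset.sum_add_distrib, Finset.sum_sub_distrib,
    sum_trace_map_d_trΩ, sum_trace_map_D_trΩ, sum_logDeriv_dt_mul_trace hg]
  rw [Finset.sum_comm (f := fun i k => trace (S.Ω k i * S.Ω i k))]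
  ring

end EnergyEvolution

end FlowData

lemma map_derivation_conj {R A κ : Type*} [CommRing R] [CommRing A] [Algebra R A] [Fintype κ]
    [DecidableEq κ] {G H : Matrix κ κ A} (GH : G * H = 1) (HG : H * G = 1)
    (δ : Derivation R A A) (M : Matrix κ κ A) : (G * M * H).map δ
      = G * M.map δ * H + (logDeriv G H δ * (G * M * H) - G * M * H * logDeriv G H δ) := by
  rw [map_derivation_mul, map_derivation_mul, map_inverse_eq_mul_logDeriv GH HG,
    map_eq_logDeriv_mul HG]
  simp only [add_mul, mul_neg, mul_assoc]
  abel

lemma isHermitian_of_mul_eq_one {A κ : Type*} [CommRing A] [StarRing A] [Fintype κ]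
    [DecidableEq κ] {g h : Matrix κ κ A} (gh : g * h = 1) (hg : g.IsHermitian) :
    h.IsHermitian :=
  left_inv_eq_right_inv (by rw [← conjTranspose_one, ← gh, conjTranspose_mul, hg]) gh

namespace FlowData

variable {A : Type*} [CommRing A] [Algebra ℂ A]
variable {ι κ : Type*} [Fintype ι] [DecidableEq ι] [Fintype κ] [DecidableEq κ]
variable (S : FlowData ι κ A)

/-- The Chern torsion `T_{ijk̄} = ∂ᵢg_{jk̄} − ∂ⱼg_{ik̄}` of the base metric. -/
def torsion (i j k : ι) : A := S.d i (S.g j k) - S.d j (S.g i k)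

lemma θ_sub_θ (k m l : ι) :
    S.θ k m l - S.θ m k l = -∑ n, S.torsion m k n * S.h n l := by
  simp only [θ, logDeriv, mul_apply, map_apply, torsion, sub_mul, Finset.sum_sub_distrib, neg_sub]

variable [StarRing A]

/-- Compatibility with conjugation: `∂ᵢ` and `∂_{ī}` are conjugate, and both metrics are
Hermitian. -/
structure IsHermitian : Prop where
  star_d : ∀ i x, star (S.d i x) = S.db i (star x)
  g : S.g.IsHermitian
  G : S.G.IsHermitian

/-- The adjoint of an endomorphism of the bundle with respect to the metric `G`. -/
def adj : Matrix κ κ A →ₛₗ[starRingEnd A] Matrix κ κ A where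
  toFun M := S.G * Mᴴ * S.H
  map_add' M N := by rw [conjTranspose_add, mul_add, add_mul]
  map_smul' c M := by
    rw [conjTranspose_smul, Matrix.mul_smul, Matrix.smul_mul, starRingEnd_apply]

lemma adj_apply (M : Matrix κ κ A) : S.adj M = S.G * Mᴴ * S.H := rfl

lemma adj_smul (c : A) (M : Matrix κ κ A) : S.adj (c • M) = star c • S.adj M :=
  map_smulₛₗ S.adj c M

lemma adj_mul (M N : Matrix κ κ A) : S.adj (M * N) = S.adj N * S.adj M := by
  calc S.G * (M * N)ᴴ * S.H = S.G * Nᴴ * (S.H * S.G) * Mᴴ * S.H := by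
        rw [S.H_mul_G, conjTranspose_mul]
        simp only [mul_assoc, one_mul]
    _ = S.adj N * S.adj M := by simp only [adj_apply, mul_assoc]

/-- The quadratic torsion term `T²_{ab̄} = Σ T_{aln̄}·conj(T_{bkm̄})·g^{k̄l}·g^{n̄m}`. -/
def torsionSq : Matrix ι ι A := Matrix.of fun a b => ∑ k, ∑ l, ∑ m, ∑ m',
  S.torsion a l m' * star (S.torsion b k m) * S.h k l * S.h m' m

/-- The curvature `torsionΩ` with its antiholomorphic index lowered. -/
def loweredTorsionΩ (l i : ι) : Matrix κ κ A :=
  (S.Γ l).map (S.db i) + ∑ c, (∑ j, S.h j c * star (S.torsion j i l)) • S.Γ c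

namespace IsHermitian

variable {S} (hS : S.IsHermitian)
include hS

lemma h : S.h.IsHermitian := isHermitian_of_mul_eq_one S.g_mul_h hS.g

lemma H : S.H.IsHermitian := isHermitian_of_mul_eq_one S.G_mul_H hS.G

lemma star_db (i : ι) (x : A) : star (S.db i x) = S.d i (star x) := by
  rw [star_eq_iff_star_eq, hS.star_d, star_star]

lemma star_torsion (i j k : ι) :
    star (S.torsion i j k) = S.db i (S.g k j) - S.db j (S.g k i) := by
  rw [torsion, star_sub, hS.star_d, hS.star_d, hS.g.apply, hS.g.apply]

lemma conjTranspose_map_d {μ ν : Type*} (i : ι) (M : Matrix μ ν A) :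
    (M.map (S.d i))ᴴ = Mᴴ.map (S.db i) := by
  ext; exact hS.star_d _ _

lemma conjTranspose_map_db {μ ν : Type*} (i : ι) (M : Matrix μ ν A) :
    (M.map (S.db i))ᴴ = Mᴴ.map (S.d i) := by
  ext; exact hS.star_db _ _

lemma conjTranspose_θ (l : ι) : (S.θ l)ᴴ = S.h * S.g.map (S.db l) := by
  rw [θ, logDeriv, conjTranspose_mul, hS.conjTranspose_map_d, hS.g, hS.h]

lemma adj_Γ (l : ι) : S.adj (S.Γ l) = logDeriv S.G S.H (S.db l) := by
  rw [adj_apply, Γ, logDeriv, conjTranspose_mul, hS.conjTranspose_map_d, hS.G, hS.H,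
    ← mul_assoc, S.G_mul_H, one_mul]
  rfl

lemma Γbar_eq (k : ι) : S.Γbar k = ∑ l, S.h l k • S.adj (S.Γ l) := by
  simp only [Γbar, D, logDeriv_sum_smul, hS.adj_Γ]

lemma db_h (j l k : ι) : S.db j (S.h l k) = -∑ m, star (S.θ j m l) * S.h m k := by
  have := congrFun₂ (map_derivation_inverse (S.db j) S.g_mul_h S.h_mul_g) l k
  rwa [← hS.conjTranspose_θ] at this

lemma adj_map_d (j : ι) (M : Matrix κ κ A) : S.adj (M.map (S.d j))
    = (S.adj M).map (S.db j)
      - (S.adj (S.Γ j) * S.adj M - S.adj M * S.adj (S.Γ j)) := by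
  simp only [hS.adj_Γ]
  rw [adj_apply, adj_apply, map_derivation_conj S.G_mul_H S.H_mul_G, hS.conjTranspose_map_d,
    add_sub_cancel_right]

lemma adj_map_db_Γ (m k : ι) : S.adj ((S.Γ m).map (S.db k)) = (S.Γ k).map (S.db m) := by
  have lie_d_db : ⁅S.d k, S.db m⁆ = 0 := by
    ext x
    rw [Derivation.commutator_apply, S.d_db, sub_self, Derivation.zero_apply]
  have conj_rule := map_derivation_conj S.G_mul_H S.H_mul_G (S.d k) (S.Γ m)ᴴ
  rw [← hS.conjTranspose_map_db, ← adj_apply, ← adj_apply, hS.adj_Γ,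
    maurer_cartan S.G_mul_H S.H_mul_G, lie_d_db, logDeriv_zero, add_zero] at conj_rule
  exact (add_right_cancel conj_rule).symm

lemma adj_nablaΓ (j l : ι) : S.adj (S.nablaΓ j l)
    = (S.adj (S.Γ l)).map (S.db j) - ∑ m, star (S.θ j l m) • S.adj (S.Γ m) := by
  simp only [nablaΓ, map_sub, map_sum, adj_smul, adj_mul, hS.adj_map_d]
  abel

lemma map_D_Γbar (i k : ι) : (S.Γbar k).map (S.D i)
    = ∑ j, ∑ l, (S.h j i * S.h l k) • S.adj (S.nablaΓ j l) := by
  rw [D, map_sum_smul_derivation]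
  refine Finset.sum_congr rfl fun j _ => ?_
  simp only [mul_smul, ← Finset.smul_sum]
  congr 1
  simp only [hS.Γbar_eq, map_derivation_sum, map_derivation_smul, hS.db_h,
    hS.adj_nablaΓ, smul_sub, Finset.sum_sub_distrib, neg_smul,
    ← sub_eq_add_neg, Finset.sum_smul, Finset.smul_sum, smul_smul]
  rw [Finset.sum_comm (f := fun l m => (star (S.θ j m l) * S.h m k) • S.adj (S.Γ l))]
  simp only [mul_comm]

lemma τ_eq (c k l : ι) :
    S.τ c k l = -∑ i, S.h i k * ∑ j, S.h j c * star (S.torsion j i l) := by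
  simp only [τ, logDeriv, mul_apply, map_apply, D_apply, hS.star_torsion, mul_sub,
    Finset.sum_sub_distrib, Finset.mul_sum, Finset.sum_mul, neg_sub]
  congr 1
  · rw [Finset.sum_comm]
    exact Finset.sum_congr rfl fun _ _ => Finset.sum_congr rfl fun _ _ => by ring
  · exact Finset.sum_congr rfl fun _ _ => Finset.sum_congr rfl fun _ _ => by ring

lemma torsionΩ_eq (l k : ι) : S.torsionΩ l k = ∑ i, S.h i k • S.loweredTorsionΩ l i := by
  simp only [loweredTorsionΩ, smul_add, Finset.sum_add_distrib]
  rw [torsionΩ, Ω, D, map_sum_smul_derivation, sub_eq_add_neg, ← Finset.sum_neg_distrib]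
  congr 1
  simp only [hS.τ_eq, neg_smul, neg_neg, Finset.sum_smul, mul_smul]
  rw [Finset.sum_comm]
  simp only [← Finset.smul_sum]

lemma adj_loweredTorsionΩ (m k : ι) : S.adj (S.loweredTorsionΩ m k)
    = (S.Γ k).map (S.db m) + ∑ c, (∑ j, S.torsion j k m * S.h c j) • S.adj (S.Γ c) := by
  simp only [loweredTorsionΩ, map_add, map_sum, hS.adj_map_db_Γ, adj_smul, star_sum, star_mul,
    star_star, hS.h.apply]

lemma torsionΩbar_eq (k l : ι) :
    S.torsionΩbar k l = ∑ m, S.h m l • S.adj (S.loweredTorsionΩ m k) := by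
  simp only [hS.adj_loweredTorsionΩ, smul_add, Finset.sum_add_distrib]
  rw [torsionΩbar, Ω, D, map_sum_smul_derivation, sub_eq_add_neg, ← Finset.sum_neg_distrib]
  congr 1
  simp only [θ_sub_θ, neg_smul, neg_neg]
  simp only [hS.Γbar_eq, Finset.sum_smul, Finset.smul_sum, smul_smul, Finset.sum_mul]
  rw [sum_reverse]
  refine Finset.sum_congr rfl fun _ _ => Finset.sum_congr rfl fun _ _ =>
    Finset.sum_congr rfl fun _ _ => ?_
  congr 1
  ring

lemma torsionSq_mul_h (m c : ι) : (S.torsionSq * S.h) m c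
    = ∑ k, ∑ l, S.τ c k l * (S.θ k m l - S.θ m k l) := by
  let F q p k l := (∑ n, S.torsion m k n * S.h n l) * (S.h p k * S.h q c * star (S.torsion q p l))
  calc (S.torsionSq * S.h) m c = ∑ q, ∑ p, ∑ k, ∑ l, F q p k l := by
        simp only [F, mul_apply, torsionSq, of_apply, Finset.sum_mul]
        refine Finset.sum_congr rfl fun q _ => Finset.sum_congr rfl fun p _ =>
          Finset.sum_congr rfl fun k _ => Finset.sum_congr rfl fun l _ =>
          Finset.sum_congr rfl fun n _ => by ring
    _ = ∑ k, ∑ l, ∑ p, ∑ q, F q p k l := by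
        rw [sum_reverse]
        exact Finset.sum_congr rfl fun k _ => (sum_reverse _).trans <|
          Finset.sum_congr rfl fun l _ => Finset.sum_comm
    _ = ∑ k, ∑ l, S.τ c k l * (S.θ k m l - S.θ m k l) := by
        simp only [hS.τ_eq, θ_sub_θ, neg_mul_neg]
        refine Finset.sum_congr rfl fun k _ => Finset.sum_congr rfl fun l _ => ?_
        simp only [F]
        generalize ∑ n, S.torsion m k n * S.h n l = N
        simp only [Finset.sum_mul, Finset.mul_sum]
        exact Finset.sum_congr rfl fun p _ => Finset.sum_congr rfl fun q _ => by ring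

lemma metricFlow (hg : S.g.map S.dt = ∑ i, ((S.g.map (S.d i)).map (S.D i)
    - S.g.map (S.d i) * S.h * S.g.map (S.D i)) + S.torsionSq) : S.MetricFlow := by
  rw [MetricFlow, logDeriv, hg, add_mul, ← sum_map_logDeriv S.g_mul_h S.h_mul_g]
  congr 1
  ext m c
  exact hS.torsionSq_mul_h m c

end IsHermitian

end FlowData

section GeneralizedMetric

variable {R A : Type*} [CommRing R] [CommRing A] [Algebra R A]
variable {ι : Type*}

lemma map_derivation_zero (δ : Derivation R A A) : (0 : Matrix ι ι A).map δ = 0 := by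
  ext; simp

variable [Fintype ι] [DecidableEq ι]

/-- The generalized metric `G(g, β)` over a commutative ring, with `h = g⁻¹` and with `γ` in place
of `β*`; the conjugate of the Hermitian matrix `h` is its transpose. -/
def generalizedMetric (g h β γ : Matrix ι ι A) : Matrix (ι ⊕ ι) (ι ⊕ ι) A :=
  fromBlocks (g + β * hᵀ * γ) (β * hᵀ) (hᵀ * γ) hᵀ

/-- The inverse of `generalizedMetric g h β γ`. -/
def generalizedMetricInv (g h β γ : Matrix ι ι A) : Matrix (ι ⊕ ι) (ι ⊕ ι) A :=
  fromBlocks h (-(h * β)) (-(γ * h)) (gᵀ + γ * h * β)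

/-- The upper unipotent block matrix of the B-field transformation by `β`. -/
def upperUnipotent (β : Matrix ι ι A) : Matrix (ι ⊕ ι) (ι ⊕ ι) A := fromBlocks 1 β 0 1

/-- The lower unipotent block matrix of the conjugate B-field transformation. -/
def lowerUnipotent (γ : Matrix ι ι A) : Matrix (ι ⊕ ι) (ι ⊕ ι) A := fromBlocks 1 0 γ 1

lemma upperUnipotent_mul_neg (β : Matrix ι ι A) : upperUnipotent β * upperUnipotent (-β) = 1 := by
  simp [upperUnipotent, fromBlocks_multiply, ← fromBlocks_one]

lemma upperUnipotent_neg_mul (β : Matrix ι ι A) : upperUnipotent (-β) * upperUnipotent β = 1 := by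
  simp [upperUnipotent, fromBlocks_multiply, ← fromBlocks_one]

lemma lowerUnipotent_mul_neg (γ : Matrix ι ι A) : lowerUnipotent γ * lowerUnipotent (-γ) = 1 := by
  simp [lowerUnipotent, fromBlocks_multiply, ← fromBlocks_one]

lemma generalizedMetric_eq (g h β γ : Matrix ι ι A) : generalizedMetric g h β γ
    = upperUnipotent β * fromBlocks g 0 0 hᵀ * lowerUnipotent γ := by
  simp [generalizedMetric, upperUnipotent, lowerUnipotent, fromBlocks_multiply]

lemma generalizedMetricInv_eq (g h β γ : Matrix ι ι A) : generalizedMetricInv g h β γ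
    = lowerUnipotent (-γ) * fromBlocks h 0 0 gᵀ * upperUnipotent (-β) := by
  simp [generalizedMetricInv, upperUnipotent, lowerUnipotent, fromBlocks_multiply, add_comm]

lemma diagonal_mul_lowerUnipotent_mul_inv {g h : Matrix ι ι A} (gh : g * h = 1)
    (γ : Matrix ι ι A) : fromBlocks g 0 0 hᵀ * lowerUnipotent γ
      * (lowerUnipotent (-γ) * fromBlocks h 0 0 gᵀ) = 1 := by
  rw [mul_assoc, ← mul_assoc (lowerUnipotent γ), lowerUnipotent_mul_neg, one_mul]
  simp [fromBlocks_multiply, gh, ← transpose_mul]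

lemma generalizedMetric_mul_inv {g h : Matrix ι ι A} (gh : g * h = 1) (β γ : Matrix ι ι A) :
    generalizedMetric g h β γ * generalizedMetricInv g h β γ = 1 := by
  rw [generalizedMetric_eq, generalizedMetricInv_eq, mul_assoc (upperUnipotent β),
    mul_assoc (upperUnipotent β), ← mul_assoc (_ * lowerUnipotent γ),
    diagonal_mul_lowerUnipotent_mul_inv gh, one_mul, upperUnipotent_mul_neg]

/-- The Chern connection matrix of the generalized metric in the direction `δ`, conjugated by the
B-field transformation. -/
def generalizedConnection (g h β γ : Matrix ι ι A) (δ : Derivation R A A) :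
    Matrix (ι ⊕ ι) (ι ⊕ ι) A :=
  fromBlocks (logDeriv g h δ) (β.map δ) (hᵀ * γ.map δ * h) (-(logDeriv g h δ)ᵀ)

lemma upperUnipotent_mul_nilpotent (β x : Matrix ι ι A) :
    upperUnipotent β * fromBlocks 0 x 0 0 = fromBlocks 0 x 0 0 := by
  simp [upperUnipotent, fromBlocks_multiply]

lemma nilpotent_mul_upperUnipotent (β x : Matrix ι ι A) :
    fromBlocks 0 x 0 0 * upperUnipotent β = fromBlocks 0 x 0 0 := by
  simp [upperUnipotent, fromBlocks_multiply]

lemma logDeriv_upperUnipotent (β : Matrix ι ι A) (δ : Derivation R A A) :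
    logDeriv (upperUnipotent β) (upperUnipotent (-β)) δ = fromBlocks 0 (β.map δ) 0 0 := by
  rw [logDeriv, upperUnipotent, fromBlocks_map, map_derivation_one, map_derivation_zero,
    nilpotent_mul_upperUnipotent]

lemma logDeriv_lowerUnipotent (γ : Matrix ι ι A) (δ : Derivation R A A) :
    logDeriv (lowerUnipotent γ) (lowerUnipotent (-γ)) δ = fromBlocks 0 0 (γ.map δ) 0 := by
  rw [logDeriv, lowerUnipotent, fromBlocks_map, map_derivation_one, map_derivation_zero]
  simp [lowerUnipotent, fromBlocks_multiply]

lemma logDeriv_transpose_inverse {g h : Matrix ι ι A} (gh : g * h = 1) (hg : h * g = 1)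
    (δ : Derivation R A A) : logDeriv hᵀ gᵀ δ = -(logDeriv g h δ)ᵀ := by
  rw [logDeriv, transpose_map_derivation, map_inverse_eq_mul_logDeriv gh hg, ← transpose_mul,
    mul_neg, ← mul_assoc, gh, one_mul, transpose_neg]

lemma logDeriv_fromBlocks_diagonal {g h : Matrix ι ι A} (gh : g * h = 1) (hg : h * g = 1)
    (δ : Derivation R A A) : logDeriv (fromBlocks g 0 0 hᵀ) (fromBlocks h 0 0 gᵀ) δ
      = fromBlocks (logDeriv g h δ) 0 0 (-(logDeriv g h δ)ᵀ) := by
  rw [← logDeriv_transpose_inverse gh hg]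
  simp [logDeriv, fromBlocks_map, fromBlocks_multiply]

lemma logDeriv_generalizedMetric {g h : Matrix ι ι A} (gh : g * h = 1) (hg : h * g = 1)
    (β γ : Matrix ι ι A) (δ : Derivation R A A) :
    logDeriv (generalizedMetric g h β γ) (generalizedMetricInv g h β γ) δ
      = upperUnipotent β * generalizedConnection g h β γ δ * upperUnipotent (-β) := by
  have split : generalizedConnection g h β γ δ = fromBlocks 0 (β.map δ) 0 0
      + (fromBlocks (logDeriv g h δ) 0 0 (-(logDeriv g h δ)ᵀ)
        + fromBlocks g 0 0 hᵀ * fromBlocks 0 0 (γ.map δ) 0 * fromBlocks h 0 0 gᵀ) := by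
    simp [generalizedConnection, fromBlocks_multiply, fromBlocks_add]
  rw [generalizedMetric_eq, generalizedMetricInv_eq, mul_assoc, mul_assoc,
    ← mul_assoc (lowerUnipotent (-γ)), logDeriv_mul _ _
    (diagonal_mul_lowerUnipotent_mul_inv gh γ), logDeriv_mul _ _ (lowerUnipotent_mul_neg γ),
    logDeriv_upperUnipotent, logDeriv_lowerUnipotent, logDeriv_fromBlocks_diagonal gh hg, split]
  simp only [mul_add, add_mul, upperUnipotent_mul_nilpotent, nilpotent_mul_upperUnipotent]

lemma generalizedConnection_flow {g h β γ : Matrix ι ι A} (gh : g * h = 1) (hg : h * g = 1)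
    (hβ : βᵀ = -β) (hγ : γᵀ = -γ) (dt : Derivation R A A) (d D : ι → Derivation R A A)
    (flow_g : g.map dt = ∑ i, ((g.map (d i)).map (D i) - g.map (d i) * h * g.map (D i))
      + ∑ i, β.map (D i) * hᵀ * γ.map (d i))
    (flow_β : β.map dt = ∑ i, ((β.map (d i)).map (D i) - g.map (d i) * h * β.map (D i)
      - β.map (D i) * (g.map (d i) * h)ᵀ))
    (flow_γ : γ.map dt = ∑ i, ((γ.map (d i)).map (D i) - γ.map (d i) * h * g.map (D i)
      - (h * g.map (D i))ᵀ * γ.map (d i))) :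
    generalizedConnection g h β γ dt = ∑ i, ((generalizedConnection g h β γ (d i)).map (D i)
      + (fromBlocks 0 (β.map (D i)) 0 0 * generalizedConnection g h β γ (d i)
        - generalizedConnection g h β γ (d i) * fromBlocks 0 (β.map (D i)) 0 0)) := by
  have block₁₁ : logDeriv g h dt = ∑ i, ((logDeriv g h (d i)).map (D i)
      + β.map (D i) * (hᵀ * γ.map (d i) * h)) := by
    rw [logDeriv, flow_g, add_mul, ← sum_map_logDeriv gh hg, Finset.sum_mul,
      Finset.sum_add_distrib]
    simp only [mul_assoc]
  have block₁₂ : β.map dt = ∑ i, ((β.map (d i)).map (D i)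
      + (β.map (D i) * -(logDeriv g h (d i))ᵀ - logDeriv g h (d i) * β.map (D i))) := by
    rw [flow_β]
    refine Finset.sum_congr rfl fun i _ => ?_
    rw [mul_neg]
    simp only [logDeriv]
    abel
  have block₂₁ : hᵀ * γ.map dt * h = ∑ i, (hᵀ * γ.map (d i) * h).map (D i) := by
    rw [flow_γ, Finset.mul_sum, Finset.sum_mul]
    refine Finset.sum_congr rfl fun i _ => ?_
    simp only [map_derivation_mul, transpose_map_derivation, map_derivation_inverse _ gh hg,
      transpose_mul, transpose_neg, mul_sub, sub_mul, mul_add, mul_neg, neg_mul, mul_assoc]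
    abel
  have block₂₂ : -(logDeriv g h dt)ᵀ = ∑ i, ((-(logDeriv g h (d i))ᵀ).map (D i)
      - hᵀ * γ.map (d i) * h * β.map (D i)) := by
    have antisymm_β (i : ι) : (β.map (D i))ᵀ = -β.map (D i) := by
      rw [← transpose_map_derivation, hβ, map_derivation_neg]
    have antisymm_γ (i : ι) : (γ.map (d i))ᵀ = -γ.map (d i) := by
      rw [← transpose_map_derivation, hγ, map_derivation_neg]
    rw [block₁₁, transpose_sum, ← Finset.sum_neg_distrib]
    refine Finset.sum_congr rfl fun i _ => ?_
    simp only [map_derivation_neg, transpose_map_derivation, transpose_add, transpose_mul,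
      antisymm_β, antisymm_γ, transpose_transpose, mul_neg, neg_mul, mul_assoc, neg_neg]
    abel
  rw [generalizedConnection, block₂₂, block₁₁, block₁₂, block₂₁]
  ext (a | a) (b | b) <;>
    simp [generalizedConnection, fromBlocks_multiply, fromBlocks_map, Matrix.sum_apply,
      Finset.sum_add_distrib, sub_eq_add_neg]

theorem generalizedMetric_flow {g h β γ : Matrix ι ι A} (gh : g * h = 1) (hg : h * g = 1)
    (hβ : βᵀ = -β) (hγ : γᵀ = -γ) (dt : Derivation R A A) (d D : ι → Derivation R A A)
    (flow_g : g.map dt = ∑ i, ((g.map (d i)).map (D i) - g.map (d i) * h * g.map (D i))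
      + ∑ i, β.map (D i) * hᵀ * γ.map (d i))
    (flow_β : β.map dt = ∑ i, ((β.map (d i)).map (D i) - g.map (d i) * h * β.map (D i)
      - β.map (D i) * (g.map (d i) * h)ᵀ))
    (flow_γ : γ.map dt = ∑ i, ((γ.map (d i)).map (D i) - γ.map (d i) * h * g.map (D i)
      - (h * g.map (D i))ᵀ * γ.map (d i))) :
    (generalizedMetric g h β γ).map dt = ∑ i, (((generalizedMetric g h β γ).map (d i)).map (D i)
      - (generalizedMetric g h β γ).map (d i) * generalizedMetricInv g h β γ
        * (generalizedMetric g h β γ).map (D i)) := by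
  have GH := generalizedMetric_mul_inv gh β γ
  have HG := mul_eq_one_comm.mp GH
  have logDeriv_dt : logDeriv (generalizedMetric g h β γ) (generalizedMetricInv g h β γ) dt
      = ∑ i, (logDeriv (generalizedMetric g h β γ) (generalizedMetricInv g h β γ) (d i)).map
        (D i) := by
    simp only [logDeriv_generalizedMetric gh hg, map_derivation_conj (upperUnipotent_mul_neg β)
      (upperUnipotent_neg_mul β), logDeriv_upperUnipotent]
    rw [generalizedConnection_flow gh hg hβ hγ dt d D flow_g flow_β flow_γ, Finset.mul_sum,
      Finset.sum_mul]
    refine Finset.sum_congr rfl fun i _ => ?_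
    have left_comm : fromBlocks 0 (β.map (D i)) 0 0 * upperUnipotent β
        = upperUnipotent β * fromBlocks 0 (β.map (D i)) 0 0 := by
      rw [upperUnipotent_mul_nilpotent, nilpotent_mul_upperUnipotent]
    have right_comm : fromBlocks 0 (β.map (D i)) 0 0 * upperUnipotent (-β)
        = upperUnipotent (-β) * fromBlocks 0 (β.map (D i)) 0 0 := by
      rw [upperUnipotent_mul_nilpotent, nilpotent_mul_upperUnipotent]
    rw [mul_add, add_mul, mul_sub, sub_mul, mul_assoc _ (_ * fromBlocks _ _ _ _) _,
      mul_assoc _ (fromBlocks _ _ _ _) (upperUnipotent _), right_comm]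
    simp only [← mul_assoc, left_comm]
  rw [sum_map_logDeriv GH HG, logDeriv] at logDeriv_dt
  calc _ = _ * generalizedMetricInv g h β γ * generalizedMetric g h β γ := by
        rw [mul_assoc, HG, mul_one]
    _ = _ := by rw [logDeriv_dt, mul_assoc, HG, mul_one]

end GeneralizedMetric

section SmoothFunctions

open TopologicalSpace

variable {V : Type*}

/-- The extension by zero of a function on an open set. -/
def zeroExtend [TopologicalSpace V] {U : Opens V} (f : U → ℂ) : V → ℂ :=
  Function.extend Subtype.val f 0

lemma zeroExtend_apply [TopologicalSpace V] {U : Opens V} (f : U → ℂ) (p : U) :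
    zeroExtend f p = f p :=
  Subtype.val_injective.extend_apply f 0 p

variable [NormedAddCommGroup V] [NormedSpace ℝ V]

/-- The star algebra of smooth complex-valued functions on the open set `U`. -/
def smoothFunctions (U : Opens V) : StarSubalgebra ℂ (U → ℂ) where
  carrier := {f | ContDiffOn ℝ (⊤ : ℕ∞) (zeroExtend f) U}
  mul_mem' {f g} hf hg := (ContDiffOn.mul hf hg).congr fun p hp => by
    simp [zeroExtend_apply _ (⟨p, hp⟩ : U)]
  add_mem' {f g} hf hg := (ContDiffOn.add hf hg).congr fun p hp => by
    simp [zeroExtend_apply _ (⟨p, hp⟩ : U)]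
  algebraMap_mem' c := (contDiffOn_const (c := c)).congr fun p hp => by
    simp [zeroExtend_apply _ (⟨p, hp⟩ : U)]
  star_mem' {f} hf := (Complex.conjCLE.contDiff.comp_contDiffOn hf).congr fun p hp => by
    simp [zeroExtend_apply _ (⟨p, hp⟩ : U)]

namespace smoothFunctions

variable {U : Opens V}

lemma contDiffAt (f : smoothFunctions U) (p : U) :
    ContDiffAt ℝ (⊤ : ℕ∞) (zeroExtend f.1) p :=
  f.2.contDiffAt (U.isOpen.mem_nhds p.2)

lemma differentiableAt (f : smoothFunctions U) (p : U) :
    DifferentiableAt ℝ (zeroExtend f.1) p :=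
  (contDiffAt f p).differentiableAt (by simp)

/-- The restriction to `U` of a function that is smooth on `U`. -/
def restrict (F : V → ℂ) (hF : ContDiffOn ℝ (⊤ : ℕ∞) F U) : smoothFunctions U :=
  ⟨fun p => F p, hF.congr fun p hp => zeroExtend_apply _ (⟨p, hp⟩ : U)⟩

lemma fderiv_eq (f : smoothFunctions U) {F : V → ℂ} (hF : ∀ p : U, F p = f.1 p) (p : U) :
    fderiv ℝ F p = fderiv ℝ (zeroExtend f.1) p := by
  apply Filter.EventuallyEq.fderiv_eq
  filter_upwards [U.isOpen.mem_nhds p.2] with q hq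
  rw [zeroExtend_apply f.1 ⟨q, hq⟩, hF ⟨q, hq⟩]

lemma contDiffOn_fderiv_apply (f : smoothFunctions U) (v : V) :
    ContDiffOn ℝ (⊤ : ℕ∞) (fun p => fderiv ℝ (zeroExtend f.1) p v) U :=
  (ContDiffOn.fderiv_of_isOpen (m := (⊤ : ℕ∞)) f.2 U.isOpen (by simp)).clm_apply contDiffOn_const

/-- The derivative in the direction `v`. -/
def directional (v : V) : Derivation ℂ (smoothFunctions U) (smoothFunctions U) :=
  Derivation.mk'
    { toFun := fun f => restrict _ (contDiffOn_fderiv_apply f v)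
      map_add' := fun f g => Subtype.ext <| funext fun p => by
        change fderiv ℝ (zeroExtend (f + g).1) p v
          = fderiv ℝ (zeroExtend f.1) p v + fderiv ℝ (zeroExtend g.1) p v
        rw [← fderiv_eq (f + g) (F := zeroExtend f.1 + zeroExtend g.1)
          (by simp [zeroExtend_apply]), fderiv_add (differentiableAt f p) (differentiableAt g p)]
        rfl
      map_smul' := fun c f => Subtype.ext <| funext fun p => by
        change fderiv ℝ (zeroExtend (c • f).1) p v = c • fderiv ℝ (zeroExtend f.1) p v
        rw [← fderiv_eq (c • f) (F := c • zeroExtend f.1) (by simp [zeroExtend_apply]),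
          fderiv_const_smul (differentiableAt f p)]
        rfl }
    fun f g => Subtype.ext <| funext fun p => by
      change fderiv ℝ (zeroExtend (f * g).1) p v
        = f.1 p * fderiv ℝ (zeroExtend g.1) p v + g.1 p * fderiv ℝ (zeroExtend f.1) p v
      rw [← fderiv_eq (f * g) (F := zeroExtend f.1 * zeroExtend g.1)
        (by simp [zeroExtend_apply]), fderiv_mul (differentiableAt f p) (differentiableAt g p)]
      simp [zeroExtend_apply]

lemma directional_apply (v : V) (f : smoothFunctions U) (p : U) :
    (directional v f).1 p = fderiv ℝ (zeroExtend f.1) p v := rfl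

lemma directional_directional_apply (v w : V) (f : smoothFunctions U) (p : U) :
    (directional v (directional w f)).1 p = fderiv ℝ (fderiv ℝ (zeroExtend f.1)) p v w := by
  have h : DifferentiableAt ℝ (fderiv ℝ (zeroExtend f.1)) p :=
    ((contDiffAt f p).fderiv_right (m := 1) (by norm_cast)).differentiableAt (by simp)
  rw [directional_apply,
    ← fderiv_eq (directional w f) (F := fun q => fderiv ℝ (zeroExtend f.1) q w) (fun _ => rfl),
    fderiv_clm_apply h (differentiableAt_const _)]
  simp

lemma directional_comm (v w : V) (f : smoothFunctions U) :
    directional v (directional w f) = directional w (directional v f) := by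
  ext p
  rw [directional_directional_apply, directional_directional_apply]
  refine (contDiffAt f p).isSymmSndFDerivAt ?_ v w
  rw [minSmoothness_of_isRCLikeNormedField]
  exact WithTop.coe_le_coe.2 le_top

lemma directional_star (v : V) (f : smoothFunctions U) :
    directional v (star f) = star (directional v f) := by
  ext p
  change fderiv ℝ (zeroExtend (star f).1) p v = star (fderiv ℝ (zeroExtend f.1) p v)
  rw [← fderiv_eq (star f) (F := fun q => star (zeroExtend f.1 q))
    (by simp [zeroExtend_apply]), fderiv_star]
  rfl

end smoothFunctions

end SmoothFunctions

namespace smoothFunctions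

open TopologicalSpace

variable {n : ℕ} {U : Opens (ℝ × (Fin n → ℂ))}

/-- The coordinate derivation `∂/∂xᵢ`. -/
def realPartial (i : Fin n) : Derivation ℂ (smoothFunctions U) (smoothFunctions U) :=
  directional (0, Pi.single i 1)

/-- The coordinate derivation `∂/∂yᵢ`. -/
def imagPartial (i : Fin n) : Derivation ℂ (smoothFunctions U) (smoothFunctions U) :=
  directional (0, Pi.single i Complex.I)

/-- The Wirtinger derivation `∂ᵢ`. -/
def wirtinger (i : Fin n) : Derivation ℂ (smoothFunctions U) (smoothFunctions U) :=
  (1 / 2 : ℂ) • (realPartial i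
    - Complex.I • imagPartial i)

/-- The conjugate Wirtinger derivation `∂_{ī}`. -/
def wirtingerBar (i : Fin n) : Derivation ℂ (smoothFunctions U) (smoothFunctions U) :=
  (1 / 2 : ℂ) • (realPartial i
    + Complex.I • imagPartial i)

/-- The time derivation `∂ₜ`. -/
def timeDeriv : Derivation ℂ (smoothFunctions U) (smoothFunctions U) := directional (1, 0)

lemma wirtinger_eq (i : Fin n) (f : smoothFunctions U) : wirtinger i f
    = (1 / 2 : ℂ) • (realPartial i f
      - Complex.I • imagPartial i f) := rfl

lemma wirtingerBar_eq (i : Fin n) (f : smoothFunctions U) : wirtingerBar i f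
    = (1 / 2 : ℂ) • (realPartial i f
      + Complex.I • imagPartial i f) := rfl

lemma wdP_eq (i : Fin n) (f : smoothFunctions U) {F : ℝ × (Fin n → ℂ) → ℂ}
    (hF : ∀ p : U, F p = f.1 p) (p : U) : wdP i F p = (wirtinger i f).1 p := by
  rw [wdP, fderiv_eq f hF]
  exact one_div_mul_eq_div _ _ |>.symm

lemma wdbP_eq (i : Fin n) (f : smoothFunctions U) {F : ℝ × (Fin n → ℂ) → ℂ}
    (hF : ∀ p : U, F p = f.1 p) (p : U) : wdbP i F p = (wirtingerBar i f).1 p := by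
  rw [wdbP, fderiv_eq f hF]
  exact one_div_mul_eq_div _ _ |>.symm

lemma dtP_eq (f : smoothFunctions U) {F : ℝ × (Fin n → ℂ) → ℂ}
    (hF : ∀ p : U, F p = f.1 p) (p : U) : dtP F p = (timeDeriv f).1 p := by
  rw [dtP, fderiv_eq f hF]
  rfl

lemma wirtinger_wirtinger (i j : Fin n) (f : smoothFunctions U) :
    wirtinger i (wirtinger j f) = wirtinger j (wirtinger i f) := by
  simp only [wirtinger_eq, map_sub, Derivation.map_smul,
    realPartial, imagPartial,
    directional_comm ((0, Pi.single i 1) : ℝ × (Fin n → ℂ)),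
    directional_comm ((0, Pi.single i Complex.I) : ℝ × (Fin n → ℂ))]
  module

lemma wirtinger_wirtingerBar (i j : Fin n) (f : smoothFunctions U) :
    wirtinger i (wirtingerBar j f) = wirtingerBar j (wirtinger i f) := by
  simp only [wirtinger_eq, wirtingerBar_eq, map_sub, map_add, Derivation.map_smul,
    realPartial, imagPartial,
    directional_comm ((0, Pi.single i 1) : ℝ × (Fin n → ℂ)),
    directional_comm ((0, Pi.single i Complex.I) : ℝ × (Fin n → ℂ))]
  module

lemma wirtingerBar_wirtingerBar (i j : Fin n) (f : smoothFunctions U) :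
    wirtingerBar i (wirtingerBar j f) = wirtingerBar j (wirtingerBar i f) := by
  simp only [wirtingerBar_eq, map_add, Derivation.map_smul,
    realPartial, imagPartial,
    directional_comm ((0, Pi.single i 1) : ℝ × (Fin n → ℂ)),
    directional_comm ((0, Pi.single i Complex.I) : ℝ × (Fin n → ℂ))]
  module

lemma timeDeriv_wirtinger (i : Fin n) (f : smoothFunctions U) :
    timeDeriv (wirtinger i f) = wirtinger i (timeDeriv f) := by
  simp only [wirtinger_eq, timeDeriv,
    map_sub, smul_sub, Derivation.map_smul, realPartial, imagPartial,
    directional_comm ((1, 0) : ℝ × (Fin n → ℂ))]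

lemma timeDeriv_wirtingerBar (i : Fin n) (f : smoothFunctions U) :
    timeDeriv (wirtingerBar i f) = wirtingerBar i (timeDeriv f) := by
  simp only [wirtingerBar_eq, timeDeriv,
    map_add, smul_add, Derivation.map_smul, realPartial, imagPartial,
    directional_comm ((1, 0) : ℝ × (Fin n → ℂ))]

lemma star_wirtinger (i : Fin n) (f : smoothFunctions U) :
    star (wirtinger i f) = wirtingerBar i (star f) := by
  simp [wirtinger_eq, wirtingerBar_eq, realPartial, imagPartial, directional_star, sub_eq_add_neg]

lemma star_timeDeriv (f : smoothFunctions U) : star (timeDeriv f) = timeDeriv (star f) :=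
  (directional_star _ f).symm

end smoothFunctions

section TraceForm

variable {A : Type*} [CommRing A] [StarRing A]
variable {σ κ : Type*} [Fintype σ] [Fintype κ]

/-- The sesquilinear form `∑ K_{ts} · tr(v_s G w_t* H)` on families of endomorphisms, weighted by
`K` on the family index and by the metrics `G` and `H` on the endomorphisms. -/
def traceForm (K : Matrix σ σ A) (H G : Matrix κ κ A) (v w : σ → Matrix κ κ A) : A :=
  ∑ s, ∑ t, K t s * trace (v s * G * (w t)ᴴ * H)

lemma map_traceForm {B F : Type*} [CommRing B] [StarRing B] [FunLike F A B] [RingHomClass F A B]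
    [StarHomClass F A B] (e : F) (K : Matrix σ σ A) (H G : Matrix κ κ A)
    (v w : σ → Matrix κ κ A) : e (traceForm K H G v w)
      = traceForm (K.map e) (H.map e) (G.map e) (fun s => (v s).map e) fun s => (w s).map e := by
  simp only [traceForm, map_sum, map_mul, AddMonoidHom.map_trace e, Matrix.map_mul,
    conjTranspose_map e (map_star e), Matrix.map_apply]

lemma star_traceForm {K : Matrix σ σ A} {H G : Matrix κ κ A} (hK : K.IsHermitian)
    (hH : H.IsHermitian) (hG : G.IsHermitian) (v w : σ → Matrix κ κ A) :
    star (traceForm K H G v w) = traceForm K H G w v := by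
  simp only [traceForm, star_sum, star_mul', ← trace_conjTranspose, conjTranspose_mul,
    conjTranspose_conjTranspose, hH.eq, hG.eq, hK.apply]
  rw [Finset.sum_comm]
  refine Finset.sum_congr rfl fun t _ => Finset.sum_congr rfl fun s _ => ?_
  rw [trace_mul_comm]
  simp only [mul_assoc]

lemma traceForm_sub_left (K : Matrix σ σ A) (H H' G : Matrix κ κ A) (v w : σ → Matrix κ κ A) :
    traceForm K (H - H') G v w = traceForm K H G v w - traceForm K H' G v w := by
  simp only [traceForm, mul_sub, trace_sub, Finset.sum_sub_distrib]

lemma traceForm_sub_right (K : Matrix σ σ A) (H G G' : Matrix κ κ A) (v w : σ → Matrix κ κ A) :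
    traceForm K H (G - G') v w = traceForm K H G v w - traceForm K H G' v w := by
  simp only [traceForm, mul_sub, sub_mul, trace_sub, Finset.sum_sub_distrib]

lemma traceForm_smul_left (K : Matrix σ σ A) (c : A) (H G : Matrix κ κ A)
    (v w : σ → Matrix κ κ A) : traceForm K (c • H) G v w = c * traceForm K H G v w := by
  simp only [traceForm, Matrix.mul_smul, trace_smul, Finset.mul_sum, smul_eq_mul, mul_left_comm]

lemma traceForm_smul_right (K : Matrix σ σ A) (c : A) (H G : Matrix κ κ A)
    (v w : σ → Matrix κ κ A) : traceForm K H (c • G) v w = c * traceForm K H G v w := by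
  simp only [traceForm, Matrix.mul_smul, Matrix.smul_mul, trace_smul, Finset.mul_sum, smul_eq_mul,
    mul_left_comm]

lemma traceForm_sub_sub_add_add (K : Matrix σ σ A) (H G : Matrix κ κ A)
    (v w : σ → Matrix κ κ A) : traceForm K H G (v - w) (v - w) + traceForm K H G (v + w) (v + w)
      = 2 * traceForm K H G v v + 2 * traceForm K H G w w := by
  simp only [traceForm, Finset.mul_sum, ← Finset.sum_add_distrib, Pi.sub_apply, Pi.add_apply,
    conjTranspose_sub, conjTranspose_add, sub_mul, add_mul, mul_sub, mul_add, trace_add, trace_sub]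
  exact Finset.sum_congr rfl fun _ _ => Finset.sum_congr rfl fun _ _ => by ring

lemma dotProduct_mulVec_eq_sum (K : Matrix σ σ A) (x y : σ → A) :
    star y ⬝ᵥ K *ᵥ x = ∑ s, ∑ t, K t s * (x s * star (y t)) := by
  simp only [dotProduct, mulVec, Finset.mul_sum, Pi.star_apply]
  rw [Finset.sum_comm]
  exact Finset.sum_congr rfl fun _ _ => Finset.sum_congr rfl fun _ _ => by ring

open scoped Kronecker in
lemma traceForm_eq_dotProduct (K : Matrix σ σ A) (H G : Matrix κ κ A) (v w : σ → Matrix κ κ A) :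
    traceForm K H G v w = star (fun p : σ × κ × κ => vec (w p.1) p.2)
      ⬝ᵥ ((K ⊗ₖ (Gᵀ ⊗ₖ H)) *ᵥ fun p : σ × κ × κ => vec (v p.1) p.2) := by
  have trace_eq (s t : σ) : trace (v s * G * (w t)ᴴ * H)
      = star (vec (w t)) ⬝ᵥ ((Gᵀ ⊗ₖ H) *ᵥ vec (v s)) := by
    rw [kronecker_mulVec_vec, star_vec_dotProduct_vec, transpose_transpose, mul_assoc,
      trace_mul_comm]
    simp only [mul_assoc]
  simp only [traceForm, trace_eq, dotProduct, mulVec, Fintype.sum_prod_type (α₁ := σ),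
    kroneckerMap_apply (f := (· * ·)) (A := K), Finset.mul_sum, Pi.star_apply]
  rw [Finset.sum_comm]
  refine Finset.sum_congr rfl fun t _ => ?_
  rw [Finset.sum_comm]
  exact Finset.sum_congr rfl fun p _ => Finset.sum_congr rfl fun s _ =>
    Finset.sum_congr rfl fun q _ => by ring

end TraceForm

section PositiveForms

variable {σ κ : Type*} [Fintype σ] [Fintype κ]

open scoped MatrixOrder Matrix.Norms.L2Operator in
lemma exists_eq_conjTranspose_mul_self {P : Matrix κ κ ℂ} (hP : P.PosSemidef) :
    ∃ E : Matrix κ κ ℂ, P = Eᴴ * E := by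
  classical exact CStarAlgebra.nonneg_iff_eq_star_mul_self.mp hP.nonneg

lemma posSemidef_trace_smul_one_sub [DecidableEq κ] {P : Matrix κ κ ℂ} (hP : P.PosSemidef) :
    (trace P • (1 : Matrix κ κ ℂ) - P).PosSemidef := by
  set U := hP.1.eigenvectorUnitary
  have hUU : (U : Matrix κ κ ℂ) * (U : Matrix κ κ ℂ)ᴴ = 1 := Unitary.coe_mul_star_self U
  have hP' : P = (U : Matrix κ κ ℂ) * diagonal (fun i => (hP.1.eigenvalues i : ℂ))
      * (U : Matrix κ κ ℂ)ᴴ := hP.1.spectral_theorem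
  have hdiag : (diagonal fun i => trace P - hP.1.eigenvalues i : Matrix κ κ ℂ).PosSemidef := by
    refine posSemidef_diagonal_iff.2 fun i => sub_nonneg.2 ?_
    rw [hP.1.trace_eq_sum_eigenvalues]
    exact Finset.single_le_sum (f := fun i => (hP.1.eigenvalues i : ℂ))
      (fun j _ => Complex.zero_le_real.2 (hP.eigenvalues_nonneg j)) (Finset.mem_univ i)
  convert hdiag.mul_mul_conjTranspose_same (U : Matrix κ κ ℂ) using 1
  rw [← diagonal_sub, mul_sub, sub_mul, ← hP', ← smul_one_eq_diagonal, Matrix.mul_smul, mul_one,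
    Matrix.smul_mul, hUU]

lemma posSemidef_trace_smul_inverse_sub_one [DecidableEq κ] {G H : Matrix κ κ ℂ} (hG : G.PosSemidef)
    (HG : H * G = 1) : (trace G • H - 1).PosSemidef := by
  have GH : G * H = 1 := mul_eq_one_comm.mp HG
  have hH : Hᴴ = H := isHermitian_of_mul_eq_one GH hG.1
  obtain ⟨E, rfl⟩ := exists_eq_conjTranspose_mul_self hG
  convert (posSemidef_trace_smul_one_sub
    (posSemidef_self_mul_conjTranspose E)).conjTranspose_mul_mul_same (E * H) using 1
  calc trace (Eᴴ * E) • H - 1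
      = trace (E * Eᴴ) • (H * (Eᴴ * E) * H) - H * (Eᴴ * E) * (Eᴴ * E * H) := by
        rw [GH, HG, one_mul, mul_one, trace_mul_comm]
    _ = (E * H)ᴴ * (trace (E * Eᴴ) • 1 - E * Eᴴ) * (E * H) := by
        simp only [conjTranspose_mul, hH, mul_sub, sub_mul, Matrix.mul_smul, Matrix.smul_mul,
          mul_assoc, one_mul]

lemma dotProduct_mulVec_le_trace_mul {K : Matrix κ κ ℂ} (hK : K.PosSemidef) (v : κ → ℂ) :
    star v ⬝ᵥ K *ᵥ v ≤ trace K * (star v ⬝ᵥ v) := by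
  classical
  have h := (posSemidef_trace_smul_one_sub hK).dotProduct_mulVec_nonneg v
  rwa [sub_mulVec, smul_mulVec, one_mulVec, dotProduct_sub, dotProduct_smul, sub_nonneg] at h

lemma two_mul_re_dotProduct_mulVec_le {K : Matrix σ σ ℂ} (hK : K.PosSemidef) (v w : σ → ℂ) {e : ℝ}
    (he : 0 < e) : 2 * (star w ⬝ᵥ K *ᵥ v).re
      ≤ e * (star v ⬝ᵥ K *ᵥ v).re + e⁻¹ * (star w ⬝ᵥ K *ᵥ w).re := by
  have hsymm : (star v ⬝ᵥ K *ᵥ w).re = (star w ⬝ᵥ K *ᵥ v).re := by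
    rw [← Complex.conj_re (star w ⬝ᵥ K *ᵥ v), starRingEnd_apply, ← star_dotProduct,
      star_mulVec, hK.1, dotProduct_mulVec]
  have h := (Complex.le_def.1 (hK.dotProduct_mulVec_nonneg ((e : ℂ) • v - w))).1
  have hexpand : (star ((e : ℂ) • v - w) ⬝ᵥ K *ᵥ ((e : ℂ) • v - w)).re
      = e * (e * (star v ⬝ᵥ K *ᵥ v).re - 2 * (star w ⬝ᵥ K *ᵥ v).re
        + e⁻¹ * (star w ⬝ᵥ K *ᵥ w).re) := by
    simp only [star_sub, star_smul, mulVec_sub, mulVec_smul, dotProduct_sub, sub_dotProduct,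
      dotProduct_smul, smul_dotProduct, Complex.sub_re, smul_eq_mul, Complex.star_def,
      Complex.conj_ofReal, Complex.re_ofReal_mul, hsymm]
    field_simp
    ring
  rw [hexpand, Complex.zero_re] at h
  linarith [nonneg_of_mul_nonneg_right h he]

lemma traceForm_nonneg {K : Matrix σ σ ℂ} {H G : Matrix κ κ ℂ} (hK : K.PosSemidef)
    (hH : H.PosSemidef) (hG : G.PosSemidef) (v : σ → Matrix κ κ ℂ) : 0 ≤ traceForm K H G v v := by
  rw [traceForm_eq_dotProduct]
  exact (hK.kronecker (hG.transpose.kronecker hH)).dotProduct_mulVec_nonneg _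

lemma traceForm_sub_le {K : Matrix σ σ ℂ} {H G : Matrix κ κ ℂ} (hK : K.PosSemidef)
    (hH : H.PosSemidef) (hG : G.PosSemidef) (v w : σ → Matrix κ κ ℂ) :
    traceForm K H G (v - w) (v - w) ≤ 2 * traceForm K H G v v + 2 * traceForm K H G w w := by
  rw [← traceForm_sub_sub_add_add]
  exact le_add_of_nonneg_right (traceForm_nonneg hK hH hG _)

lemma traceForm_le_trace_mul [DecidableEq κ]
    {K : Matrix σ σ ℂ} {H G : Matrix κ κ ℂ} (hK : K.PosSemidef)
    (hH : H.PosSemidef) (hG : G.PosSemidef) (v : σ → Matrix κ κ ℂ) :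
    traceForm K H G v v ≤ trace H * traceForm K 1 G v v := by
  have h := traceForm_nonneg hK (posSemidef_trace_smul_one_sub hH) hG v
  rwa [traceForm_sub_left, traceForm_smul_left, sub_nonneg] at h

lemma traceForm_one_one_le [DecidableEq κ]
    {K : Matrix σ σ ℂ} {G H : Matrix κ κ ℂ} (hK : K.PosSemidef)
    (hG : G.PosSemidef) (hH : H.PosSemidef) (HG : H * G = 1) (v : σ → Matrix κ κ ℂ) :
    traceForm K 1 1 v v ≤ trace G * (trace G * traceForm K H H v v) := by
  have hGH := posSemidef_trace_smul_inverse_sub_one hG HG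
  have h₁ := traceForm_nonneg hK hGH PosSemidef.one v
  have h₂ := traceForm_nonneg hK hH hGH v
  rw [traceForm_sub_left, traceForm_smul_left, sub_nonneg] at h₁
  rw [traceForm_sub_right, traceForm_smul_right, sub_nonneg] at h₂
  exact h₁.trans (mul_le_mul_of_nonneg_left h₂ hG.trace_nonneg)

lemma dotProduct_mulVec_trace_le [DecidableEq κ] {K : Matrix σ σ ℂ} (hK : K.PosSemidef)
    (v : σ → Matrix κ κ ℂ) : star (fun s => trace (v s)) ⬝ᵥ K *ᵥ (fun s => trace (v s))
      ≤ (Fintype.card κ : ℂ) * traceForm K 1 1 v v := by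
  rcases isEmpty_or_nonempty κ with _ | _
  · simp [Matrix.trace, dotProduct]
  set N : ℂ := (Fintype.card κ : ℂ) with hNdef
  have hN : 0 < N := Nat.cast_pos.2 Fintype.card_pos
  have htraceless := traceForm_nonneg hK PosSemidef.one PosSemidef.one
    fun s => N • v s - trace (v s) • (1 : Matrix κ κ ℂ)
  have hexpand : traceForm K 1 1 (fun s => N • v s - trace (v s) • 1)
      (fun s => N • v s - trace (v s) • 1) = N * (N * traceForm K 1 1 v v
        - star (fun s => trace (v s)) ⬝ᵥ K *ᵥ (fun s => trace (v s))) := by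
    have trace_one : trace (1 : Matrix κ κ ℂ) = N := by simp [hNdef]
    simp only [dotProduct_mulVec_eq_sum, traceForm, Finset.mul_sum, ← Finset.sum_sub_distrib]
    refine Finset.sum_congr rfl fun s _ => Finset.sum_congr rfl fun t _ => ?_
    simp only [mul_one, conjTranspose_sub, conjTranspose_smul, conjTranspose_one, mul_sub, sub_mul,
      Matrix.smul_mul, Matrix.mul_smul, one_mul, trace_sub, trace_smul, trace_conjTranspose,
      smul_eq_mul, trace_one]
    simp only [hNdef, star_natCast]
    ring
  rw [hexpand] at htraceless
  exact sub_nonneg.1 (le_of_mul_le_mul_left (by rwa [mul_zero]) hN)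

end PositiveForms

namespace FlowData

open scoped Kronecker

variable {A : Type*} [CommRing A] [Algebra ℂ A]
variable {ι κ : Type*} [Fintype ι] [DecidableEq ι] [Fintype κ] [DecidableEq κ]
variable {S : FlowData ι κ A}

lemma lap_mul (x y : A) : S.lap (x * y) = x * S.lap y + y * S.lap x
    + ∑ i, ∑ j, S.h j i * (S.d i x * S.db j y) + ∑ i, ∑ j, S.h j i * (S.d i y * S.db j x) := by
  simp only [lap, S.D_apply, Finset.mul_sum, ← Finset.sum_add_distrib, Derivation.leibniz,
    smul_eq_mul, map_add]
  exact Finset.sum_congr rfl fun i _ => Finset.sum_congr rfl fun j _ => by ring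

variable [StarRing A]

lemma IsHermitian.energy_eq_traceForm (hS : S.IsHermitian) :
    S.energy = traceForm S.h S.H S.G S.Γ S.Γ := by
  simp only [energy, traceForm, hS.Γbar_eq, adj_apply, Finset.mul_sum, trace_sum, Matrix.mul_smul,
    trace_smul, smul_eq_mul, mul_assoc]

lemma IsHermitian.isSelfAdjoint_energy (hS : S.IsHermitian) : IsSelfAdjoint S.energy := by
  rw [hS.energy_eq_traceForm]
  exact star_traceForm hS.h hS.H hS.G _ _

lemma IsHermitian.isSelfAdjoint_trace (hS : S.IsHermitian) : IsSelfAdjoint (trace S.G) := by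
  rw [IsSelfAdjoint, ← trace_conjTranspose, hS.G]

lemma IsHermitian.energy_eq_traceForm_map_d (hS : S.IsHermitian) : S.energy
    = traceForm S.h S.H S.H (fun i => S.G.map (S.d i)) (fun i => S.G.map (S.d i)) := by
  rw [hS.energy_eq_traceForm, traceForm, traceForm]
  refine Finset.sum_congr rfl fun k _ => Finset.sum_congr rfl fun l _ => ?_
  congr 2
  calc S.Γ k * S.G * (S.Γ l)ᴴ * S.H
      = S.G.map (S.d k) * (S.H * S.G) * (S.H * (S.G.map (S.d l))ᴴ) * S.H := by
        rw [Γ, Γ, logDeriv, logDeriv, conjTranspose_mul, hS.H]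
        simp only [mul_assoc]
    _ = S.G.map (S.d k) * S.H * (S.G.map (S.d l))ᴴ * S.H := by
        rw [S.H_mul_G, mul_one]
        simp only [mul_assoc]

lemma IsHermitian.sum_trace_nablaΓ (hS : S.IsHermitian) :
    ∑ i, ∑ k, trace (S.nablaΓ i k * (S.Γbar k).map (S.D i))
      = traceForm (S.h ⊗ₖ S.h) S.H S.G (fun s : ι × ι => S.nablaΓ s.1 s.2)
        fun s => S.nablaΓ s.1 s.2 := by
  simp only [traceForm, Fintype.sum_prod_type, kroneckerMap_apply, hS.map_D_Γbar, adj_apply,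
    Finset.mul_sum, trace_sum, Matrix.mul_smul, trace_smul, smul_eq_mul, mul_assoc]

lemma IsHermitian.sum_trace_torsionΩ (hS : S.IsHermitian) :
    ∑ l, ∑ k, trace (S.torsionΩ l k * S.torsionΩbar k l)
      = traceForm (S.h ⊗ₖ S.hᵀ) S.H S.G (fun s : ι × ι => S.loweredTorsionΩ s.1 s.2)
        fun s => S.loweredTorsionΩ s.1 s.2 := by
  have trace_eq (l k : ι) : trace (S.torsionΩ l k * S.torsionΩbar k l) = ∑ i, ∑ m,
      S.h m l * S.h i k
        * trace (S.loweredTorsionΩ l i * S.G * (S.loweredTorsionΩ m k)ᴴ * S.H) := by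
    simp only [hS.torsionΩ_eq, hS.torsionΩbar_eq, Finset.sum_mul_sum, adj_apply, trace_sum,
      Matrix.mul_smul, Matrix.smul_mul, trace_smul, smul_eq_mul, mul_assoc]
  simp only [traceForm, Fintype.sum_prod_type, kroneckerMap_apply, transpose_apply, trace_eq]
  refine Finset.sum_congr rfl fun l _ => ?_
  rw [Finset.sum_comm]
  exact Finset.sum_congr rfl fun i _ => Finset.sum_comm

lemma IsHermitian.heat_trace (hS : S.IsHermitian) (hG : S.BundleFlow) :
    S.dt (trace S.G) - S.lap (trace S.G)
      = -traceForm S.h 1 S.H (fun i => S.G.map (S.d i)) (fun i => S.G.map (S.d i)) := by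
  rw [derivation_trace, hG, trace_sum, lap, ← Finset.sum_sub_distrib, traceForm,
    ← Finset.sum_neg_distrib]
  refine Finset.sum_congr rfl fun i _ => ?_
  rw [derivation_trace, derivation_trace, trace_sub, sub_sub_cancel_left, D,
    map_sum_smul_derivation, Finset.mul_sum, trace_sum]
  congr 1
  refine Finset.sum_congr rfl fun j _ => ?_
  rw [Matrix.mul_smul, trace_smul, smul_eq_mul, mul_one, hS.conjTranspose_map_d, hS.G]

section Evaluation

variable (e : A →⋆ₐ[ℂ] ℂ)

lemma IsHermitian.map_heat_energy_nonpos (hS : S.IsHermitian) (hG : S.BundleFlow)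
    (hg : S.MetricFlow) (ph : (S.h.map e).PosSemidef) (pG : (S.G.map e).PosSemidef)
    (pH : (S.H.map e).PosSemidef) : e (S.dt S.energy - S.lap S.energy) ≤ 0 := by
  have map_kronecker (M N : Matrix ι ι A) : (M ⊗ₖ N).map e = M.map e ⊗ₖ N.map e := by
    ext
    simp
  have h₁ := traceForm_nonneg (ph.kronecker ph) pH pG fun s : ι × ι => (S.nablaΓ s.1 s.2).map e
  have h₂ := traceForm_nonneg (ph.kronecker ph.transpose) pH pG
    fun s : ι × ι => (S.loweredTorsionΩ s.1 s.2).map e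
  rw [S.heat_energy hG hg, hS.sum_trace_nablaΓ, hS.sum_trace_torsionΩ, map_sub, map_neg,
    map_traceForm, map_traceForm, map_kronecker, map_kronecker, transpose_map, sub_nonpos]
  exact (neg_nonpos.2 h₂).trans h₁

lemma IsHermitian.map_heat_trace_nonpos (hS : S.IsHermitian) (hG : S.BundleFlow)
    (ph : (S.h.map e).PosSemidef) (pH : (S.H.map e).PosSemidef) :
    e (S.dt (trace S.G) - S.lap (trace S.G)) ≤ 0 := by
  rw [hS.heat_trace hG, map_neg, neg_nonpos, map_traceForm,
    Matrix.map_one e (map_zero e) (map_one e)]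
  exact traceForm_nonneg ph PosSemidef.one pH _

lemma IsHermitian.map_energy_nonneg (hS : S.IsHermitian) (ph : (S.h.map e).PosSemidef)
    (pG : (S.G.map e).PosSemidef) (pH : (S.H.map e).PosSemidef) : 0 ≤ e S.energy := by
  rw [hS.energy_eq_traceForm, map_traceForm]
  exact traceForm_nonneg ph pH pG _

lemma IsHermitian.map_energy_le (hS : S.IsHermitian) (hG : S.BundleFlow)
    (ph : (S.h.map e).PosSemidef) (pH : (S.H.map e).PosSemidef) :
    e S.energy ≤ trace (S.H.map e) * -e (S.dt (trace S.G) - S.lap (trace S.G)) := by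
  rw [hS.energy_eq_traceForm_map_d, hS.heat_trace hG, map_neg, neg_neg, map_traceForm,
    map_traceForm, Matrix.map_one e (map_zero e) (map_one e)]
  exact traceForm_le_trace_mul ph pH pH _

/-- The pairing of the gradients of `x` and `y` in the metric `g`, evaluated by the character
`e`. -/
def gradInner (S : FlowData ι κ A) (e : A →⋆ₐ[ℂ] ℂ) (x y : A) : ℂ :=
  star (fun i => e (S.d i y)) ⬝ᵥ S.h.map e *ᵥ fun i => e (S.d i x)

lemma IsHermitian.gradInner_trace_le (hS : S.IsHermitian) (ph : (S.h.map e).PosSemidef)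
    (pG : (S.G.map e).PosSemidef) (pH : (S.H.map e).PosSemidef) :
    S.gradInner e (trace S.G) (trace S.G)
      ≤ (Fintype.card κ : ℂ) * (trace (S.G.map e) * (trace (S.G.map e) * e S.energy)) := by
  have HG : S.H.map e * S.G.map e = 1 := by
    rw [← Matrix.map_mul, S.H_mul_G, Matrix.map_one e (map_zero e) (map_one e)]
  have d_trace (i : ι) : e (S.d i (trace S.G)) = trace ((S.G.map (S.d i)).map e) := by
    rw [derivation_trace, AddMonoidHom.map_trace e]
  simp only [gradInner, d_trace]
  rw [hS.energy_eq_traceForm_map_d, map_traceForm]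
  exact (dotProduct_mulVec_trace_le ph _).trans
    (mul_le_mul_of_nonneg_left (traceForm_one_one_le ph pG pH HG _) (Nat.cast_nonneg _))

lemma IsHermitian.map_lap_mul (hS : S.IsHermitian) {x y : A} (hx : IsSelfAdjoint x)
    (hy : IsSelfAdjoint y) : e (S.lap (x * y)) = e x * e (S.lap y) + e y * e (S.lap x)
      + S.gradInner e x y + S.gradInner e y x := by
  rw [lap_mul]
  simp only [gradInner, dotProduct_mulVec_eq_sum, map_add, map_sum, map_mul, Matrix.map_apply,
    ← map_star, hS.star_d, hx.star_eq, hy.star_eq]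

lemma gradInner_add_left (x y z : A) :
    S.gradInner e (x + y) z = S.gradInner e x z + S.gradInner e y z := by
  simp only [gradInner, dotProduct_mulVec_eq_sum, map_add, add_mul, mul_add,
    Finset.sum_add_distrib]

lemma gradInner_smul_left (c : ℂ) (x z : A) :
    S.gradInner e (c • x) z = c * S.gradInner e x z := by
  simp only [gradInner, dotProduct_mulVec_eq_sum, Derivation.map_smul, map_smul, Finset.mul_sum,
    smul_eq_mul]
  exact Finset.sum_congr rfl fun _ _ => Finset.sum_congr rfl fun _ _ => by ring

lemma gradInner_mul_left (x y z : A) :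
    S.gradInner e (x * y) z = e x * S.gradInner e y z + e y * S.gradInner e x z := by
  simp only [gradInner, dotProduct_mulVec_eq_sum, Derivation.leibniz, map_add, map_mul,
    smul_eq_mul, Finset.mul_sum, ← Finset.sum_add_distrib]
  exact Finset.sum_congr rfl fun _ _ => Finset.sum_congr rfl fun _ _ => by ring

lemma gradInner_eq_zero {x : A} (hx : ∀ i, e (S.d i x) = 0) (y : A) : S.gradInner e x y = 0 := by
  simp [gradInner, dotProduct_mulVec_eq_sum, hx]

lemma IsHermitian.star_gradInner (hS : S.IsHermitian) (x y : A) :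
    star (S.gradInner e x y) = S.gradInner e y x := by
  rw [gradInner, gradInner, ← star_dotProduct, star_mulVec,
    ← conjTranspose_map e (map_star e), hS.h, dotProduct_mulVec]

end Evaluation

end FlowData

lemma second_deriv_nonpos_of_isLocalMax {φ φ' : ℝ → ℝ} {a φ'' : ℝ}
    (hmax : IsLocalMax φ a) (hφ : ∀ᶠ s in nhds a, HasDerivAt φ (φ' s) s)
    (hφ' : HasDerivAt φ' φ'' a) : φ'' ≤ 0 := by
  have hderiv : deriv φ =ᶠ[nhds a] φ' := hφ.mono fun _ h => h.deriv
  by_contra! hpos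
  have hmin : IsLocalMin φ a :=
    isLocalMin_of_deriv_deriv_pos (by rwa [hderiv.deriv_eq, hφ'.deriv]) hmax.deriv_eq_zero
      hφ.self_of_nhds.continuousAt
  have hconst : φ =ᶠ[nhds a] fun _ => φ a := by
    filter_upwards [hmax, hmin] with s h₁ h₂ using le_antisymm h₁ h₂
  have hzero : φ' =ᶠ[nhds a] fun _ => 0 :=
    hderiv.symm.trans (hconst.deriv.trans (by simp))
  exact hpos.ne' (((hasDerivAt_const a (0 : ℝ)).congr_of_eventuallyEq hzero).unique hφ').symm

lemma deriv_nonneg_of_eventually_le_left {φ : ℝ → ℝ} {a φ' : ℝ}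
    (hmax : ∀ᶠ s in nhdsWithin a (Set.Iio a), φ s ≤ φ a) (hφ : HasDerivAt φ φ' a) : 0 ≤ φ' := by
  have hslope : Filter.Tendsto (slope φ a) (nhdsWithin a (Set.Iio a)) (nhds φ') :=
    (hasDerivAt_iff_tendsto_slope.1 hφ).mono_left
      (nhdsWithin_mono a fun x (hx : x < a) => hx.ne)
  refine ge_of_tendsto hslope ?_
  filter_upwards [hmax, self_mem_nhdsWithin] with s hs (hsa : s < a)
  rw [slope_def_field]
  exact div_nonneg_of_nonpos (by linarith) (by linarith)

namespace smoothFunctions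

open TopologicalSpace Filter Topology

section MaximumPrinciple

variable {V : Type*} [NormedAddCommGroup V] [NormedSpace ℝ V] {U : Opens V}

lemma hasDerivAt_re_line (f : smoothFunctions U) {p v : V} {s : ℝ} (hs : p + s • v ∈ U) :
    HasDerivAt (fun s : ℝ => (zeroExtend f.1 (p + s • v)).re)
      (zeroExtend (directional v f).1 (p + s • v)).re s := by
  have hline : HasDerivAt (fun s : ℝ => p + s • v) v s := by
    simpa using ((hasDerivAt_id s).smul_const v).const_add p
  rw [zeroExtend_apply _ ⟨_, hs⟩]
  exact (Complex.reCLM.hasFDerivAt).comp_hasDerivAt s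
    ((differentiableAt f ⟨_, hs⟩).hasFDerivAt.comp_hasDerivAt s hline)

lemma eventually_line_mem (p : U) (v : V) : ∀ᶠ s : ℝ in 𝓝 0, p + s • v ∈ U := by
  have : ContinuousAt (fun s : ℝ => (p : V) + s • v) 0 := by fun_prop
  exact this.eventually (U.isOpen.mem_nhds (by simp))

lemma hasDerivAt_re_line_zero (f : smoothFunctions U) (p : U) (v : V) :
    HasDerivAt (fun s : ℝ => (zeroExtend f.1 (p + s • v)).re) ((directional v f).1 p).re 0 := by
  simpa [zeroExtend_apply] using hasDerivAt_re_line f (p := (p : V)) (v := v) (s := 0) (by simp)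

lemma re_directional_eq_zero (f : smoothFunctions U) (p : U) (v : V)
    (hmax : IsLocalMax (fun s : ℝ => (zeroExtend f.1 (p + s • v)).re) 0) :
    ((directional v f).1 p).re = 0 :=
  hmax.hasDerivAt_eq_zero (hasDerivAt_re_line_zero f p v)

lemma re_directional_directional_nonpos (f : smoothFunctions U) (p : U) (v : V)
    (hmax : IsLocalMax (fun s : ℝ => (zeroExtend f.1 (p + s • v)).re) 0) :
    ((directional v (directional v f)).1 p).re ≤ 0 :=
  second_deriv_nonpos_of_isLocalMax hmax
    ((eventually_line_mem p v).mono fun _ hs => hasDerivAt_re_line f hs)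
    (hasDerivAt_re_line_zero (directional v f) p v)

lemma re_directional_nonneg (f : smoothFunctions U) (p : U) (v : V)
    (hmax : ∀ᶠ s : ℝ in 𝓝[<] 0, (zeroExtend f.1 (p + s • v)).re ≤ (f.1 p).re) :
    0 ≤ ((directional v f).1 p).re :=
  deriv_nonneg_of_eventually_le_left (by simpa [zeroExtend_apply] using hmax)
    (hasDerivAt_re_line_zero f p v)

/-- A real-linear function as an element of the algebra of smooth functions. -/
def linear (L : V →L[ℝ] ℂ) : smoothFunctions U := restrict L L.contDiff.contDiffOn

lemma directional_linear (L : V →L[ℝ] ℂ) (v : V) :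
    directional v (linear L : smoothFunctions U) = algebraMap ℂ (smoothFunctions U) (L v) := by
  ext p
  rw [directional_apply, ← fderiv_eq (linear L) (F := L) (fun _ => rfl) p, L.fderiv]
  rfl

/-- Evaluation at a point. -/
def evaluation (p : U) : smoothFunctions U →⋆ₐ[ℂ] ℂ :=
  (Pi.evalStarAlgHom ℂ (fun _ : U => ℂ) p).comp (smoothFunctions U).subtype

lemma evaluation_apply (p : U) (f : smoothFunctions U) : evaluation p f = f.1 p := rfl

end MaximumPrinciple

variable {n : ℕ} {U : Opens (ℝ × (Fin n → ℂ))}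

/-- The holomorphic coordinate function `zᵢ`. -/
def coord (i : Fin n) : smoothFunctions U :=
  linear ((ContinuousLinearMap.proj (R := ℝ) (φ := fun _ : Fin n => ℂ) i).comp
    (ContinuousLinearMap.snd ℝ ℝ (Fin n → ℂ)))

/-- The time coordinate function. -/
def time : smoothFunctions U :=
  linear (Complex.ofRealCLM.comp (ContinuousLinearMap.fst ℝ ℝ (Fin n → ℂ)))

lemma evaluation_coord (i : Fin n) (p : U) : evaluation p (coord i) = p.1.2 i := rfl

lemma evaluation_time (p : U) : evaluation p time = (p.1.1 : ℂ) := rfl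

lemma star_time : star (time : smoothFunctions U) = time := by
  ext p
  exact Complex.conj_ofReal p.1.1

lemma wirtinger_coord (i j : Fin n) :
    wirtinger i (coord j : smoothFunctions U) = if i = j then 1 else 0 := by
  rw [wirtinger_eq, coord, realPartial, imagPartial, directional_linear, directional_linear]
  obtain rfl | h := eq_or_ne i j
  · ext p
    simp [Algebra.algebraMap_eq_smul_one, smul_smul]
    norm_num
  · simp [h]

lemma wirtingerBar_coord (i j : Fin n) : wirtingerBar i (coord j : smoothFunctions U) = 0 := by
  rw [wirtingerBar_eq, coord, realPartial, imagPartial, directional_linear, directional_linear]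
  obtain rfl | h := eq_or_ne i j
  · ext p
    simp [Algebra.algebraMap_eq_smul_one, smul_smul]
  · simp [Pi.single_eq_of_ne h.symm]

lemma timeDeriv_coord (j : Fin n) : timeDeriv (coord j : smoothFunctions U) = 0 := by
  rw [timeDeriv, coord, directional_linear]
  simp

lemma timeDeriv_time : timeDeriv (time : smoothFunctions U) = 1 := by
  rw [timeDeriv, time, directional_linear]
  simp

lemma wirtinger_time (i : Fin n) : wirtinger i (time : smoothFunctions U) = 0 := by
  rw [wirtinger_eq, time, realPartial, imagPartial, directional_linear, directional_linear]
  simp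

lemma spatial_eq_sum_single (w : Fin n → ℂ) : ((0, w) : ℝ × (Fin n → ℂ))
    = ∑ i, ((w i).re • ((0, Pi.single i 1) : ℝ × (Fin n → ℂ))
      + (w i).im • ((0, Pi.single i Complex.I) : ℝ × (Fin n → ℂ))) := by
  refine Prod.ext (by simp [Prod.fst_sum]) (funext fun k => ?_)
  simp only [Prod.snd_sum, Finset.sum_apply, Prod.snd_add, Prod.smul_snd, Pi.add_apply,
    Pi.smul_apply]
  rw [Finset.sum_eq_single k (fun b _ hb => by simp [Pi.single_eq_of_ne hb.symm]) (by simp)]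
  simp

lemma directional_eq_sum (w : Fin n → ℂ) (f : smoothFunctions U) : directional (0, w) f
    = ∑ i, (((w i).re : ℂ) • realPartial i f + ((w i).im : ℂ) • imagPartial i f) := by
  ext p
  change _ = evaluation p _
  rw [directional_apply, spatial_eq_sum_single w]
  simp only [map_sum, map_add, map_smul]
  rfl

lemma sum_smul_wirtinger (w : Fin n → ℂ) (f : smoothFunctions U) : ∑ i, w i • wirtinger i f
    = (1 / 2 : ℂ) • (directional (0, w) f - Complex.I • directional (0, Complex.I • w) f) := by
  rw [directional_eq_sum, directional_eq_sum, Finset.smul_sum, ← Finset.sum_sub_distrib,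
    Finset.smul_sum]
  refine Finset.sum_congr rfl fun i _ => ?_
  have hw : w i = (w i).re + (w i).im * Complex.I := (Complex.re_add_im _).symm
  have hre : (((Complex.I • w) i).re : ℂ) = -(w i).im := by simp
  have him : (((Complex.I • w) i).im : ℂ) = (w i).re := by simp
  rw [wirtinger_eq, hre, him]
  conv_lhs => rw [hw]
  match_scalars
  · ring
  · linear_combination (-(1 / 2) * (w i).im : ℂ) * Complex.I_mul_I

lemma sum_smul_wirtingerBar (w : Fin n → ℂ) (f : smoothFunctions U) :
    ∑ i, star (w i) • wirtingerBar i f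
      = (1 / 2 : ℂ) • (directional (0, w) f + Complex.I • directional (0, Complex.I • w) f) := by
  have h := congrArg star (sum_smul_wirtinger w (star f))
  simp only [star_sum, star_smul, star_wirtinger, star_star, star_sub, ← directional_star] at h
  rw [h]
  simp [sub_eq_add_neg]

lemma complexHessian_eq_directional (w : Fin n → ℂ) (f : smoothFunctions U) :
    ∑ j, star (w j) • wirtingerBar j (∑ i, w i • wirtinger i f)
      = (1 / 4 : ℂ) • (directional (0, w) (directional (0, w) f)
        + directional (0, Complex.I • w) (directional (0, Complex.I • w) f)) := by
  rw [sum_smul_wirtingerBar, sum_smul_wirtinger]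
  simp only [Derivation.map_smul, map_sub]
  rw [directional_comm (0, Complex.I • w) (0, w)]
  match_scalars
  · ring
  · ring
  · linear_combination (-(1 / 4) : ℂ) * Complex.I_mul_I

lemma re_sum_hessian_nonpos {K : Matrix (Fin n) (Fin n) ℂ} (hK : K.PosSemidef)
    (f : smoothFunctions U) (p : U)
    (h : ∀ w : Fin n → ℂ, (evaluation p (directional (0, w) (directional (0, w) f))).re ≤ 0) :
    (∑ i, ∑ j, K j i * evaluation p (wirtingerBar j (wirtinger i f))).re ≤ 0 := by
  obtain ⟨C, rfl⟩ := exists_eq_conjTranspose_mul_self hK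
  have hsum : ∑ i, ∑ j, (Cᴴ * C) j i * evaluation p (wirtingerBar j (wirtinger i f))
      = ∑ u, evaluation p
          (∑ j, star (C u j) • wirtingerBar j (∑ i, C u i • wirtinger i f)) := by
    simp only [Matrix.mul_apply, conjTranspose_apply, Finset.sum_mul, map_sum, map_smul,
      Derivation.map_smul, Finset.smul_sum, smul_eq_mul]
    rw [sum_reverse]
    exact Finset.sum_congr rfl fun _ _ => Finset.sum_congr rfl fun _ _ =>
      Finset.sum_congr rfl fun _ _ => by ring
  rw [hsum, Complex.re_sum]
  refine Finset.sum_nonpos fun u _ => ?_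
  rw [complexHessian_eq_directional, map_smul, map_add, show (1 / 4 : ℂ) = ((1 / 4 : ℝ) : ℂ) by
    norm_num, smul_eq_mul, Complex.re_ofReal_mul, Complex.add_re]
  linarith [h (fun i => C u i), h (Complex.I • fun i => C u i)]

lemma evaluation_wirtinger_eq_zero {f : smoothFunctions U} (hf : star f = f) (p : U)
    (h : ∀ w : Fin n → ℂ, (evaluation p (directional (0, w) f)).re = 0) (i : Fin n) :
    evaluation p (wirtinger i f) = 0 := by
  have hzero (w : Fin n → ℂ) : evaluation p (directional (0, w) f) = 0 := by
    have hstar : star (evaluation p (directional (0, w) f))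
        = evaluation p (directional (0, w) f) := by
      rw [← map_star, ← directional_star, hf]
    exact Complex.ext (h w) (Complex.conj_eq_iff_im.1 hstar)
  rw [wirtinger_eq, map_smul, map_sub, map_smul, realPartial, imagPartial, hzero, hzero]
  simp

end smoothFunctions

section CutoffInequality

variable {f ψ ψ' φ q Δφ Lf Lu du_dφ df_dφ du2 M N : ℝ}

lemma gradient_cross_term_le (hφ : 0 < φ) (hM : 1 ≤ M) (hN : 1 ≤ N) (hdu : du2 ≤ N * M ^ 2 * f)
    (young : ∀ ε > 0, 2 * du_dφ ≤ ε * du2 + ε⁻¹ * q) :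
    144 * M ^ 2 * φ * du_dφ ≤ 18 * M * (φ ^ 2 * f) + 288 * N * M ^ 5 * q := by
  have : 0 < M := by linarith
  have : 0 < N := by linarith
  calc 144 * M ^ 2 * φ * du_dφ = 72 * M ^ 2 * φ * (2 * du_dφ) := by ring
    _ ≤ 72 * M ^ 2 * φ * (φ / (4 * N * M ^ 3) * du2 + (φ / (4 * N * M ^ 3))⁻¹ * q) := by
        gcongr
        exact young _ (by positivity)
    _ = 18 * φ ^ 2 / (N * M) * du2 + 288 * N * M ^ 5 * q := by
        field_simp
        ring
    _ ≤ 18 * φ ^ 2 / (N * M) * (N * M ^ 2 * f) + 288 * N * M ^ 5 * q := by gcongr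
    _ = 18 * M * (φ ^ 2 * f) + 288 * N * M ^ 5 * q := by
        field_simp

lemma sq_mul_le_of_maximum (hf : 0 ≤ f) (hψ' : ψ' ≤ 1) (hφ : 0 < φ) (hφ1 : φ ≤ 1) (hM : 1 ≤ M)
    (hN : 1 ≤ N) (hψq : ψ * q ≤ 2 * M) (hψΔ : -(ψ * Δφ) ≤ 2 * M) (hψ : 0 ≤ ψ) (hLf : Lf ≤ 0)
    (hLu : f ≤ M * -Lu) (hdu : du2 ≤ N * M ^ 2 * f)
    (young : ∀ ε > 0, 2 * du_dφ ≤ ε * du2 + ε⁻¹ * q)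
    (heat : 0 ≤ ψ' * φ ^ 2 * f + ψ * φ ^ 2 * Lf - ψ * f * (2 * φ * Δφ + 2 * q)
      - 4 * ψ * φ * df_dφ + 36 * M ^ 2 * Lu)
    (gradient : ψ * (φ ^ 2 * df_dφ + 2 * φ * f * q) + 36 * M ^ 2 * du_dφ = 0) :
    φ ^ 2 * f ≤ 288 * N * M ^ 4 * q := by
  have cross := gradient_cross_term_le hφ hM hN hdu young
  -- Multiplying by `φ²` lets the vanishing of the gradient eliminate `⟨df, dφ⟩`; the weight
  -- `36 M²` of `u` is chosen so that `-36 M² Lu` absorbs every remaining multiple of `f`.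
  have heat_sq : 0 ≤ φ ^ 2 * (ψ' * φ ^ 2 * f + ψ * φ ^ 2 * Lf - 2 * ψ * f * φ * Δφ
      + 6 * ψ * f * q + 36 * M ^ 2 * Lu) + 144 * M ^ 2 * φ * du_dφ := by
    linear_combination φ ^ 2 * heat - 4 * φ * gradient
  have hφ_sq : φ ^ 2 ≤ 1 := pow_le_one₀ hφ.le hφ1
  have time_term : ψ' * φ ^ 2 * f ≤ M * f := by
    have : ψ' * φ ^ 2 ≤ 1 := (mul_le_mul_of_nonneg_right hψ' (sq_nonneg φ)).trans (by linarith)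
    exact mul_le_mul_of_nonneg_right (this.trans hM) hf
  have heat_term : ψ * φ ^ 2 * Lf ≤ 0 := mul_nonpos_of_nonneg_of_nonpos (by positivity) hLf
  have laplacian_term : -(2 * ψ * f * φ * Δφ) ≤ 4 * M * f := by
    nlinarith [mul_le_mul_of_nonneg_left hψΔ (mul_nonneg hf hφ.le),
      mul_nonneg hf (sub_nonneg.2 hφ1)]
  have gradient_term : 6 * ψ * f * q ≤ 12 * M * f := by
    linarith [mul_le_mul_of_nonneg_left hψq hf]
  have trace_term : 36 * M ^ 2 * Lu ≤ -(36 * M * f) := by nlinarith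
  have total : M * (φ ^ 2 * f) ≤ M * (288 * N * M ^ 4 * q) := by
    nlinarith [mul_le_mul_of_nonneg_left (add_le_add (add_le_add (add_le_add
      (add_le_add time_term heat_term) laplacian_term) gradient_term) trace_term) (sq_nonneg φ)]
  exact le_of_mul_le_mul_left total (by linarith)

end CutoffInequality

lemma re_mul_le_of_nonneg {z w : ℂ} {M : ℝ} (hz : 0 ≤ z) (hM : z.re ≤ M) (hw : 0 ≤ w.re) :
    (z * w).re ≤ M * w.re := by
  rw [Complex.mul_re, ← (Complex.nonneg_iff.1 hz).2, zero_mul, sub_zero]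
  exact mul_le_mul_of_nonneg_right hM hw

namespace FlowData

variable {A : Type*} [CommRing A] [Algebra ℂ A]
variable {ι κ : Type*} [Fintype ι] [DecidableEq ι] [Fintype κ] [DecidableEq κ]
variable {S : FlowData ι κ A}

lemma lap_add (x y : A) : S.lap (x + y) = S.lap x + S.lap y := by
  simp [lap, Finset.sum_add_distrib]

lemma lap_smul (c : ℂ) (x : A) : S.lap (c • x) = c • S.lap x := by
  simp [lap, Derivation.map_smul, Finset.smul_sum]

lemma lap_eq_zero {x : A} (hx : ∀ i, S.d i x = 0) : S.lap x = 0 := by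
  simp [lap, hx]

variable [StarRing A] (e : A →⋆ₐ[ℂ] ℂ)

lemma map_eq_ofReal_re {x : A} (hx : IsSelfAdjoint x) : e x = ((e x).re : ℂ) :=
  (Complex.conj_eq_iff_re.1 (hx.map e)).symm

lemma IsHermitian.re_gradInner_comm (hS : S.IsHermitian) (x y : A) :
    (S.gradInner e y x).re = (S.gradInner e x y).re := by
  rw [← hS.star_gradInner]
  exact Complex.conj_re _

lemma IsHermitian.re_map_lap_mul (hS : S.IsHermitian) {x y : A} (hx : IsSelfAdjoint x)
    (hy : IsSelfAdjoint y) : (e (S.lap (x * y))).re = (e x).re * (e (S.lap y)).re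
      + (e y).re * (e (S.lap x)).re + 2 * (S.gradInner e x y).re := by
  rw [hS.map_lap_mul e hx hy, map_eq_ofReal_re e hx, map_eq_ofReal_re e hy]
  simp only [Complex.add_re, Complex.re_ofReal_mul, Complex.ofReal_re,
    hS.re_gradInner_comm e x y]
  ring

section LocalizedFunction

/-- The test function `ψφ²f + a·u` of the localized maximum principle. -/
def localized (ψ φ f u : A) (a : ℝ) : A := ψ * (φ * φ * f) + (a : ℂ) • u

variable {ψ φ f u : A} (hψ : IsSelfAdjoint ψ) (hφ : IsSelfAdjoint φ) (hf : IsSelfAdjoint f)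
  (dψ : ∀ i, S.d i ψ = 0) (dtφ : S.dt φ = 0) (a : ℝ)
include hψ hφ hf

include dψ in
lemma IsHermitian.re_map_lap_localized (hS : S.IsHermitian) :
    (e (S.lap (localized ψ φ f u a))).re
      = (e ψ).re * ((e φ).re ^ 2 * (e (S.lap f)).re
        + (e f).re * (2 * (e φ).re * (e (S.lap φ)).re + 2 * (S.gradInner e φ φ).re)
        + 4 * (e φ).re * (S.gradInner e f φ).re) + a * (e (S.lap u)).re := by
  have hφφ : IsSelfAdjoint (φ * φ) := hφ.mul hφ
  rw [localized, lap_add, lap_smul, map_add, map_smul, smul_eq_mul, Complex.add_re,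
    Complex.re_ofReal_mul, hS.re_map_lap_mul e hψ (hφφ.mul hf), hS.re_map_lap_mul e hφφ hf,
    hS.re_map_lap_mul e hφ hφ, lap_eq_zero dψ,
    gradInner_eq_zero e (x := ψ) (fun i => by simp [dψ i]),
    gradInner_mul_left, map_mul, map_eq_ofReal_re e hφ, ← hS.re_gradInner_comm e f φ]
  simp only [map_zero, Complex.zero_re, Complex.add_re, Complex.re_ofReal_mul, Complex.ofReal_re]
  ring

include dtφ in
lemma re_map_dt_localized :
    (e (S.dt (localized ψ φ f u a))).re
      = (e (S.dt ψ)).re * ((e φ).re ^ 2 * (e f).re) + (e ψ).re * (e φ).re ^ 2 * (e (S.dt f)).re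
        + a * (e (S.dt u)).re := by
  rw [localized, map_add, Derivation.leibniz, Derivation.leibniz, Derivation.leibniz,
    Derivation.map_smul, dtφ]
  simp only [smul_eq_mul, mul_zero, add_zero, map_add, map_mul, map_smul]
  rw [map_eq_ofReal_re e hφ, map_eq_ofReal_re e hψ, map_eq_ofReal_re e hf]
  simp only [← Complex.ofReal_mul, Complex.add_re, Complex.re_ofReal_mul,
    Complex.ofReal_re]
  ring

include dψ in
lemma re_gradInner_localized :
    (S.gradInner e (localized ψ φ f u a) φ).re = (e ψ).re * ((e φ).re ^ 2
      * (S.gradInner e f φ).re + 2 * (e φ).re * (e f).re * (S.gradInner e φ φ).re)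
      + a * (S.gradInner e u φ).re := by
  rw [localized, gradInner_add_left, gradInner_smul_left, gradInner_mul_left, gradInner_mul_left,
    gradInner_mul_left, gradInner_eq_zero e (x := ψ) (fun i => by simp [dψ i]), map_mul,
    map_eq_ofReal_re e hφ, map_eq_ofReal_re e hψ, map_eq_ofReal_re e hf]
  simp only [mul_zero, add_zero, ← Complex.ofReal_mul, ← mul_add, Complex.add_re,
    Complex.re_ofReal_mul, Complex.ofReal_re, mul_assoc]
  ring

end LocalizedFunction

lemma IsHermitian.re_gradInner_trace_le (hS : S.IsHermitian) {M N : ℝ} (hM : 0 ≤ M) (hN : 0 ≤ N)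
    (hκ : (Fintype.card κ : ℝ) ≤ N) (ph : (S.h.map e).PosSemidef) (pG : (S.G.map e).PosSemidef)
    (pH : (S.H.map e).PosSemidef) (tG : (trace (S.G.map e)).re ≤ M) :
    (S.gradInner e (trace S.G) (trace S.G)).re ≤ N * M ^ 2 * (e S.energy).re := by
  have h₀ := hS.map_energy_nonneg e ph pG pH
  have h₁ := mul_nonneg pG.trace_nonneg h₀
  have h₂ := mul_nonneg pG.trace_nonneg h₁
  calc (S.gradInner e (trace S.G) (trace S.G)).re
      ≤ ((Fintype.card κ : ℂ)
        * (trace (S.G.map e) * (trace (S.G.map e) * e S.energy))).re :=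
        (Complex.le_def.1 (hS.gradInner_trace_le e ph pG pH)).1
    _ ≤ N * (trace (S.G.map e) * (trace (S.G.map e) * e S.energy)).re :=
        re_mul_le_of_nonneg (Nat.cast_nonneg _) (by simpa using hκ) (Complex.le_def.1 h₂).1
    _ ≤ N * (M * (M * (e S.energy).re)) := by
        gcongr
        refine (re_mul_le_of_nonneg pG.trace_nonneg tG (Complex.le_def.1 h₁).1).trans ?_
        gcongr
        exact re_mul_le_of_nonneg pG.trace_nonneg tG (Complex.le_def.1 h₀).1
    _ = N * M ^ 2 * (e S.energy).re := by ring

lemma IsHermitian.sq_mul_energy_le_of_maximum (hS : S.IsHermitian) (hG : S.BundleFlow)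
    (hg : S.MetricFlow) {M N : ℝ} (hM : 1 ≤ M) (hN : 1 ≤ N) (hκ : (Fintype.card κ : ℝ) ≤ N)
    (ph : (S.h.map e).PosSemidef) (pG : (S.G.map e).PosSemidef) (pH : (S.H.map e).PosSemidef)
    (tG : (trace (S.G.map e)).re ≤ M) (tH : (trace (S.H.map e)).re ≤ M)
    {ψ φ : A} (hψ : IsSelfAdjoint ψ) (hφ : IsSelfAdjoint φ) (dψ : ∀ i, S.d i ψ = 0)
    (dtφ : S.dt φ = 0) (ψ_nonneg : 0 ≤ (e ψ).re) (dtψ : (e (S.dt ψ)).re ≤ 1)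
    (φ_pos : 0 < (e φ).re) (φ_le : (e φ).re ≤ 1)
    (hψq : (e ψ).re * (S.gradInner e φ φ).re ≤ 2 * M)
    (hψΔ : -((e ψ).re * (e (S.lap φ)).re) ≤ 2 * M)
    (grad_eq : ∀ i, e (S.d i (localized ψ φ S.energy (trace S.G) (36 * M ^ 2))) = 0)
    (lap_le : (e (S.lap (localized ψ φ S.energy (trace S.G) (36 * M ^ 2)))).re ≤ 0)
    (le_dt : 0 ≤ (e (S.dt (localized ψ φ S.energy (trace S.G) (36 * M ^ 2)))).re) :
    (e φ).re ^ 2 * (e S.energy).re ≤ 288 * N * M ^ 4 * (S.gradInner e φ φ).re := by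
  have hf := hS.isSelfAdjoint_energy
  have f_nonneg : 0 ≤ (e S.energy).re := (Complex.le_def.1 (hS.map_energy_nonneg e ph pG pH)).1
  have heat_energy_le := (Complex.le_def.1 (hS.map_heat_energy_nonpos e hG hg ph pG pH)).1
  have heat_trace_nonneg : 0 ≤ (-e (S.dt (trace S.G) - S.lap (trace S.G))).re :=
    (Complex.le_def.1 (neg_nonneg.2 (hS.map_heat_trace_nonpos e hG ph pH))).1
  have energy_le := (Complex.le_def.1 (hS.map_energy_le e hG ph pH)).1.trans
    (re_mul_le_of_nonneg pH.trace_nonneg tH heat_trace_nonneg)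
  have heat := lap_le.trans le_dt
  rw [re_map_dt_localized e hψ hφ hf dtφ, hS.re_map_lap_localized e hψ hφ hf dψ] at heat
  have gradient := gradInner_eq_zero e grad_eq φ
  apply_fun Complex.re at gradient
  rw [re_gradInner_localized e hψ hφ hf dψ, Complex.zero_re] at gradient
  rw [map_sub, Complex.sub_re, Complex.zero_re] at heat_energy_le
  rw [map_sub, Complex.neg_re, Complex.sub_re] at energy_le
  exact sq_mul_le_of_maximum f_nonneg dtψ φ_pos φ_le hM hN hψq hψΔ ψ_nonneg heat_energy_le
    energy_le (hS.re_gradInner_trace_le e (by linarith) (by linarith) hκ ph pG pH tG)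
    (fun _ hε => two_mul_re_dotProduct_mulVec_le ph (fun i => e (S.d i (trace S.G))) _ hε)
    (by linarith) gradient

end FlowData

open TopologicalSpace Filter Topology

section Balls

variable {n : ℕ}

lemma continuous_sum_normSq : Continuous fun z : Fin n → ℂ => ∑ i, Complex.normSq (z i) :=
  continuous_finsetSum _ fun i _ => Complex.continuous_normSq.comp (continuous_apply i)

lemma isOpen_eball (R : ℝ) : IsOpen (eball (n := n) R) :=
  isOpen_lt continuous_sum_normSq continuous_const

lemma isCompact_setOf_sum_normSq_le (r : ℝ) :
    IsCompact {z : Fin n → ℂ | ∑ i, Complex.normSq (z i) ≤ r} := by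
  refine Metric.isCompact_of_isClosed_isBounded
    (isClosed_le continuous_sum_normSq continuous_const)
    (Metric.isBounded_closedBall (x := (0 : Fin n → ℂ)) (r := √r) |>.subset fun z hz => ?_)
  rw [mem_closedBall_zero_iff, pi_norm_le_iff_of_nonneg (Real.sqrt_nonneg _)]
  intro i
  apply Real.le_sqrt_of_sq_le
  rw [← Complex.normSq_eq_norm_sq]
  exact (Finset.single_le_sum (f := fun i => Complex.normSq (z i))
    (fun i _ => Complex.normSq_nonneg _) (Finset.mem_univ i)).trans hz

/-- The closed parabolic cylinder `[a, b] × {|z|² ≤ r}`. -/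
def closedCylinder (n : ℕ) (a b r : ℝ) : Set (ℝ × (Fin n → ℂ)) :=
  Set.Icc a b ×ˢ {z | ∑ i, Complex.normSq (z i) ≤ r}

lemma isCompact_closedCylinder (a b r : ℝ) : IsCompact (closedCylinder n a b r) :=
  isCompact_Icc.prod (isCompact_setOf_sum_normSq_le r)

/-- The open parabolic cylinder `(0, τ) × B_R(0)`. -/
def spacetimeBall (n : ℕ) (τ R : ℝ) : Opens (ℝ × (Fin n → ℂ)) :=
  ⟨Set.Ioo 0 τ ×ˢ eball R, isOpen_Ioo.prod (isOpen_eball R)⟩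

end Balls

namespace smoothFunctions

variable {n : ℕ} {U : Opens (ℝ × (Fin n → ℂ))}

section ParabolicMaximum

/-- At `p` the real part of `f` has a local maximum along every spatial line, and a one-sided local
maximum backwards in time. -/
structure IsParabolicMax (f : smoothFunctions U) (p : U) : Prop where
  spatial : ∀ w : Fin n → ℂ,
    IsLocalMax (fun s : ℝ => (zeroExtend f.1 (p + s • ((0, w) : ℝ × (Fin n → ℂ)))).re) 0
  backward : ∀ᶠ s : ℝ in 𝓝[<] 0,
    (zeroExtend f.1 (p + s • ((1, 0) : ℝ × (Fin n → ℂ)))).re ≤ (f.1 p).re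

variable {f : smoothFunctions U} {p : U}

lemma IsParabolicMax.re_timeDeriv_nonneg (h : IsParabolicMax f p) :
    0 ≤ (evaluation p (timeDeriv f)).re :=
  re_directional_nonneg f p (1, 0) h.backward

lemma IsParabolicMax.wirtinger_eq_zero (h : IsParabolicMax f p) (hf : IsSelfAdjoint f)
    (i : Fin n) : evaluation p (wirtinger i f) = 0 :=
  evaluation_wirtinger_eq_zero hf p (fun w => re_directional_eq_zero f p (0, w) (h.spatial w)) i

lemma IsParabolicMax.re_sum_hessian_nonpos (h : IsParabolicMax f p)
    {K : Matrix (Fin n) (Fin n) ℂ} (hK : K.PosSemidef) :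
    (∑ i, ∑ j, K j i * evaluation p (wirtingerBar j (wirtinger i f))).re ≤ 0 :=
  smoothFunctions.re_sum_hessian_nonpos hK f p fun w =>
    re_directional_directional_nonpos f p (0, w) (h.spatial w)

lemma isParabolicMax_of_isMaxOn {a b r : ℝ} (ha : a < p.1.1) (hb : p.1.1 ≤ b)
    (hr : ∑ i, Complex.normSq (p.1.2 i) < r)
    (hmax : IsMaxOn (fun q => (zeroExtend f.1 q).re) (closedCylinder n a b r) p) :
    IsParabolicMax f p where
  spatial w := by
    have hcont : ContinuousAt (fun s : ℝ => ∑ i, Complex.normSq ((p.1.2 + s • w) i)) 0 :=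
      (continuous_sum_normSq.comp (by fun_prop)).continuousAt
    filter_upwards [hcont.eventually_lt_const (u := r) (by simpa using hr)] with s hs
    have := hmax (show p.1 + s • (0, w) ∈ closedCylinder n a b r from
      ⟨by simpa using ⟨ha.le, hb⟩, by simpa using hs.le⟩)
    simpa using this
  backward := by
    filter_upwards [nhdsWithin_le_nhds (lt_mem_nhds (sub_neg.2 ha)), self_mem_nhdsWithin]
      with s hs (hs' : s < 0)
    have hmem : p.1 + s • (1, 0) ∈ closedCylinder n a b r := by
      refine ⟨?_, by simpa using hr.le⟩
      simp only [Prod.fst_add, Prod.smul_fst, smul_eq_mul, mul_one]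
      constructor <;> linarith
    simpa [zeroExtend_apply] using hmax hmem

lemma exists_isMaxOn_closedCylinder (f : smoothFunctions U) {a b r : ℝ}
    (hU : closedCylinder n a b r ⊆ (U : Set (ℝ × (Fin n → ℂ))))
    (hne : (closedCylinder n a b r).Nonempty) :
    ∃ p : U, p.1 ∈ closedCylinder n a b r ∧
      IsMaxOn (fun q => (zeroExtend f.1 q).re) (closedCylinder n a b r) p := by
  obtain ⟨p, hp, hmax⟩ := (isCompact_closedCylinder a b r).exists_isMaxOn hne
    (Complex.continuous_re.comp_continuousOn (f.2.continuousOn.mono hU))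
  exact ⟨⟨p, hU hp⟩, hp, hmax⟩

end ParabolicMaximum

section Cutoffs

lemma wirtinger_star_coord (i j : Fin n) :
    wirtinger i (star (coord j : smoothFunctions U)) = 0 := by
  rw [← star_star (wirtinger i _), star_wirtinger, star_star, wirtingerBar_coord, star_zero]

lemma wirtingerBar_star_coord (i j : Fin n) :
    wirtingerBar i (star (coord j : smoothFunctions U)) = if i = j then 1 else 0 := by
  rw [← star_wirtinger, wirtinger_coord]
  split_ifs <;> simp

lemma timeDeriv_star_coord (j : Fin n) : timeDeriv (star (coord j : smoothFunctions U)) = 0 := by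
  rw [← star_timeDeriv, timeDeriv_coord, star_zero]

/-- The spatial cutoff `1 - c|z|²`, used on the ball where it is nonnegative. -/
def spatialCutoff (c : ℝ) : smoothFunctions U := 1 - (c : ℂ) • ∑ i, coord i * star (coord i)

/-- The time cutoff `m(t - s)`. -/
def timeCutoff (m s : ℝ) : smoothFunctions U :=
  (m : ℂ) • (time - algebraMap ℂ (smoothFunctions U) (s : ℂ))

lemma evaluation_spatialCutoff (c : ℝ) (p : U) : evaluation p (spatialCutoff c)
    = ((1 - c * ∑ i, Complex.normSq (p.1.2 i) : ℝ) : ℂ) := by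
  rw [spatialCutoff, map_sub, map_smul, map_one, map_sum]
  simp only [map_mul, map_star, evaluation_coord, smul_eq_mul]
  push_cast
  simp_rw [← Complex.mul_conj]
  rfl

lemma evaluation_timeCutoff (m s : ℝ) (p : U) :
    evaluation p (timeCutoff m s) = ((m * (p.1.1 - s) : ℝ) : ℂ) := by
  rw [timeCutoff, map_smul, map_sub, AlgHomClass.commutes, evaluation_time]
  simp

lemma isSelfAdjoint_spatialCutoff (c : ℝ) :
    IsSelfAdjoint (spatialCutoff c : smoothFunctions U) := by
  refine (IsSelfAdjoint.one _).sub (IsSelfAdjoint.smul (Complex.conj_ofReal c) ?_)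
  exact isSelfAdjoint_sum _ fun i _ => IsSelfAdjoint.mul_star_self _

lemma isSelfAdjoint_timeCutoff (m s : ℝ) : IsSelfAdjoint (timeCutoff m s : smoothFunctions U) :=
  IsSelfAdjoint.smul (Complex.conj_ofReal m)
    (IsSelfAdjoint.sub star_time (IsSelfAdjoint.algebraMap _ (Complex.conj_ofReal s)))

lemma wirtinger_spatialCutoff (c : ℝ) (i : Fin n) :
    wirtinger i (spatialCutoff c : smoothFunctions U) = -((c : ℂ) • star (coord i)) := by
  simp [spatialCutoff, wirtinger_star_coord, wirtinger_coord]

lemma wirtingerBar_wirtinger_spatialCutoff (c : ℝ) (i j : Fin n) :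
    wirtingerBar j (wirtinger i (spatialCutoff c : smoothFunctions U))
      = -((c : ℂ) • if j = i then 1 else 0) := by
  rw [wirtinger_spatialCutoff, map_neg, Derivation.map_smul, wirtingerBar_star_coord]

lemma timeDeriv_spatialCutoff (c : ℝ) :
    timeDeriv (spatialCutoff c : smoothFunctions U) = 0 := by
  simp [spatialCutoff, timeDeriv_coord, timeDeriv_star_coord]

lemma wirtinger_timeCutoff (m s : ℝ) (i : Fin n) :
    wirtinger i (timeCutoff m s : smoothFunctions U) = 0 := by
  simp [timeCutoff, wirtinger_time]

lemma timeDeriv_timeCutoff (m s : ℝ) :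
    timeDeriv (timeCutoff m s : smoothFunctions U) = (m : ℂ) • 1 := by
  simp [timeCutoff, timeDeriv_time]

end Cutoffs

end smoothFunctions

namespace FlowData

open TopologicalSpace smoothFunctions

variable {n : ℕ} {κ : Type*} [Fintype κ] [DecidableEq κ]

/-- A solution on `U`, with respect to the coordinate derivations, of the pluriclosed flow of the
base metric and of the flow of the bundle metric, all metrics being positive and having traces at
most `M`. -/
structure IsBoundedFlow {U : Opens (ℝ × (Fin n → ℂ))}
    (S : FlowData (Fin n) κ (smoothFunctions U)) (M : ℝ) : Prop where
  dt_eq : S.dt = timeDeriv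
  d_eq : S.d = wirtinger
  db_eq : S.db = wirtingerBar
  isHermitian : S.IsHermitian
  bundleFlow : S.BundleFlow
  metricFlow : S.MetricFlow
  posSemidef_h : ∀ p, (S.h.map (evaluation p)).PosSemidef
  posSemidef_G : ∀ p, (S.G.map (evaluation p)).PosSemidef
  posSemidef_H : ∀ p, (S.H.map (evaluation p)).PosSemidef
  trace_h_le : ∀ p, (trace (S.h.map (evaluation p))).re ≤ M
  trace_G_le : ∀ p, (trace (S.G.map (evaluation p))).re ≤ M
  trace_H_le : ∀ p, (trace (S.H.map (evaluation p))).re ≤ M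

namespace IsBoundedFlow

section TestFunction

variable {U : Opens (ℝ × (Fin n → ℂ))} {S : FlowData (Fin n) κ (smoothFunctions U)} {M : ℝ}

lemma map_energy_nonneg (hS : S.IsBoundedFlow M) (p : U) : 0 ≤ (evaluation p S.energy).re :=
  (Complex.le_def.1 (hS.isHermitian.map_energy_nonneg _ (hS.posSemidef_h p) (hS.posSemidef_G p)
    (hS.posSemidef_H p))).1

lemma evaluation_lap (hS : S.IsBoundedFlow M) (p : U) (f : smoothFunctions U) :
    evaluation p (S.lap f) = ∑ i, ∑ j, (S.h.map (evaluation p)) j i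
      * evaluation p (wirtingerBar j (wirtinger i f)) := by
  simp [lap, D_apply, hS.d_eq, hS.db_eq]

lemma lap_spatialCutoff (hS : S.IsBoundedFlow M) (c : ℝ) (p : U) :
    evaluation p (S.lap (spatialCutoff c)) = -(c * trace (S.h.map (evaluation p))) := by
  rw [hS.evaluation_lap]
  simp only [wirtingerBar_wirtinger_spatialCutoff, map_neg, map_smul, smul_eq_mul]
  simp [trace, Finset.mul_sum, apply_ite, mul_comm]

lemma gradInner_spatialCutoff_le (hS : S.IsBoundedFlow M) {c : ℝ} (hc : 0 ≤ c) (p : U)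
    (hp : 0 ≤ (evaluation p (spatialCutoff c)).re) :
    (S.gradInner (evaluation p) (spatialCutoff c) (spatialCutoff c)).re ≤ M * c := by
  set v : Fin n → ℂ := fun i => evaluation p (wirtinger i (spatialCutoff c)) with hv
  have norm_v : star v ⬝ᵥ v = ((c * (c * ∑ i, Complex.normSq (p.1.2 i)) : ℝ) : ℂ) := by
    simp only [dotProduct, Pi.star_apply, hv, wirtinger_spatialCutoff, map_neg, map_smul, map_star,
      evaluation_coord, smul_eq_mul, Finset.mul_sum]
    push_cast
    refine Finset.sum_congr rfl fun i _ => ?_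
    rw [← Complex.mul_conj]
    simp
    ring
  rw [evaluation_spatialCutoff, Complex.ofReal_re, sub_nonneg] at hp
  have c_mul_le : c * (c * ∑ i, Complex.normSq (p.1.2 i)) ≤ c := mul_le_of_le_one_right hc hp
  rw [gradInner, hS.d_eq]
  calc (star v ⬝ᵥ S.h.map (evaluation p) *ᵥ v).re
      ≤ (trace (S.h.map (evaluation p)) * (star v ⬝ᵥ v)).re :=
        (Complex.le_def.1 (dotProduct_mulVec_le_trace_mul (hS.posSemidef_h p) v)).1
    _ = (trace (S.h.map (evaluation p))).re * (c * (c * ∑ i, Complex.normSq (p.1.2 i))) := by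
        rw [norm_v, Complex.re_mul_ofReal]
    _ ≤ (trace (S.h.map (evaluation p))).re * c :=
        mul_le_mul_of_nonneg_left c_mul_le (Complex.le_def.1 (hS.posSemidef_h p).trace_nonneg).1
    _ ≤ M * c := mul_le_mul_of_nonneg_right (hS.trace_h_le p) hc

lemma mul_gradInner_spatialCutoff_le (hS : S.IsBoundedFlow M) {c ψ : ℝ} (hc : 0 ≤ c) (hψ : 0 ≤ ψ)
    (hψc : ψ * c ≤ 2) {p : U} (hp : 0 ≤ (evaluation p (spatialCutoff c)).re) :
    ψ * (S.gradInner (evaluation p) (spatialCutoff c) (spatialCutoff c)).re ≤ 2 * M := by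
  have hM : 0 ≤ M :=
    (Complex.le_def.1 (hS.posSemidef_h p).trace_nonneg).1.trans (hS.trace_h_le p)
  calc _ ≤ ψ * (M * c) := mul_le_mul_of_nonneg_left (hS.gradInner_spatialCutoff_le hc p hp) hψ
    _ = ψ * c * M := by ring
    _ ≤ 2 * M := mul_le_mul_of_nonneg_right hψc hM

lemma neg_mul_lap_spatialCutoff_le (hS : S.IsBoundedFlow M) {c ψ : ℝ} (p : U)
    (hψc : ψ * c ≤ 2) : -(ψ * (evaluation p (S.lap (spatialCutoff c))).re) ≤ 2 * M := by
  rw [hS.lap_spatialCutoff, Complex.neg_re, Complex.re_ofReal_mul, mul_neg, neg_neg, ← mul_assoc]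
  exact mul_le_mul hψc (hS.trace_h_le p) (Complex.le_def.1 (hS.posSemidef_h p).trace_nonneg).1
    zero_le_two

/-- The test function of the maximum principle, with cutoffs `m(t - s)` and `1 - c|z|²`. -/
def testFunction (S : FlowData (Fin n) κ (smoothFunctions U)) (M c m s : ℝ) : smoothFunctions U :=
  localized (timeCutoff m s) (spatialCutoff c) S.energy (trace S.G) (36 * M ^ 2)

lemma isSelfAdjoint_testFunction (hS : S.IsBoundedFlow M) (c m s : ℝ) :
    IsSelfAdjoint (testFunction S M c m s) := by
  have hφ := isSelfAdjoint_spatialCutoff (U := U) c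
  exact ((isSelfAdjoint_timeCutoff m s).mul
    ((hφ.mul hφ).mul hS.isHermitian.isSelfAdjoint_energy)).add
    (IsSelfAdjoint.smul (Complex.conj_ofReal _) hS.isHermitian.isSelfAdjoint_trace)

lemma re_evaluation_testFunction (c m s : ℝ) (p : U) :
    (evaluation p (testFunction S M c m s)).re = m * (p.1.1 - s) *
      ((1 - c * ∑ i, Complex.normSq (p.1.2 i)) ^ 2 * (evaluation p S.energy).re)
      + 36 * M ^ 2 * (trace (S.G.map (evaluation p))).re := by
  rw [testFunction, localized, map_add, map_mul, map_mul, map_mul, map_smul, smul_eq_mul,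
    evaluation_spatialCutoff, evaluation_timeCutoff, AddMonoidHom.map_trace (evaluation p),
    Complex.add_re, ← Complex.ofReal_mul, Complex.re_ofReal_mul, Complex.re_ofReal_mul,
    Complex.re_ofReal_mul, ← sq]

lemma testFunction_le_of_isParabolicMax (hS : S.IsBoundedFlow M) {N c m s r : ℝ} {p : U}
    (hM : 1 ≤ M) (hN : 1 ≤ N) (hκ : (Fintype.card κ : ℝ) ≤ N) (hc : 0 ≤ c) (hcr : r * c ≤ 2)
    (hm : m ≤ 1) (hs : 0 ≤ m * (p.1.1 - s)) (hr : m * (p.1.1 - s) ≤ r)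
    (hp : 0 < 1 - c * ∑ i, Complex.normSq (p.1.2 i))
    (hmax : IsParabolicMax (testFunction S M c m s) p) :
    (evaluation p (testFunction S M c m s)).re ≤ 576 * N * M ^ 5 + 36 * M ^ 3 := by
  have hφ : (evaluation p (spatialCutoff c)).re = 1 - c * ∑ i, Complex.normSq (p.1.2 i) := by
    rw [evaluation_spatialCutoff, Complex.ofReal_re]
  have hψ : (evaluation p (timeCutoff m s)).re = m * (p.1.1 - s) := by
    rw [evaluation_timeCutoff, Complex.ofReal_re]
  have ψ_mul_c : m * (p.1.1 - s) * c ≤ 2 := (mul_le_mul_of_nonneg_right hr hc).trans hcr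
  have hψq := hS.mul_gradInner_spatialCutoff_le hc hs ψ_mul_c (hφ ▸ hp.le)
  have hψΔ := hS.neg_mul_lap_spatialCutoff_le p ψ_mul_c
  have dtψ : (evaluation p (S.dt (timeCutoff m s))).re ≤ 1 := by
    rw [hS.dt_eq, timeDeriv_timeCutoff, map_smul, map_one]
    simpa using hm
  have φ_le : (evaluation p (spatialCutoff c)).re ≤ 1 := by
    rw [hφ, sub_le_self_iff]
    exact mul_nonneg hc (Finset.sum_nonneg fun _ _ => Complex.normSq_nonneg _)
  have energy_le := hS.isHermitian.sq_mul_energy_le_of_maximum (evaluation p) hS.bundleFlow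
    hS.metricFlow hM hN hκ (hS.posSemidef_h p) (hS.posSemidef_G p) (hS.posSemidef_H p)
    (hS.trace_G_le p) (hS.trace_H_le p) (isSelfAdjoint_timeCutoff m s)
    (isSelfAdjoint_spatialCutoff c) (by simp [hS.d_eq, wirtinger_timeCutoff])
    (by rw [hS.dt_eq, timeDeriv_spatialCutoff]) (hψ ▸ hs) dtψ (hφ ▸ hp) φ_le
    (by rwa [hψ]) (by rwa [hψ])
    (by rw [hS.d_eq]; exact hmax.wirtinger_eq_zero (hS.isSelfAdjoint_testFunction c m s))
    (by rw [hS.evaluation_lap]; exact hmax.re_sum_hessian_nonpos (hS.posSemidef_h p))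
    (by rw [hS.dt_eq]; exact hmax.re_timeDeriv_nonneg)
  rw [hφ] at energy_le
  rw [re_evaluation_testFunction]
  have _ : 0 ≤ M := by linarith
  calc _ ≤ m * (p.1.1 - s) * (288 * N * M ^ 4 * (S.gradInner (evaluation p) (spatialCutoff c)
        (spatialCutoff c)).re) + 36 * M ^ 2 * M := by
        gcongr
        exact hS.trace_G_le p
    _ = 288 * N * M ^ 4 * (m * (p.1.1 - s) * (S.gradInner (evaluation p) (spatialCutoff c)
        (spatialCutoff c)).re) + 36 * M ^ 2 * M := by ring
    _ ≤ 288 * N * M ^ 4 * (2 * M) + 36 * M ^ 2 * M := by gcongr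
    _ = 576 * N * M ^ 5 + 36 * M ^ 3 := by ring

end TestFunction

variable {τ R M N : ℝ} {S : FlowData (Fin n) κ (smoothFunctions (spacetimeBall n τ R))}

lemma testFunction_le (hS : S.IsBoundedFlow M) (hM : 1 ≤ M) (hN : 1 ≤ N)
    (hκ : (Fintype.card κ : ℝ) ≤ N) {t c m r : ℝ} (htτ : t < τ) (hc : 0 < c) (hcr : c * r = 1)
    (hrR : r < R ^ 2) (hm : 0 ≤ m) (hm1 : m ≤ 1) (hmt : m * t ≤ R ^ 2) (hcR : R ^ 2 * c ≤ 2)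
    {q : spacetimeBall n τ R} (hq : q.1 ∈ closedCylinder n (t / 2) t r) :
    (evaluation q (testFunction S M c m (t / 2))).re ≤ 576 * N * M ^ 5 + 36 * M ^ 3 := by
  have ht : 0 < t := by linarith [q.2.1.1, hq.1.2]
  have cylinder_subset : closedCylinder n (t / 2) t r
      ⊆ (spacetimeBall n τ R : Set (ℝ × (Fin n → ℂ))) := fun p hp =>
    ⟨⟨by linarith [hp.1.1], by linarith [hp.1.2]⟩, hp.2.trans_lt hrR⟩
  obtain ⟨p, ⟨⟨ha, hb⟩, (hr : ∑ i, Complex.normSq (p.1.2 i) ≤ r)⟩, hmax⟩ :=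
    exists_isMaxOn_closedCylinder (testFunction S M c m (t / 2)) cylinder_subset ⟨_, hq⟩
  have q_le_p : (evaluation q (testFunction S M c m (t / 2))).re
      ≤ (evaluation p (testFunction S M c m (t / 2))).re := by
    simpa [zeroExtend_apply, evaluation_apply] using hmax hq
  refine q_le_p.trans ?_
  have boundary_bound (h : m * (p.1.1 - t / 2) *
      ((1 - c * ∑ i, Complex.normSq (p.1.2 i)) ^ 2 * (evaluation p S.energy).re) = 0) :
      (evaluation p (testFunction S M c m (t / 2))).re ≤ 576 * N * M ^ 5 + 36 * M ^ 3 := by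
    rw [re_evaluation_testFunction, h, pow_succ M 2, ← mul_assoc]
    gcongr
    · positivity
    · exact hS.trace_G_le p
  obtain h_initial | h_later := ha.eq_or_lt
  · exact boundary_bound (by simp [← h_initial])
  obtain h_lateral | h_interior := hr.eq_or_lt
  · exact boundary_bound (by simp [h_lateral, hcr])
  refine hS.testFunction_le_of_isParabolicMax hM hN hκ hc.le hcR hm1
    (mul_nonneg hm (by linarith))
    ((mul_le_mul_of_nonneg_left (by linarith) hm).trans hmt) ?_
    (isParabolicMax_of_isMaxOn h_later hb h_interior hmax)
  rw [sub_pos, ← hcr]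
  exact mul_lt_mul_of_pos_left h_interior hc

lemma energy_le (hS : S.IsBoundedFlow M) (hM : 1 ≤ M) (hN : 1 ≤ N)
    (hκ : (Fintype.card κ : ℝ) ≤ N) (hR : 0 < R) (q : spacetimeBall n τ R)
    (hq : q.1.2 ∈ eball (n := n) (R / 2)) :
    (evaluation q S.energy).re
      ≤ 8 * (576 * N * M ^ 5 + 36 * M ^ 3) * (min q.1.1 (R ^ 2))⁻¹ := by
  obtain ⟨ht, htτ⟩ : 0 < q.1.1 ∧ q.1.1 < τ := q.2.1
  set t := q.1.1
  set μ := min t (R ^ 2)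
  have hμ : 0 < μ := lt_min ht (by positivity)
  have hq' : ∑ i, Complex.normSq (q.1.2 i) < (R / 2) ^ 2 := hq
  have hR2 : 0 < R ^ 2 := by positivity
  have q_mem : q.1 ∈ closedCylinder n (t / 2) t (9 * R ^ 2 / 16) :=
    ⟨⟨by linarith, le_rfl⟩, hq'.le.trans (by linarith)⟩
  have bound := hS.testFunction_le (c := 16 / (9 * R ^ 2)) (m := μ / t) hM hN hκ htτ
    (by positivity) (by field_simp) (by linarith) (by positivity)
    (div_le_one_of_le₀ (min_le_left _ _) ht.le)
    (by rw [div_mul_cancel₀ _ ht.ne']; exact min_le_right _ _)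
    (by field_simp; norm_num) q_mem
  have cutoff_ge : 1 / 2 ≤ 1 - 16 / (9 * R ^ 2) * ∑ i, Complex.normSq (q.1.2 i) := by
    have : 16 / (9 * R ^ 2) * ∑ i, Complex.normSq (q.1.2 i) ≤ 4 / 9 := by
      calc _ ≤ 16 / (9 * R ^ 2) * (R / 2) ^ 2 := by gcongr
        _ = 4 / 9 := by
          field_simp
          norm_num
    linarith
  have trace_nonneg : 0 ≤ (trace (S.G.map (evaluation q))).re :=
    (Complex.le_def.1 (hS.posSemidef_G q).trace_nonneg).1
  have energy_nonneg := hS.map_energy_nonneg q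
  rw [re_evaluation_testFunction, show μ / t * (t - t / 2) = μ / 2 by field_simp; ring] at bound
  rw [← div_eq_mul_inv, le_div_iff₀ hμ]
  calc (evaluation q S.energy).re * μ
      = 8 * (μ / 2 * ((1 / 2) ^ 2 * (evaluation q S.energy).re)) := by ring
    _ ≤ 8 * (576 * N * M ^ 5 + 36 * M ^ 3) := by
        gcongr
        refine le_trans ?_ ((le_add_of_nonneg_right (by positivity)).trans bound)
        gcongr

end IsBoundedFlow

end FlowData

lemma isHermitian_generalizedMetric {A ι : Type*} [CommRing A] [StarRing A] [Fintype ι]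
    {g h : Matrix ι ι A} (hg : g.IsHermitian) (hh : h.IsHermitian)
    (β : Matrix ι ι A) : (generalizedMetric g h β βᴴ).IsHermitian := by
  have hhT : (hᵀ)ᴴ = hᵀ := hh.transpose
  simp only [Matrix.IsHermitian, generalizedMetric, fromBlocks_conjTranspose, conjTranspose_add,
    conjTranspose_mul, conjTranspose_conjTranspose, hhT, hg.eq, mul_assoc]

namespace FlowData

variable {A : Type*} [CommRing A] [Algebra ℂ A]
variable {ι : Type*} [Fintype ι] [DecidableEq ι]
variable {S : FlowData ι (ι ⊕ ι) A} {β : Matrix ι ι A}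

lemma map_D_eq_sum {κ μ ν : Type*} [Fintype κ] [DecidableEq κ] (S : FlowData ι κ A) (i : ι)
    (M : Matrix μ ν A) : M.map (S.D i) = ∑ j, S.h j i • M.map (S.db j) :=
  map_sum_smul_derivation _ _ _ _

lemma map_d_map_D {κ μ ν : Type*} [Fintype κ] [DecidableEq κ] (S : FlowData ι κ A) (i : ι)
    (M : Matrix μ ν A) :
    (M.map (S.d i)).map (S.D i) = ∑ j, S.h j i • (M.map (S.db j)).map (S.d i) := by
  rw [map_D_eq_sum]
  refine Finset.sum_congr rfl fun j _ => congrArg _ ?_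
  ext
  exact (S.d_db _ _ _).symm

section IndexNotation

variable (S)

lemma sum_chern_apply (a b : ι) : (∑ i, ((S.g.map (S.d i)).map (S.D i)
    - S.g.map (S.d i) * S.h * S.g.map (S.D i))) a b
      = ∑ i, ∑ j, S.h j i * (S.d i (S.db j (S.g a b))
        - ∑ c, ∑ e, S.d i (S.g a c) * S.h c e * S.db j (S.g e b)) := by
  simp only [map_D_eq_sum, Finset.mul_sum, Matrix.mul_smul, ← Finset.sum_sub_distrib, ← smul_sub]
  simp only [Matrix.sum_apply, Matrix.smul_apply, Matrix.sub_apply, map_apply, mul_apply,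
    smul_eq_mul, Finset.sum_mul, S.d_db]
  refine Finset.sum_congr rfl fun i _ => Finset.sum_congr rfl fun j _ => ?_
  rw [Finset.sum_comm]

lemma sum_lap_potential_apply (β : Matrix ι ι A) (a b : ι) : (∑ i, ((β.map (S.d i)).map (S.D i)
    - S.g.map (S.d i) * S.h * β.map (S.D i) - β.map (S.D i) * (S.g.map (S.d i) * S.h)ᵀ)) a b
      = ∑ i, ∑ j, S.h j i * (S.d i (S.db j (β a b))
        - ∑ k, ∑ l, S.h k l * S.d i (S.g a k) * S.db j (β l b)
        - ∑ k, ∑ l, S.h k l * S.d i (S.g b k) * S.db j (β a l)) := by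
  simp only [map_D_eq_sum, Finset.mul_sum, Finset.sum_mul, Matrix.mul_smul, Matrix.smul_mul,
    ← Finset.sum_sub_distrib, ← smul_sub]
  simp only [Matrix.sum_apply, Matrix.smul_apply, Matrix.sub_apply, map_apply, mul_apply,
    transpose_apply, smul_eq_mul, Finset.sum_mul, Finset.mul_sum, S.d_db]
  refine Finset.sum_congr rfl fun i _ => Finset.sum_congr rfl fun j _ => ?_
  rw [Finset.sum_comm (f := fun k l => S.h k l * S.d i (S.g a k) * S.db j (β l b)),
    Finset.sum_comm (f := fun k l => S.h k l * S.d i (S.g b k) * S.db j (β a l))]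
  simp only [mul_comm, mul_left_comm]

end IndexNotation

variable [StarRing A]

/-- The pluriclosed flow of the base metric `g` with torsion potential `β`, in matrix notation; the
bundle metric is the generalized metric of `(g, β)`. -/
structure IsPluriclosedFlow (S : FlowData ι (ι ⊕ ι) A) (β : Matrix ι ι A) : Prop where
  star_d : ∀ i x, star (S.d i x) = S.db i (star x)
  star_dt : ∀ x, star (S.dt x) = S.dt (star x)
  isHermitian_g : S.g.IsHermitian
  G_eq : S.G = generalizedMetric S.g S.h β βᴴ
  transpose_potential : βᵀ = -β
  db_potential : ∀ i j k, S.db k (β i j) = S.torsion i j k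
  flow_g : S.g.map S.dt = ∑ i, ((S.g.map (S.d i)).map (S.D i)
    - S.g.map (S.d i) * S.h * S.g.map (S.D i)) + S.torsionSq
  flow_potential : β.map S.dt = ∑ i, ((β.map (S.d i)).map (S.D i)
    - S.g.map (S.d i) * S.h * β.map (S.D i) - β.map (S.D i) * (S.g.map (S.d i) * S.h)ᵀ)

namespace IsPluriclosedFlow

variable (hS : S.IsPluriclosedFlow β)
include hS

lemma isHermitian : S.IsHermitian where
  star_d := hS.star_d
  g := hS.isHermitian_g
  G := by
    rw [hS.G_eq]
    exact isHermitian_generalizedMetric hS.isHermitian_g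
      (isHermitian_of_mul_eq_one S.g_mul_h hS.isHermitian_g) β

lemma H_eq : S.H = generalizedMetricInv S.g S.h β βᴴ :=
  left_inv_eq_right_inv S.H_mul_G (by rw [hS.G_eq, generalizedMetric_mul_inv S.g_mul_h])

lemma metricFlow : S.MetricFlow := hS.isHermitian.metricFlow hS.flow_g

lemma torsionSq_eq : S.torsionSq = ∑ i, β.map (S.D i) * S.hᵀ * βᴴ.map (S.d i) := by
  ext a b
  simp only [torsionSq, of_apply, Matrix.sum_apply, mul_apply, map_apply, D_apply,
    conjTranspose_apply, ← hS.isHermitian.star_db, hS.db_potential, transpose_apply,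
    Finset.sum_mul]
  rw [Finset.sum_congr rfl fun k _ => Finset.sum_comm, Finset.sum_comm]
  refine Finset.sum_congr rfl fun m _ => Finset.sum_congr rfl fun k _ =>
    Finset.sum_congr rfl fun l _ => Finset.sum_congr rfl fun r _ => by ring

lemma conjTranspose_map_D (i : ι) (M : Matrix ι ι A) :
    (M.map (S.D i))ᴴ = ∑ j, S.h i j • Mᴴ.map (S.d j) := by
  simp only [map_D_eq_sum, conjTranspose_sum, conjTranspose_smul,
    hS.isHermitian.conjTranspose_map_db, hS.isHermitian.h.apply]

lemma conjTranspose_flow_term (i : ι) : ((β.map (S.d i)).map (S.D i)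
    - S.g.map (S.d i) * S.h * β.map (S.D i) - β.map (S.D i) * (S.g.map (S.d i) * S.h)ᵀ)ᴴ
      = ∑ j, S.h i j • ((βᴴ.map (S.db i)).map (S.d j)
        - βᴴ.map (S.d j) * S.h * S.g.map (S.db i)
        - (S.h * S.g.map (S.db i))ᵀ * βᴴ.map (S.d j)) := by
  have conj_θ : (S.g.map (S.d i) * S.h)ᴴ = S.h * S.g.map (S.db i) :=
    hS.isHermitian.conjTranspose_θ i
  have conj_θT : ((S.g.map (S.d i) * S.h)ᵀ)ᴴ = (S.h * S.g.map (S.db i))ᵀ :=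
    congrArg transpose conj_θ
  rw [conjTranspose_sub, conjTranspose_sub, conjTranspose_mul (β.map _), conj_θT,
    conjTranspose_mul (S.g.map _ * _), conj_θ]
  simp only [hS.conjTranspose_map_D, hS.isHermitian.conjTranspose_map_d, Finset.sum_mul,
    Finset.mul_sum, Matrix.smul_mul, Matrix.mul_smul, ← Finset.sum_sub_distrib, ← smul_sub,
    mul_assoc]

lemma flow_conjTranspose_potential : βᴴ.map S.dt = ∑ i, ((βᴴ.map (S.d i)).map (S.D i)
    - βᴴ.map (S.d i) * S.h * S.g.map (S.D i) - (S.h * S.g.map (S.D i))ᵀ * βᴴ.map (S.d i)) := by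
  have conj_dt : βᴴ.map S.dt = (β.map S.dt)ᴴ := by
    ext; exact (hS.star_dt _).symm
  rw [conj_dt, hS.flow_potential, conjTranspose_sum]
  simp only [hS.conjTranspose_flow_term]
  simp only [map_d_map_D]
  simp only [map_D_eq_sum, Finset.mul_sum, Finset.sum_mul,
    Matrix.mul_smul, Matrix.smul_mul, transpose_sum, transpose_smul, ← Finset.sum_sub_distrib,
    ← smul_sub]
  exact Finset.sum_comm

lemma bundleFlow : S.BundleFlow := by
  rw [BundleFlow, hS.G_eq, hS.H_eq]
  refine generalizedMetric_flow S.g_mul_h S.h_mul_g hS.transpose_potential ?_ S.dt S.d S.D ?_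
    hS.flow_potential hS.flow_conjTranspose_potential
  · change (βᵀ)ᴴ = -βᴴ
    rw [hS.transpose_potential, conjTranspose_neg]
  · rw [hS.flow_g, hS.torsionSq_eq]

end IsPluriclosedFlow

end FlowData

namespace smoothFunctions

open TopologicalSpace

variable {n : ℕ} {U : Opens (ℝ × (Fin n → ℂ))}

lemma isUnit_of_forall_ne_zero {x : smoothFunctions U} (hx : ∀ p, evaluation p x ≠ 0) :
    IsUnit x := by
  have smooth_inv : ContDiffOn ℝ (⊤ : ℕ∞) (fun q => (zeroExtend x.1 q)⁻¹) U := by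
    refine ContDiffOn.inv x.2 fun q hq => ?_
    rw [zeroExtend_apply x.1 ⟨q, hq⟩]
    exact hx ⟨q, hq⟩
  refine IsUnit.of_mul_eq_one (restrict _ smooth_inv) (Subtype.ext (funext fun p => ?_))
  change x.1 p * (zeroExtend x.1 p)⁻¹ = 1
  rw [zeroExtend_apply]
  exact mul_inv_cancel₀ (hx p)

lemma isUnit_det {κ : Type*} [Fintype κ] [DecidableEq κ] {M : Matrix κ κ (smoothFunctions U)}
    (hM : ∀ p, (M.map (evaluation p)).PosDef) : IsUnit M.det := by
  refine isUnit_of_forall_ne_zero fun p => ?_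
  have det_eq : evaluation p M.det = (M.map (evaluation p)).det :=
    AlgHom.map_det (evaluation p).toAlgHom M
  rw [det_eq]
  exact ((isUnit_iff_isUnit_det _).mp (hM p).isUnit).ne_zero

lemma map_evaluation_inv {κ : Type*} [Fintype κ] [DecidableEq κ]
    {M : Matrix κ κ (smoothFunctions U)} (hM : IsUnit M.det) (p : U) :
    M⁻¹.map (evaluation p) = (M.map (evaluation p))⁻¹ := by
  refine (inv_eq_right_inv ?_).symm
  rw [← Matrix.map_mul, mul_nonsing_inv M hM, Matrix.map_one _ (map_zero _) (map_one _)]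

/-- The matrix of smooth functions defined by a matrix-valued function with smooth entries. -/
def restrictMatrix {μ ν : Type*} (F : ℝ × (Fin n → ℂ) → Matrix μ ν ℂ)
    (hF : ∀ a b, ContDiffOn ℝ (⊤ : ℕ∞) (fun q => F q a b) U) : Matrix μ ν (smoothFunctions U) :=
  Matrix.of fun a b => restrict (fun q => F q a b) (hF a b)

lemma matrix_ext {μ ν : Type*} {M N : Matrix μ ν (smoothFunctions U)}
    (h : ∀ p, M.map (evaluation p) = N.map (evaluation p)) : M = N :=
  Matrix.ext fun a b => Subtype.ext <| funext fun p => congrFun₂ (h p) a b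

end smoothFunctions

open TopologicalSpace smoothFunctions

variable {n : ℕ}

/-- A smooth solution `(g, β)` of the coordinate pluriclosed flow on the open set `U` of
space-time. -/
structure IsPluriclosedSolution (U : Opens (ℝ × (Fin n → ℂ)))
    (g β : ℝ × (Fin n → ℂ) → Matrix (Fin n) (Fin n) ℂ) : Prop where
  contDiffOn_metric : ∀ a b, ContDiffOn ℝ (⊤ : ℕ∞) (fun q => g q a b) U
  contDiffOn_potential : ∀ a b, ContDiffOn ℝ (⊤ : ℕ∞) (fun q => β q a b) U
  posDef : ∀ q ∈ U, (g q).PosDef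
  transpose_potential : ∀ q ∈ U, (β q)ᵀ = -β q
  wdbP_potential : ∀ q ∈ U, ∀ i j k, wdbP k (fun r => β r i j) q = torsionP g i j k q
  dtP_metric : ∀ q ∈ U, ∀ i j,
    dtP (fun r => g r i j) q = -traceChernP g g i j q + torsionSqP g i j q
  dtP_potential : ∀ q ∈ U, ∀ i j, dtP (fun r => β r i j) q = lapBetaP g β i j q

namespace IsPluriclosedSolution

variable {U : Opens (ℝ × (Fin n → ℂ))} {g β : ℝ × (Fin n → ℂ) → Matrix (Fin n) (Fin n) ℂ}
variable (hs : IsPluriclosedSolution U g β)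

/-- The metric as a matrix of smooth functions. -/
def metric : Matrix (Fin n) (Fin n) (smoothFunctions U) := restrictMatrix g hs.contDiffOn_metric

/-- The torsion potential as a matrix of smooth functions. -/
def potential : Matrix (Fin n) (Fin n) (smoothFunctions U) :=
  restrictMatrix β hs.contDiffOn_potential

lemma isUnit_det_metric : IsUnit hs.metric.det := isUnit_det fun p => hs.posDef p p.2

/-- The flow data of a solution: the bundle metric is the generalized metric. -/
def flowData : FlowData (Fin n) (Fin n ⊕ Fin n) (smoothFunctions U) where
  dt := timeDeriv
  d := wirtinger
  db := wirtingerBar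
  d_d := wirtinger_wirtinger
  d_db := wirtinger_wirtingerBar
  db_db := wirtingerBar_wirtingerBar
  dt_d := timeDeriv_wirtinger
  dt_db := timeDeriv_wirtingerBar
  g := hs.metric
  h := hs.metric⁻¹
  G := generalizedMetric hs.metric hs.metric⁻¹ hs.potential hs.potentialᴴ
  H := generalizedMetricInv hs.metric hs.metric⁻¹ hs.potential hs.potentialᴴ
  g_mul_h := mul_nonsing_inv _ hs.isUnit_det_metric
  h_mul_g := nonsing_inv_mul _ hs.isUnit_det_metric
  G_mul_H := generalizedMetric_mul_inv (mul_nonsing_inv _ hs.isUnit_det_metric) _ _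
  H_mul_G := mul_eq_one_comm.mp
    (generalizedMetric_mul_inv (mul_nonsing_inv _ hs.isUnit_det_metric) _ _)

lemma map_evaluation_h (p : U) : hs.flowData.h.map (evaluation p) = (g p)⁻¹ :=
  map_evaluation_inv hs.isUnit_det_metric p

lemma inv_apply (p : U) (a b : Fin n) : (g p)⁻¹ a b = evaluation p (hs.flowData.h a b) :=
  (congrFun₂ (hs.map_evaluation_h p) a b).symm

lemma wdP_metric (i a b : Fin n) (p : U) :
    wdP i (fun q => g q a b) p = evaluation p (wirtinger i (hs.metric a b)) :=
  wdP_eq i (hs.metric a b) (fun _ => rfl) p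

lemma wdbP_metric (i a b : Fin n) (p : U) :
    wdbP i (fun q => g q a b) p = evaluation p (wirtingerBar i (hs.metric a b)) :=
  wdbP_eq i (hs.metric a b) (fun _ => rfl) p

lemma wdP_wdbP_metric (i j a b : Fin n) (p : U) : wdP i (wdbP j fun q => g q a b) p
    = evaluation p (wirtinger i (wirtingerBar j (hs.metric a b))) :=
  wdP_eq i (wirtingerBar j (hs.metric a b)) (hs.wdbP_metric j a b) p

lemma wdbP_potential_eq (i a b : Fin n) (p : U) :
    wdbP i (fun q => β q a b) p = evaluation p (wirtingerBar i (hs.potential a b)) :=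
  wdbP_eq i (hs.potential a b) (fun _ => rfl) p

lemma wdP_wdbP_potential (i j a b : Fin n) (p : U) : wdP i (wdbP j fun q => β q a b) p
    = evaluation p (wirtinger i (wirtingerBar j (hs.potential a b))) :=
  wdP_eq i (wirtingerBar j (hs.potential a b)) (hs.wdbP_potential_eq j a b) p

lemma torsionP_eq (a b c : Fin n) (p : U) :
    torsionP g a b c p = evaluation p (hs.flowData.torsion a b c) := by
  rw [torsionP, hs.wdP_metric, hs.wdP_metric, ← map_sub]
  rfl

lemma torsionSqP_eq (a b : Fin n) (p : U) :
    torsionSqP g a b p = evaluation p (hs.flowData.torsionSq a b) := by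
  simp only [torsionSqP, FlowData.torsionSq, of_apply, hs.torsionP_eq, hs.inv_apply, map_sum,
    map_mul, map_star]
  rfl

lemma neg_traceChernP_eq (a b : Fin n) (p : U) : -traceChernP g g a b p
    = evaluation p ((∑ i, ((hs.flowData.g.map (hs.flowData.d i)).map (hs.flowData.D i)
      - hs.flowData.g.map (hs.flowData.d i) * hs.flowData.h
        * hs.flowData.g.map (hs.flowData.D i))) a b) := by
  rw [FlowData.sum_chern_apply]
  simp only [traceChernP, chernP, hs.wdP_metric, hs.wdbP_metric, hs.wdP_wdbP_metric, hs.inv_apply,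
    map_sum, map_mul, map_sub, ← Finset.sum_neg_distrib]
  refine Finset.sum_congr rfl fun i _ => Finset.sum_congr rfl fun j _ => ?_
  rw [← mul_neg, neg_add, neg_neg, ← sub_eq_add_neg]
  rfl

lemma lapBetaP_eq (a b : Fin n) (p : U) : lapBetaP g β a b p
    = evaluation p ((∑ i, ((hs.potential.map (hs.flowData.d i)).map (hs.flowData.D i)
      - hs.flowData.g.map (hs.flowData.d i) * hs.flowData.h
        * hs.potential.map (hs.flowData.D i)
      - hs.potential.map (hs.flowData.D i)
        * (hs.flowData.g.map (hs.flowData.d i) * hs.flowData.h)ᵀ)) a b) := by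
  rw [FlowData.sum_lap_potential_apply]
  simp only [lapBetaP, nabla2betaP, hs.wdP_metric, hs.wdbP_potential_eq, hs.wdP_wdbP_potential,
    hs.inv_apply, map_sum, map_mul, map_sub]
  rfl

theorem isPluriclosedFlow : hs.flowData.IsPluriclosedFlow hs.potential where
  star_d := star_wirtinger
  star_dt := star_timeDeriv
  isHermitian_g := matrix_ext fun p => (hs.posDef p p.2).1
  G_eq := rfl
  transpose_potential := matrix_ext fun p => hs.transpose_potential p p.2
  db_potential i j k := Subtype.ext <| funext fun p =>
    (hs.wdbP_potential_eq k i j p).symm.trans <|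
      (hs.wdbP_potential p p.2 i j k).trans (hs.torsionP_eq i j k p)
  flow_g := matrix_ext fun p => Matrix.ext fun a b => by
    have flow := hs.dtP_metric p p.2 a b
    rw [hs.neg_traceChernP_eq, hs.torsionSqP_eq, ← map_add,
      dtP_eq (hs.metric a b) fun _ => rfl] at flow
    exact flow
  flow_potential := matrix_ext fun p => Matrix.ext fun a b => by
    have flow := hs.dtP_potential p p.2 a b
    rw [hs.lapBetaP_eq, dtP_eq (hs.potential a b) fun _ => rfl] at flow
    exact flow

end IsPluriclosedSolution

section GenMetric

lemma map_generalizedMetric {ι A C : Type*} [Fintype ι] [CommRing A] [CommRing C] (f : A →+* C)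
    (g h β γ : Matrix ι ι A) : (generalizedMetric g h β γ).map f
      = generalizedMetric (g.map f) (h.map f) (β.map f) (γ.map f) := by
  simp only [generalizedMetric, fromBlocks_map, Matrix.map_add f (map_add f), Matrix.map_mul,
    transpose_map]

lemma genMetric_eq_generalizedMetric {g : Matrix (Fin n) (Fin n) ℂ} (hg : g.PosDef)
    (β : Matrix (Fin n) (Fin n) ℂ) : genMetric g β = generalizedMetric g g⁻¹ β βᴴ := by
  have conj_inv : g⁻¹.map (starRingEnd ℂ) = (g⁻¹)ᵀ :=
    congrArg transpose hg.inv.isHermitian.eq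
  rw [genMetric, conj_inv, generalizedMetric]

lemma genMetric_inv {g : Matrix (Fin n) (Fin n) ℂ} (hg : g.PosDef)
    (β : Matrix (Fin n) (Fin n) ℂ) : (genMetric g β)⁻¹ = generalizedMetricInv g g⁻¹ β βᴴ := by
  rw [genMetric_eq_generalizedMetric hg]
  exact inv_eq_right_inv (generalizedMetric_mul_inv
    (mul_nonsing_inv g ((isUnit_iff_isUnit_det g).1 hg.isUnit)) β βᴴ)

lemma posDef_genMetric {g : Matrix (Fin n) (Fin n) ℂ} (hg : g.PosDef)
    (β : Matrix (Fin n) (Fin n) ℂ) : (genMetric g β).PosDef := by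
  have gh : g * g⁻¹ = 1 := mul_nonsing_inv g ((isUnit_iff_isUnit_det g).1 hg.isUnit)
  have diagonal : (fromBlocks g 0 0 (g⁻¹)ᵀ).PosSemidef := by
    have : Invertible g := hg.isUnit.invertible
    have := (PosDef.fromBlocks₁₁ 0 (g⁻¹)ᵀ hg).2
    simp only [conjTranspose_zero, Matrix.zero_mul, sub_zero] at this
    exact this hg.inv.transpose.posSemidef
  have unipotent : lowerUnipotent βᴴ = (upperUnipotent β)ᴴ := by
    simp [lowerUnipotent, upperUnipotent, fromBlocks_conjTranspose]
  refine (PosSemidef.posDef_iff_isUnit ?_).2 ?_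
  · rw [genMetric_eq_generalizedMetric hg, generalizedMetric_eq, unipotent]
    exact diagonal.mul_mul_conjTranspose_same _
  · rw [genMetric_eq_generalizedMetric hg]
    exact IsUnit.of_mul_eq_one _ (generalizedMetric_mul_inv gh β βᴴ)

lemma re_trace_le_re_trace {κ : Type*} [Fintype κ] {X Y : Matrix κ κ ℂ}
    (h : (Y - X).PosSemidef) : (trace X).re ≤ (trace Y).re := by
  have := (Complex.le_def.1 h.trace_nonneg).1
  rw [trace_sub, Complex.sub_re, Complex.zero_re] at this
  linarith

lemma trace_fromBlocks {μ ν A : Type*} [Fintype μ] [Fintype ν] [AddCommMonoid A]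
    (P : Matrix μ μ A) (Q : Matrix μ ν A) (X : Matrix ν μ A) (Y : Matrix ν ν A) :
    trace (fromBlocks P Q X Y) = trace P + trace Y :=
  Fintype.sum_sum_type _

lemma re_trace_inv_le_re_trace_genMetric {g : Matrix (Fin n) (Fin n) ℂ} (hg : g.PosDef)
    (β : Matrix (Fin n) (Fin n) ℂ) : (trace g⁻¹).re ≤ (trace (genMetric g β)).re := by
  have upper_left : (g + β * (g⁻¹)ᵀ * βᴴ).PosSemidef :=
    hg.posSemidef.add (hg.inv.transpose.posSemidef.mul_mul_conjTranspose_same β)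
  have := (Complex.le_def.1 upper_left.trace_nonneg).1
  rw [Complex.zero_re] at this
  rw [genMetric_eq_generalizedMetric hg, generalizedMetric, trace_fromBlocks, Complex.add_re,
    trace_transpose]
  exact le_add_of_nonneg_left this

open scoped MatrixOrder Matrix.Norms.L2Operator in
lemma posSemidef_inv_sub_inv {κ : Type*} [Fintype κ] [DecidableEq κ] {X Y : Matrix κ κ ℂ}
    (hX : X.PosDef) (h : (Y - X).PosSemidef) : (X⁻¹ - Y⁻¹).PosSemidef := by
  have hY : Y.PosDef := by simpa using hX.add_posSemidef h
  have := CStarAlgebra.inv_le_inv (a := hX.isUnit.unit) (b := hY.isUnit.unit) hX.posSemidef.nonneg h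
  rw [coe_units_inv, coe_units_inv] at this
  exact this

lemma re_trace_le_of_posSemidef_smul_sub {κ : Type*} [Fintype κ] {X Y : Matrix κ κ ℂ} {Λ b : ℝ}
    (hΛ : 0 ≤ Λ) (h : ((Λ : ℂ) • X - Y).PosSemidef) (hX : (trace X).re ≤ b) :
    (trace Y).re ≤ Λ * b := by
  refine (re_trace_le_re_trace h).trans ?_
  rw [trace_smul, smul_eq_mul, Complex.re_ofReal_mul]
  gcongr

lemma re_trace_inv_le_of_posSemidef_sub_smul {κ : Type*} [Fintype κ] [DecidableEq κ]
    {X Y : Matrix κ κ ℂ} {Λ b : ℝ} (hΛ : 0 < Λ) (hX : X.PosDef)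
    (h : (Y - (Λ : ℂ)⁻¹ • X).PosSemidef) (trX : (trace X⁻¹).re ≤ b) :
    (trace Y⁻¹).re ≤ Λ * b := by
  have hΛ' : (0 : ℂ) < (Λ : ℂ)⁻¹ := by
    rw [← Complex.ofReal_inv]
    exact_mod_cast inv_pos.2 hΛ
  have smul_inv : ((Λ : ℂ)⁻¹ • X)⁻¹ = (Λ : ℂ) • X⁻¹ := by
    refine inv_eq_right_inv ?_
    rw [smul_mul_smul_comm, inv_mul_cancel₀ (Complex.ofReal_ne_zero.2 hΛ.ne'), one_smul,
      mul_nonsing_inv X ((isUnit_iff_isUnit_det X).1 hX.isUnit)]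
  have := posSemidef_inv_sub_inv (hX.smul hΛ') h
  rw [smul_inv] at this
  exact re_trace_le_of_posSemidef_smul_sub hΛ.le this trX

lemma trace_mul_mul_conjTranspose_mul {κ A : Type*} [Fintype κ] [CommRing A] [StarRing A]
    (V X W Y : Matrix κ κ A) : trace (V * X * Wᴴ * Y)
      = ∑ a, ∑ b, ∑ d, ∑ e, Y b a * X d e * V a d * star (W b e) := by
  rw [trace]
  refine Finset.sum_congr rfl fun a _ => ?_
  rw [diag_apply, Matrix.mul_apply]
  refine Finset.sum_congr rfl fun b _ => ?_
  rw [Matrix.mul_apply, Finset.sum_comm, Finset.sum_mul]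
  refine Finset.sum_congr rfl fun e _ => ?_
  rw [Matrix.mul_apply, Finset.sum_mul, Finset.sum_mul]
  refine Finset.sum_congr rfl fun d _ => ?_
  rw [conjTranspose_apply]
  ring

lemma upsNormP_eq_traceForm {κ : Type*} [Fintype κ] [DecidableEq κ]
    (g : ℝ × (Fin n → ℂ) → Matrix (Fin n) (Fin n) ℂ) (G G' H : ℝ × (Fin n → ℂ) → Matrix κ κ ℂ)
    (p : ℝ × (Fin n → ℂ)) : upsNormP g G G' H p = traceForm (g p)⁻¹ (G p)⁻¹ (H p)
      (fun i => wdPM i G p * (G p)⁻¹ - wdPM i G' p * (G' p)⁻¹)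
      (fun i => wdPM i G p * (G p)⁻¹ - wdPM i G' p * (G' p)⁻¹) := by
  have UpsP_eq (i : Fin n) (a d : κ) : UpsP G G' i a d p
      = (wdPM i G p * (G p)⁻¹ - wdPM i G' p * (G' p)⁻¹) a d := by
    simp only [UpsP, Finset.sum_sub_distrib, Matrix.sub_apply, Matrix.mul_apply, wdPM, of_apply]
  simp only [upsNormP, traceForm, UpsP_eq, trace_mul_mul_conjTranspose_mul, Finset.mul_sum,
    starRingEnd_apply]
  refine Finset.sum_congr rfl fun i _ => Finset.sum_congr rfl fun j _ => Finset.sum_congr rfl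
    fun a _ => Finset.sum_congr rfl fun b _ => Finset.sum_congr rfl fun d _ =>
      Finset.sum_congr rfl fun e _ => ?_
  ring

variable {U : Opens (ℝ × (Fin n → ℂ))}

lemma map_evaluation_generalizedMetric {g β : Matrix (Fin n) (Fin n) (smoothFunctions U)}
    (hg : ∀ p, (g.map (evaluation p)).PosDef) (p : U) :
    (generalizedMetric g g⁻¹ β βᴴ).map (evaluation p)
      = genMetric (g.map (evaluation p)) (β.map (evaluation p)) := by
  rw [genMetric_eq_generalizedMetric (hg p), ← map_evaluation_inv (isUnit_det hg)]
  exact map_generalizedMetric (evaluation p).toRingHom g g⁻¹ β βᴴ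

lemma wdPM_eq {κ : Type*} (i : Fin n) {F : ℝ × (Fin n → ℂ) → Matrix κ κ ℂ}
    {M : Matrix κ κ (smoothFunctions U)} (hM : ∀ p : U, M.map (evaluation p) = F p) (p : U) :
    wdPM i F p = (M.map (wirtinger i)).map (evaluation p) :=
  Matrix.ext fun a b => wdP_eq i (M a b) (fun q => (congrFun₂ (hM q) a b).symm) p

namespace IsPluriclosedSolution

variable {g β : ℝ × (Fin n → ℂ) → Matrix (Fin n) (Fin n) ℂ} (hs : IsPluriclosedSolution U g β)

lemma map_evaluation_G (p : U) : hs.flowData.G.map (evaluation p) = genMetric (g p) (β p) :=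
  map_evaluation_generalizedMetric (g := hs.metric) (fun q => hs.posDef q q.2) p

lemma map_evaluation_H (p : U) : hs.flowData.H.map (evaluation p) = (genMetric (g p) (β p))⁻¹ := by
  refine (inv_eq_right_inv ?_).symm
  rw [← hs.map_evaluation_G, ← Matrix.map_mul, hs.flowData.G_mul_H,
    Matrix.map_one _ (map_zero _) (map_one _)]

lemma map_evaluation_Γ (i : Fin n) (p : U) : (hs.flowData.Γ i).map (evaluation p)
    = wdPM i (fun q => genMetric (g q) (β q)) p * (genMetric (g p) (β p))⁻¹ := by
  rw [wdPM_eq i hs.map_evaluation_G, ← hs.map_evaluation_H, ← Matrix.map_mul]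
  rfl

end IsPluriclosedSolution

end GenMetric

section EntrywiseNorm

attribute [local instance] Matrix.normedAddCommGroup

variable {ι μ κ ν : Type*} [Fintype ι] [Fintype μ] [Fintype κ] [Fintype ν]

lemma norm_mul_le_card_mul (M : Matrix μ κ ℂ) (P : Matrix κ ν ℂ) :
    ‖M * P‖ ≤ Fintype.card κ * (‖M‖ * ‖P‖) := by
  refine (Matrix.norm_le_iff (by positivity)).2 fun a b => ?_
  calc ‖(M * P) a b‖ ≤ ∑ c, ‖M a c * P c b‖ := norm_sum_le _ _
    _ ≤ ∑ _c : κ, ‖M‖ * ‖P‖ := by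
      gcongr with c
      rw [norm_mul]
      gcongr <;> exact norm_entry_le_entrywise_sup_norm _
    _ = Fintype.card κ * (‖M‖ * ‖P‖) := by simp

lemma norm_fromBlocks_le {P : Matrix ι κ ℂ} {Q : Matrix ι ν ℂ} {X : Matrix μ κ ℂ}
    {Y : Matrix μ ν ℂ} {b : ℝ} (hP : ‖P‖ ≤ b) (hQ : ‖Q‖ ≤ b) (hX : ‖X‖ ≤ b) (hY : ‖Y‖ ≤ b) :
    ‖fromBlocks P Q X Y‖ ≤ b := by
  refine (Matrix.norm_le_iff ((norm_nonneg P).trans hP)).2 ?_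
  rintro (a | a) (c | c)
  exacts [(norm_entry_le_entrywise_sup_norm P).trans hP,
    (norm_entry_le_entrywise_sup_norm Q).trans hQ, (norm_entry_le_entrywise_sup_norm X).trans hX,
    (norm_entry_le_entrywise_sup_norm Y).trans hY]

lemma norm_trace_le_card_mul (M : Matrix κ κ ℂ) : ‖trace M‖ ≤ Fintype.card κ * ‖M‖ :=
  calc ‖trace M‖ ≤ ∑ a, ‖M a a‖ := norm_sum_le _ _
    _ ≤ ∑ _a : κ, ‖M‖ := by gcongr with a; exact norm_entry_le_entrywise_sup_norm _
    _ = Fintype.card κ * ‖M‖ := by simp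

/-- A bound for the entries of a generalized metric, of its inverse and of its first derivatives,
in terms of the number `N` of coordinates and a bound `B` for the entries of the metric, of its
inverse, of the torsion potential and of their first derivatives. -/
def generalizedMetricBound (N B : ℝ) : ℝ := B + 2 * N * B ^ 2 + 3 * N ^ 2 * B ^ 3

variable {g h β γ : Matrix ι ι ℂ} {B : ℝ}

lemma norm_mul_le_of_norm_le {M P : Matrix ι ι ℂ} {b c : ℝ} (hM : ‖M‖ ≤ b) (hP : ‖P‖ ≤ c) :
    ‖M * P‖ ≤ Fintype.card ι * (b * c) :=
  (norm_mul_le_card_mul M P).trans (by have := (norm_nonneg M).trans hM; gcongr)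

lemma norm_generalizedMetric_le (hg : ‖g‖ ≤ B) (hh : ‖h‖ ≤ B) (hβ : ‖β‖ ≤ B) (hγ : ‖γ‖ ≤ B) :
    ‖generalizedMetric g h β γ‖ ≤ generalizedMetricBound (Fintype.card ι) B := by
  have hB : 0 ≤ B := (norm_nonneg g).trans hg
  have hhT : ‖hᵀ‖ ≤ B := (Matrix.norm_transpose h).trans_le hh
  have hβh := norm_mul_le_of_norm_le hβ hhT
  have hhγ := norm_mul_le_of_norm_le hhT hγ
  have hβhγ := norm_mul_le_of_norm_le hβh hγ
  have h₁₁ := norm_add_le_of_le hg hβhγ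
  have p₂ : 0 ≤ Fintype.card ι * B ^ 2 := by positivity
  have p₃ : 0 ≤ Fintype.card ι ^ 2 * B ^ 3 := by positivity
  unfold generalizedMetricBound
  exact norm_fromBlocks_le (by linarith) (by linarith) (by linarith) (by linarith)

lemma norm_generalizedMetricInv_le (hg : ‖g‖ ≤ B) (hh : ‖h‖ ≤ B) (hβ : ‖β‖ ≤ B) (hγ : ‖γ‖ ≤ B) :
    ‖generalizedMetricInv g h β γ‖ ≤ generalizedMetricBound (Fintype.card ι) B := by
  have hB : 0 ≤ B := (norm_nonneg g).trans hg
  have hhβ : ‖-(h * β)‖ ≤ _ := (norm_neg (h * β)).trans_le (norm_mul_le_of_norm_le hh hβ)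
  have hγh := norm_mul_le_of_norm_le hγ hh
  have hγh' : ‖-(γ * h)‖ ≤ _ := (norm_neg (γ * h)).trans_le hγh
  have h₂₂ := norm_add_le_of_le ((Matrix.norm_transpose g).trans_le hg)
    (norm_mul_le_of_norm_le hγh hβ)
  have p₂ : 0 ≤ Fintype.card ι * B ^ 2 := by positivity
  have p₃ : 0 ≤ Fintype.card ι ^ 2 * B ^ 3 := by positivity
  unfold generalizedMetricBound
  exact norm_fromBlocks_le (by linarith) (by linarith) (by linarith) (by linarith)

lemma norm_map_derivation_generalizedMetric_le {A : Type*} [CommRing A] [Algebra ℂ A]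
    {g h β γ : Matrix ι ι A} (e : A →ₐ[ℂ] ℂ) (δ : Derivation ℂ A A)
    (hh : ‖h.map e‖ ≤ B) (hβ : ‖β.map e‖ ≤ B) (hγ : ‖γ.map e‖ ≤ B)
    (dg : ‖(g.map δ).map e‖ ≤ B) (dh : ‖(h.map δ).map e‖ ≤ B) (dβ : ‖(β.map δ).map e‖ ≤ B)
    (dγ : ‖(γ.map δ).map e‖ ≤ B) :
    ‖((generalizedMetric g h β γ).map δ).map e‖ ≤ generalizedMetricBound (Fintype.card ι) B := by
  have hB : 0 ≤ B := (norm_nonneg _).trans hh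
  have hhT : ‖(h.map e)ᵀ‖ ≤ B := (Matrix.norm_transpose _).trans_le hh
  have dhT : ‖((h.map δ).map e)ᵀ‖ ≤ B := (Matrix.norm_transpose _).trans_le dh
  have h₁₂ := norm_add_le_of_le (norm_mul_le_of_norm_le dβ hhT) (norm_mul_le_of_norm_le hβ dhT)
  have h₂₁ := norm_add_le_of_le (norm_mul_le_of_norm_le dhT hγ) (norm_mul_le_of_norm_le hhT dγ)
  have h₁₁ := norm_add_le_of_le dg (norm_add_le_of_le (norm_mul_le_of_norm_le h₁₂ hγ)
    (norm_mul_le_of_norm_le (norm_mul_le_of_norm_le hβ hhT) dγ))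
  have p₂ : 0 ≤ Fintype.card ι * B ^ 2 := by positivity
  have p₃ : 0 ≤ Fintype.card ι ^ 2 * B ^ 3 := by positivity
  unfold generalizedMetricBound
  simp only [generalizedMetric, fromBlocks_map, map_derivation_add, map_derivation_mul,
    Matrix.map_add _ (map_add e), Matrix.map_mul, transpose_map]
  exact norm_fromBlocks_le (by linarith) (by linarith) (by linarith) (by linarith)

open scoped Kronecker in
lemma re_traceForm_le {σ : Type*} [Fintype σ] {K : Matrix σ σ ℂ} {H G : Matrix κ κ ℂ}
    (hK : K.PosSemidef) (hH : H.PosSemidef) (hG : G.PosSemidef) {M b : ℝ}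
    (trK : (trace K).re ≤ M) (trH : (trace H).re ≤ M) (trG : (trace G).re ≤ M)
    {v : σ → Matrix κ κ ℂ} (hv : ∀ s, ‖v s‖ ≤ b) : (traceForm K H G v v).re
      ≤ M ^ 3 * (Fintype.card σ * Fintype.card κ ^ 2 * b ^ 2) := by
  set u : σ × κ × κ → ℂ := fun p => vec (v p.1) p.2
  have normSq_le : (star u ⬝ᵥ u).re ≤ Fintype.card σ * Fintype.card κ ^ 2 * b ^ 2 := by
    have entry_le (p : σ × κ × κ) : Complex.normSq (u p) ≤ b ^ 2 := by
      rw [Complex.normSq_eq_norm_sq]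
      gcongr
      exact (norm_entry_le_entrywise_sup_norm (v p.1)).trans (hv p.1)
    calc (star u ⬝ᵥ u).re = ∑ p, Complex.normSq (u p) := by
          simp [dotProduct, Complex.normSq_apply]
      _ ≤ ∑ _p : σ × κ × κ, b ^ 2 := by gcongr with p; exact entry_le p
      _ = Fintype.card σ * Fintype.card κ ^ 2 * b ^ 2 := by
        simp only [Finset.sum_const, Finset.card_univ, Fintype.card_prod, nsmul_eq_mul,
          Nat.cast_mul]
        ring
  have hKGH := hK.kronecker (hG.transpose.kronecker hH)
  have le_trace := dotProduct_mulVec_le_trace_mul hKGH u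
  rw [← traceForm_eq_dotProduct, trace_kronecker, trace_kronecker, trace_transpose,
    mul_assoc, mul_assoc] at le_trace
  have nonneg₀ : 0 ≤ star u ⬝ᵥ u := dotProduct_star_self_nonneg u
  have nonneg₁ := mul_nonneg hH.trace_nonneg nonneg₀
  have nonneg₂ := mul_nonneg hG.trace_nonneg nonneg₁
  have hM : 0 ≤ M := (Complex.le_def.1 hK.trace_nonneg).1.trans trK
  calc (traceForm K H G v v).re
      ≤ (trace K * (trace G * (trace H * (star u ⬝ᵥ u)))).re := (Complex.le_def.1 le_trace).1
    _ ≤ M * (trace G * (trace H * (star u ⬝ᵥ u))).re :=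
        re_mul_le_of_nonneg hK.trace_nonneg trK (Complex.le_def.1 nonneg₂).1
    _ ≤ M * (M * (M * (star u ⬝ᵥ u).re)) := by
        gcongr
        refine (re_mul_le_of_nonneg hG.trace_nonneg trG (Complex.le_def.1 nonneg₁).1).trans ?_
        gcongr
        exact re_mul_le_of_nonneg hH.trace_nonneg trH (Complex.le_def.1 nonneg₀).1
    _ ≤ M * (M * (M * (Fintype.card σ * Fintype.card κ ^ 2 * b ^ 2))) := by gcongr
    _ = M ^ 3 * (Fintype.card σ * Fintype.card κ ^ 2 * b ^ 2) := by ring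

lemma re_trace_generalizedMetric_le (hg : ‖g‖ ≤ B) (hh : ‖h‖ ≤ B) (hβ : ‖β‖ ≤ B)
    (hγ : ‖γ‖ ≤ B) : (trace (generalizedMetric g h β γ)).re
      ≤ 2 * Fintype.card ι * generalizedMetricBound (Fintype.card ι) B := by
  refine (Complex.re_le_norm _).trans ((norm_trace_le_card_mul _).trans ?_)
  rw [Fintype.card_sum, Nat.cast_add, ← two_mul]
  gcongr
  exact norm_generalizedMetric_le hg hh hβ hγ

lemma re_trace_generalizedMetricInv_le (hg : ‖g‖ ≤ B) (hh : ‖h‖ ≤ B) (hβ : ‖β‖ ≤ B)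
    (hγ : ‖γ‖ ≤ B) : (trace (generalizedMetricInv g h β γ)).re
      ≤ 2 * Fintype.card ι * generalizedMetricBound (Fintype.card ι) B := by
  refine (Complex.re_le_norm _).trans ((norm_trace_le_card_mul _).trans ?_)
  rw [Fintype.card_sum, Nat.cast_add, ← two_mul]
  gcongr
  exact norm_generalizedMetricInv_le hg hh hβ hγ

/-- `f` and its first Wirtinger derivatives are bounded by `B` at `z`. -/
def BoundedDerivs1 (B : ℝ) (f : (Fin n → ℂ) → ℂ) (z : Fin n → ℂ) : Prop :=
  ‖f z‖ ≤ B ∧ ∀ i, ‖wd i f z‖ ≤ B ∧ ‖wdb i f z‖ ≤ B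

/-- A smooth background `(g, β)` on the ball of radius `R`: the entries of `g`, `g⁻¹` and `β` and
their first Wirtinger derivatives are bounded by `B`. -/
structure IsBoundedBackground (B R : ℝ) (g β : (Fin n → ℂ) → Matrix (Fin n) (Fin n) ℂ) :
    Prop where
  contDiffOn_metric : ∀ a b, ContDiffOn ℝ (⊤ : ℕ∞) (fun z => g z a b) (eball R)
  contDiffOn_potential : ∀ a b, ContDiffOn ℝ (⊤ : ℕ∞) (fun z => β z a b) (eball R)
  posDef : ∀ z ∈ eball R, (g z).PosDef
  boundedDerivs_metric : ∀ z ∈ eball R, ∀ a b, BoundedDerivs1 B (fun w => g w a b) z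
  boundedDerivs_inv : ∀ z ∈ eball R, ∀ a b, BoundedDerivs1 B (fun w => (g w)⁻¹ a b) z
  boundedDerivs_potential : ∀ z ∈ eball R, ∀ a b, BoundedDerivs1 B (fun w => β w a b) z

lemma fderiv_apply_of_comp_snd {E F : Type*} [NormedAddCommGroup E] [NormedSpace ℝ E]
    [NormedAddCommGroup F] [NormedSpace ℝ F] {f : E → F} {p : ℝ × E}
    (hf : DifferentiableAt ℝ (fun q : ℝ × E => f q.2) p) (v : E) :
    fderiv ℝ f p.2 v = fderiv ℝ (fun q : ℝ × E => f q.2) p (0, v) := by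
  have slice : HasFDerivAt (fun z => (p.1, z)) (ContinuousLinearMap.inr ℝ ℝ E) p.2 :=
    hasFDerivAt_prodMk_right _ _
  have : HasFDerivAt f _ p.2 := HasFDerivAt.comp (g := fun q : ℝ × E => f q.2) p.2
    hf.hasFDerivAt slice
  rw [this.fderiv]
  rfl

section Background

variable {U : Opens (ℝ × (Fin n → ℂ))} {F : (Fin n → ℂ) → ℂ} {f : smoothFunctions U}

lemma differentiableAt_comp_snd (hF : ∀ p : U, F p.1.2 = f.1 p) (p : U) :
    DifferentiableAt ℝ (fun q : ℝ × (Fin n → ℂ) => F q.2) p.1 := by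
  refine (differentiableAt f p).congr_of_eventuallyEq ?_
  filter_upwards [U.isOpen.mem_nhds p.2] with q hq
  exact (hF ⟨q, hq⟩).trans (zeroExtend_apply f.1 ⟨q, hq⟩).symm

lemma wd_eq (i : Fin n) (hF : ∀ p : U, F p.1.2 = f.1 p) (p : U) :
    wd i F p.1.2 = evaluation p (wirtinger i f) := by
  rw [evaluation_apply, ← wdP_eq i f (F := fun q => F q.2) hF p, wd, wdP,
    fderiv_apply_of_comp_snd (differentiableAt_comp_snd hF p),
    fderiv_apply_of_comp_snd (differentiableAt_comp_snd hF p)]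

lemma wdb_eq (i : Fin n) (hF : ∀ p : U, F p.1.2 = f.1 p) (p : U) :
    wdb i F p.1.2 = evaluation p (wirtingerBar i f) := by
  rw [evaluation_apply, ← wdbP_eq i f (F := fun q => F q.2) hF p, wdb, wdbP,
    fderiv_apply_of_comp_snd (differentiableAt_comp_snd hF p),
    fderiv_apply_of_comp_snd (differentiableAt_comp_snd hF p)]

lemma norm_map_wirtinger_le {M : Matrix (Fin n) (Fin n) (smoothFunctions U)}
    {X : (Fin n → ℂ) → Matrix (Fin n) (Fin n) ℂ} (hM : ∀ p : U, M.map (evaluation p) = X p.1.2)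
    {p : U} {B : ℝ} (hB : 0 ≤ B) (hX : ∀ a b, BoundedDerivs1 B (fun w => X w a b) p.1.2)
    (i : Fin n) : ‖(M.map (wirtinger i)).map (evaluation p)‖ ≤ B := by
  refine (Matrix.norm_le_iff hB).2 fun a b => ?_
  exact (congrArg norm (wd_eq i (fun q => (congrFun₂ (hM q) a b).symm) p)).symm.trans_le
    ((hX a b).2 i).1

lemma norm_map_wirtingerBar_le {M : Matrix (Fin n) (Fin n) (smoothFunctions U)}
    {X : (Fin n → ℂ) → Matrix (Fin n) (Fin n) ℂ} (hM : ∀ p : U, M.map (evaluation p) = X p.1.2)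
    {p : U} {B : ℝ} (hB : 0 ≤ B) (hX : ∀ a b, BoundedDerivs1 B (fun w => X w a b) p.1.2)
    (i : Fin n) : ‖(M.map (wirtingerBar i)).map (evaluation p)‖ ≤ B := by
  refine (Matrix.norm_le_iff hB).2 fun a b => ?_
  exact (congrArg norm (wdb_eq i (fun q => (congrFun₂ (hM q) a b).symm) p)).symm.trans_le
    ((hX a b).2 i).2

lemma norm_map_wirtinger_generalizedMetric_le {M N : Matrix (Fin n) (Fin n) (smoothFunctions U)}
    {g β : (Fin n → ℂ) → Matrix (Fin n) (Fin n) ℂ} (hM : ∀ p : U, M.map (evaluation p) = g p.1.2)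
    (det : IsUnit M.det) (hN : ∀ p : U, N.map (evaluation p) = β p.1.2) {p : U} {B : ℝ}
    (hB : 0 ≤ B) (hg : ∀ a b, BoundedDerivs1 B (fun w => g w a b) p.1.2)
    (hg' : ∀ a b, BoundedDerivs1 B (fun w => (g w)⁻¹ a b) p.1.2)
    (hβ : ∀ a b, BoundedDerivs1 B (fun w => β w a b) p.1.2) (i : Fin n) :
    ‖((generalizedMetric M M⁻¹ N Nᴴ).map (wirtinger i)).map (evaluation p)‖
      ≤ generalizedMetricBound n B := by
  have hM' (q : U) : M⁻¹.map (evaluation q) = (g q.1.2)⁻¹ := by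
    rw [map_evaluation_inv det, hM]
  have inv_le : ‖M⁻¹.map (evaluation p)‖ ≤ B := by
    rw [hM']
    exact (Matrix.norm_le_iff hB).2 fun a b => (hg' a b).1
  have potential_le : ‖N.map (evaluation p)‖ ≤ B := by
    rw [hN]
    exact (Matrix.norm_le_iff hB).2 fun a b => (hβ a b).1
  have conj_le : ‖Nᴴ.map (evaluation p)‖ ≤ B :=
    (Matrix.norm_conjTranspose (N.map (evaluation p))).trans_le potential_le
  have wirtinger_conj : (Nᴴ.map (wirtinger i)).map (evaluation p)
      = ((N.map (wirtingerBar i)).map (evaluation p))ᴴ := by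
    ext a b
    change evaluation p (wirtinger i (star (N b a)))
      = star (evaluation p (wirtingerBar i (N b a)))
    rw [← map_star, ← star_star (wirtinger i _), star_wirtinger, star_star]
  have deriv_conj_le : ‖(Nᴴ.map (wirtinger i)).map (evaluation p)‖ ≤ B := by
    rw [wirtinger_conj, Matrix.norm_conjTranspose]
    exact norm_map_wirtingerBar_le hN hB hβ i
  have bound := norm_map_derivation_generalizedMetric_le (evaluation p).toAlgHom (wirtinger i)
    inv_le potential_le conj_le (norm_map_wirtinger_le hM hB hg i)
    (norm_map_wirtinger_le hM' hB hg' i) (norm_map_wirtinger_le hN hB hβ i) deriv_conj_le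
  rwa [Fintype.card_fin] at bound

end Background

namespace IsBoundedBackground

variable {B R : ℝ} {g β : (Fin n → ℂ) → Matrix (Fin n) (Fin n) ℂ} {z : Fin n → ℂ}

lemma norm_metric_le (hb : IsBoundedBackground B R g β) (hB : 0 ≤ B) (hz : z ∈ eball R) :
    ‖g z‖ ≤ B :=
  (Matrix.norm_le_iff hB).2 fun a b => (hb.boundedDerivs_metric z hz a b).1

lemma norm_inv_le (hb : IsBoundedBackground B R g β) (hB : 0 ≤ B) (hz : z ∈ eball R) :
    ‖(g z)⁻¹‖ ≤ B :=
  (Matrix.norm_le_iff hB).2 fun a b => (hb.boundedDerivs_inv z hz a b).1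

lemma norm_potential_le (hb : IsBoundedBackground B R g β) (hB : 0 ≤ B) (hz : z ∈ eball R) :
    ‖β z‖ ≤ B :=
  (Matrix.norm_le_iff hB).2 fun a b => (hb.boundedDerivs_potential z hz a b).1

lemma norm_conjTranspose_potential_le (hb : IsBoundedBackground B R g β) (hB : 0 ≤ B)
    (hz : z ∈ eball R) : ‖(β z)ᴴ‖ ≤ B :=
  (Matrix.norm_conjTranspose _).trans_le (hb.norm_potential_le hB hz)

lemma re_trace_genMetric_le (hb : IsBoundedBackground B R g β) (hB : 0 ≤ B) (hz : z ∈ eball R) :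
    (trace (genMetric (g z) (β z))).re ≤ 2 * n * generalizedMetricBound n B := by
  rw [genMetric_eq_generalizedMetric (hb.posDef z hz)]
  simpa only [Fintype.card_fin] using re_trace_generalizedMetric_le (hb.norm_metric_le hB hz)
    (hb.norm_inv_le hB hz) (hb.norm_potential_le hB hz) (hb.norm_conjTranspose_potential_le hB hz)

lemma re_trace_genMetric_inv_le (hb : IsBoundedBackground B R g β) (hB : 0 ≤ B)
    (hz : z ∈ eball R) :
    (trace (genMetric (g z) (β z))⁻¹).re ≤ 2 * n * generalizedMetricBound n B := by
  rw [genMetric_inv (hb.posDef z hz)]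
  simpa only [Fintype.card_fin] using re_trace_generalizedMetricInv_le (hb.norm_metric_le hB hz)
    (hb.norm_inv_le hB hz) (hb.norm_potential_le hB hz) (hb.norm_conjTranspose_potential_le hB hz)

lemma norm_genMetric_inv_le (hb : IsBoundedBackground B R g β) (hB : 0 ≤ B) (hz : z ∈ eball R) :
    ‖(genMetric (g z) (β z))⁻¹‖ ≤ generalizedMetricBound n B := by
  rw [genMetric_inv (hb.posDef z hz)]
  simpa only [Fintype.card_fin] using norm_generalizedMetricInv_le (hb.norm_metric_le hB hz)
    (hb.norm_inv_le hB hz) (hb.norm_potential_le hB hz) (hb.norm_conjTranspose_potential_le hB hz)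

variable {U : Opens (ℝ × (Fin n → ℂ))}

lemma norm_wdPM_genMetric_le (hb : IsBoundedBackground B R g β) (hB : 0 ≤ B)
    (hU : ∀ p ∈ U, p.2 ∈ eball R) (i : Fin n) {p : ℝ × (Fin n → ℂ)} (hp : p ∈ U) :
    ‖wdPM i (fun q => genMetric (g q.2) (β q.2)) p‖ ≤ generalizedMetricBound n B := by
  have sg (a b : Fin n) : ContDiffOn ℝ (⊤ : ℕ∞) (fun q : ℝ × (Fin n → ℂ) => g q.2 a b) U :=
    (hb.contDiffOn_metric a b).comp contDiff_snd.contDiffOn hU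
  have sβ (a b : Fin n) : ContDiffOn ℝ (⊤ : ℕ∞) (fun q : ℝ × (Fin n → ℂ) => β q.2 a b) U :=
    (hb.contDiffOn_potential a b).comp contDiff_snd.contDiffOn hU
  have pM (q : U) : ((restrictMatrix _ sg).map (evaluation q)).PosDef := hb.posDef _ (hU q q.2)
  have hz : p.2 ∈ eball R := hU p hp
  rw [wdPM_eq i (map_evaluation_generalizedMetric (β := restrictMatrix _ sβ) pM) ⟨p, hp⟩]
  exact norm_map_wirtinger_generalizedMetric_le (fun _ => rfl) (isUnit_det pM) (fun _ => rfl) hB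
    (hb.boundedDerivs_metric _ hz) (hb.boundedDerivs_inv _ hz) (hb.boundedDerivs_potential _ hz) i

lemma norm_connection_le (hb : IsBoundedBackground B R g β) (hB : 0 ≤ B)
    (hU : ∀ p ∈ U, p.2 ∈ eball R) (i : Fin n) {p : ℝ × (Fin n → ℂ)} (hp : p ∈ U) :
    ‖wdPM i (fun q => genMetric (g q.2) (β q.2)) p * (genMetric (g p.2) (β p.2))⁻¹‖
      ≤ 2 * n * generalizedMetricBound n B ^ 2 := by
  refine (norm_mul_le_of_norm_le (hb.norm_wdPM_genMetric_le hB hU i hp)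
    (hb.norm_genMetric_inv_le hB (hU p hp))).trans_eq ?_
  simp only [Fintype.card_sum, Fintype.card_fin, Nat.cast_add]
  ring

lemma re_traceForm_connection_le (hb : IsBoundedBackground B R g β) (hB : 0 ≤ B)
    (hU : ∀ p ∈ U, p.2 ∈ eball R) {p : ℝ × (Fin n → ℂ)} (hp : p ∈ U) {K : Matrix (Fin n) (Fin n) ℂ}
    {G H : Matrix (Fin n ⊕ Fin n) (Fin n ⊕ Fin n) ℂ} (hK : K.PosSemidef) (hH : H.PosSemidef)
    (hG : G.PosSemidef) {M : ℝ} (trK : (trace K).re ≤ M) (trH : (trace H).re ≤ M)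
    (trG : (trace G).re ≤ M) :
    (traceForm K H G
      (fun i => wdPM i (fun q => genMetric (g q.2) (β q.2)) p * (genMetric (g p.2) (β p.2))⁻¹)
      fun i => wdPM i (fun q => genMetric (g q.2) (β q.2)) p * (genMetric (g p.2) (β p.2))⁻¹).re
      ≤ M ^ 3 * (n * (2 * n) ^ 2 * (2 * n * generalizedMetricBound n B ^ 2) ^ 2) := by
  have := re_traceForm_le hK hH hG trK trH trG fun i => hb.norm_connection_le hB hU i hp
  simpa only [Fintype.card_sum, Fintype.card_fin, Nat.cast_add, ← two_mul (n : ℝ)] using this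

end IsBoundedBackground

end EntrywiseNorm

lemma inv_min_sq_le {t : ℝ} (ht : 0 < t) (R : ℝ) : (min t (R ^ 2))⁻¹ ≤ 1 / t + R⁻¹ ^ 2 := by
  rcases min_choice t (R ^ 2) with h | h <;> rw [h]
  · rw [one_div]
    exact le_add_of_nonneg_right (sq_nonneg _)
  · rw [← inv_pow]
    exact le_add_of_nonneg_left (by positivity)

section Solutions

variable {U : Opens (ℝ × (Fin n → ℂ))} {g β : ℝ × (Fin n → ℂ) → Matrix (Fin n) (Fin n) ℂ}
variable {g' β' : (Fin n → ℂ) → Matrix (Fin n) (Fin n) ℂ} {B R Λ M : ℝ}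

namespace IsPluriclosedSolution

lemma isBoundedFlow (hs : IsPluriclosedSolution U g β) (hb : IsBoundedBackground B R g' β')
    (hU : ∀ p ∈ U, p.2 ∈ eball R) (hB : 0 ≤ B) (hΛ : 0 < Λ)
    (hlower : ∀ q ∈ U,
      (genMetric (g q) (β q) - (Λ : ℂ)⁻¹ • genMetric (g' q.2) (β' q.2)).PosSemidef)
    (hupper : ∀ q ∈ U,
      ((Λ : ℂ) • genMetric (g' q.2) (β' q.2) - genMetric (g q) (β q)).PosSemidef)
    (hM : Λ * (2 * n * generalizedMetricBound n B) ≤ M) : hs.flowData.IsBoundedFlow M := by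
  have trace_G_le (p : U) : (trace (genMetric (g p) (β p))).re ≤ M :=
    (re_trace_le_of_posSemidef_smul_sub hΛ.le (hupper p p.2)
      (hb.re_trace_genMetric_le hB (hU p p.2))).trans hM
  have trace_H_le (p : U) : (trace (genMetric (g p) (β p))⁻¹).re ≤ M :=
    (re_trace_inv_le_of_posSemidef_sub_smul hΛ (posDef_genMetric (hb.posDef _ (hU p p.2)) _)
      (hlower p p.2) (hb.re_trace_genMetric_inv_le hB (hU p p.2))).trans hM
  have posDef_G (p : U) : (genMetric (g p) (β p)).PosDef := posDef_genMetric (hs.posDef p p.2) _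
  refine ⟨rfl, rfl, rfl, hs.isPluriclosedFlow.isHermitian, hs.isPluriclosedFlow.bundleFlow,
    hs.isPluriclosedFlow.metricFlow, ?_, ?_, ?_, ?_, ?_, ?_⟩ <;> intro p
  · exact hs.map_evaluation_h p ▸ (hs.posDef p p.2).inv.posSemidef
  · exact hs.map_evaluation_G p ▸ (posDef_G p).posSemidef
  · exact hs.map_evaluation_H p ▸ (posDef_G p).inv.posSemidef
  · rw [hs.map_evaluation_h]
    exact (re_trace_inv_le_re_trace_genMetric (hs.posDef p p.2) (β p)).trans (trace_G_le p)
  · exact hs.map_evaluation_G p ▸ trace_G_le p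
  · exact hs.map_evaluation_H p ▸ trace_H_le p

lemma evaluation_energy (hs : IsPluriclosedSolution U g β) (p : U) :
    evaluation p hs.flowData.energy
      = traceForm (g p)⁻¹ (genMetric (g p) (β p))⁻¹ (genMetric (g p) (β p))
        (fun i => wdPM i (fun q => genMetric (g q) (β q)) p * (genMetric (g p) (β p))⁻¹)
        fun i => wdPM i (fun q => genMetric (g q) (β q)) p * (genMetric (g p) (β p))⁻¹ := by
  rw [hs.isPluriclosedFlow.isHermitian.energy_eq_traceForm, map_traceForm, hs.map_evaluation_h,
    hs.map_evaluation_G, hs.map_evaluation_H]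
  simp only [hs.map_evaluation_Γ]

lemma re_upsNormP_le (hs : IsPluriclosedSolution U g β)
    (G' : ℝ × (Fin n → ℂ) → Matrix (Fin n ⊕ Fin n) (Fin n ⊕ Fin n) ℂ) (p : U) :
    (upsNormP g (fun q => genMetric (g q) (β q)) G' (fun q => genMetric (g q) (β q)) p).re
      ≤ 2 * (evaluation p hs.flowData.energy).re
        + 2 * (traceForm (g p)⁻¹ (genMetric (g p) (β p))⁻¹ (genMetric (g p) (β p))
          (fun i => wdPM i G' p * (G' p)⁻¹) fun i => wdPM i G' p * (G' p)⁻¹).re := by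
  have hG := posDef_genMetric (hs.posDef p p.2) (β p)
  rw [upsNormP_eq_traceForm, hs.evaluation_energy]
  have := traceForm_sub_le (hs.posDef p p.2).inv.posSemidef hG.inv.posSemidef hG.posSemidef
    (fun i => wdPM i (fun q => genMetric (g q) (β q)) p * (genMetric (g p) (β p))⁻¹)
    fun i => wdPM i G' p * (G' p)⁻¹
  simpa [Pi.sub_def] using (Complex.le_def.1 this).1

end IsPluriclosedSolution

/-- The constant multiplying `1 + 1 / t + R⁻²` in the `C¹` estimate, where `M` bounds the traces of
`g⁻¹`, of the generalized metric and of its inverse. -/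
def calabiConstant (n : ℕ) (M B : ℝ) : ℝ :=
  16 * (576 * (2 * n + 1) * M ^ 5 + 36 * M ^ 3)
    + 2 * (M ^ 3 * (n * (2 * n) ^ 2 * (2 * n * generalizedMetricBound n B ^ 2) ^ 2))

theorem IsPluriclosedSolution.re_upsNormP_le_calabiConstant {τ : ℝ}
    (hs : IsPluriclosedSolution (spacetimeBall n τ R) g β) (hb : IsBoundedBackground B R g' β')
    (hR : 0 < R) (hB : 0 ≤ B) (hflow : hs.flowData.IsBoundedFlow M) (hM : 1 ≤ M)
    (p : spacetimeBall n τ R) (hp : p.1.2 ∈ eball (n := n) (R / 2)) :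
    (upsNormP g (fun q => genMetric (g q) (β q)) (fun q => genMetric (g' q.2) (β' q.2))
      (fun q => genMetric (g q) (β q)) p).re
      ≤ calabiConstant n M B * (1 + 1 / p.1.1 + R⁻¹ ^ 2) := by
  have ht : 0 < p.1.1 := p.2.1.1
  have energy_le := (hflow.energy_le hM (N := 2 * n + 1) (by linarith [n.cast_nonneg (α := ℝ)])
    (by simp [← two_mul]) hR p hp).trans
      (mul_le_mul_of_nonneg_left (inv_min_sq_le ht R) (by positivity))
  have background_le := hb.re_traceForm_connection_le hB (U := spacetimeBall n τ R)
    (fun _ hq => hq.2) p.2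
    (hs.map_evaluation_h p ▸ hflow.posSemidef_h p) (hs.map_evaluation_H p ▸ hflow.posSemidef_H p)
    (hs.map_evaluation_G p ▸ hflow.posSemidef_G p) (hs.map_evaluation_h p ▸ hflow.trace_h_le p)
    (hs.map_evaluation_H p ▸ hflow.trace_H_le p) (hs.map_evaluation_G p ▸ hflow.trace_G_le p)
  have energy_coeff : 0 ≤ 16 * (576 * (2 * n + 1) * M ^ 5 + 36 * M ^ 3) := by positivity
  have background_coeff :
      0 ≤ 2 * (M ^ 3 * (n * (2 * n) ^ 2 * (2 * n * generalizedMetricBound n B ^ 2) ^ 2)) := by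
    positivity
  have rate_nonneg : 0 ≤ 1 / p.1.1 + R⁻¹ ^ 2 := by positivity
  unfold calabiConstant
  linarith [hs.re_upsNormP_le (fun q => genMetric (g' q.2) (β' q.2)) p,
    mul_nonneg background_coeff rate_nonneg]

end Solutions

lemma eball_half_subset {R : ℝ} (hR : 0 < R) : eball (n := n) (R / 2) ⊆ eball R := fun _ hz =>
  lt_trans hz.out (pow_lt_pow_left₀ (half_lt_self hR) (half_pos hR).le two_ne_zero)

lemma one_add_inv_add_inv_sq_le {t R : ℝ} (ht : 0 < t) (ht1 : t ≤ 1) (hR : 0 < R) (hR1 : R ≤ 1) :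
    1 + 1 / t + R⁻¹ ^ 2 ≤ 2 * (1 / t + R⁻¹ ^ 4) := by
  have : 1 ≤ 1 / t := (one_le_div ht).2 ht1
  have : R⁻¹ ^ 2 ≤ R⁻¹ ^ 4 := pow_le_pow_right₀ ((one_le_inv₀ hR).2 hR1) (by norm_num)
  have : 0 ≤ R⁻¹ ^ 4 := by positivity
  linarith

lemma isBoundedBackground_of_boundedDerivs2 {B R : ℝ}
    {g β : (Fin n → ℂ) → Matrix (Fin n) (Fin n) ℂ}
    (hg : ∀ a b, ContDiffOn ℝ (⊤ : ℕ∞) (fun z => g z a b) (eball R))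
    (hβ : ∀ a b, ContDiffOn ℝ (⊤ : ℕ∞) (fun z => β z a b) (eball R))
    (posDef : ∀ z ∈ eball R, (g z).PosDef)
    (bound : ∀ z ∈ eball R, ∀ a b, BoundedDerivs2 B (fun w => g w a b) z ∧
      BoundedDerivs2 B (fun w => (g w)⁻¹ a b) z ∧ BoundedDerivs2 B (fun w => β w a b) z) :
    IsBoundedBackground |B| R g β := by
  have weaken {f : (Fin n → ℂ) → ℂ} {z : Fin n → ℂ} (h : BoundedDerivs2 B f z) :
      BoundedDerivs1 |B| f z :=
    ⟨h.1.trans (le_abs_self B), fun i =>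
      ⟨(h.2.1 i).1.trans (le_abs_self B), (h.2.1 i).2.trans (le_abs_self B)⟩⟩
  exact ⟨hg, hβ, posDef, fun z hz a b => weaken (bound z hz a b).1,
    fun z hz a b => weaken (bound z hz a b).2.1, fun z hz a b => weaken (bound z hz a b).2.2⟩

end PluriclosedFlow

open PluriclosedFlow in
theorem calabi_C1_estimate_general (n : ℕ) {Λ B : ℝ} (hΛ : 0 < Λ) (hB : 0 ≤ B) :
    ∃ K : ℝ, 0 ≤ K ∧
      ∀ τ R : ℝ, 0 < R →
      ∀ g β : ℝ × (Fin n → ℂ) → Matrix (Fin n) (Fin n) ℂ,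
      ∀ gt βt : (Fin n → ℂ) → Matrix (Fin n) (Fin n) ℂ,
        IsPluriclosedSolution (spacetimeBall n τ R) g β →
        IsBoundedBackground B R gt βt →
        (∀ q ∈ spacetimeBall n τ R,
          (genMetric (g q) (β q) - (Λ : ℂ)⁻¹ • genMetric (gt q.2) (βt q.2)).PosSemidef ∧
          ((Λ : ℂ) • genMetric (gt q.2) (βt q.2) - genMetric (g q) (β q)).PosSemidef) →
        ∀ t ∈ Set.Ioo 0 τ, ∀ x ∈ eball (n := n) (R / 2),
          (upsNormP g (fun s => genMetric (g s) (β s))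
              (fun s => genMetric (gt s.2) (βt s.2)) (fun s => genMetric (g s) (β s))
              (t, x)).re ≤ K * (1 + 1 / t + R⁻¹ ^ 2) := by
  have nonneg : 0 ≤ Λ * (2 * n * generalizedMetricBound n B) := by
    unfold generalizedMetricBound
    positivity
  set M := 1 + Λ * (2 * n * generalizedMetricBound n B)
  refine ⟨calabiConstant n M B, by unfold calabiConstant; positivity,
    fun τ R hR g β gt βt hs hb hequiv t ht x hx => ?_⟩
  have hflow : hs.flowData.IsBoundedFlow M := hs.isBoundedFlow hb (fun _ hq => hq.2) hB hΛ
    (fun q hq => (hequiv q hq).1) (fun q hq => (hequiv q hq).2) (by linarith)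
  exact hs.re_upsNormP_le_calabiConstant hb hR hB hflow (by linarith)
    ⟨(t, x), ht, eball_half_subset hR hx⟩ hx

/-- Proposition 4.1: Calabi-type `C¹` estimate for pluriclosed flow:
if `Λ⁻¹·G̃ ≤ G ≤ Λ·G̃` on `[0,τ) × B_R(0)` then `|Υ|² ≤ K·(1/t + R⁻⁴)` on
`(0,τ) × B_{R/2}(0)`, with `K` depending only on `n`, `Λ`, and a bound `B` for the
background and its derivatives up to order two. -/
theorem calabi_C1_estimate (n : ℕ) (hn : 0 < n) (Λ B : ℝ) (hΛ : 1 ≤ Λ) :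
    ∃ K : ℝ,
      ∀ τ R : ℝ, 0 < τ → τ ≤ 1 → 0 < R → R ≤ 1 →
      ∀ g β : ℝ × (Fin n → ℂ) → Matrix (Fin n) (Fin n) ℂ,
      ∀ gt βt : (Fin n → ℂ) → Matrix (Fin n) (Fin n) ℂ,
        -- smoothness of the solution and the background
        (∀ a b : Fin n, ContDiffOn ℝ (⊤ : ℕ∞) (fun q => g q a b) (Set.Ico 0 τ ×ˢ eball R)) →
        (∀ a b : Fin n, ContDiffOn ℝ (⊤ : ℕ∞) (fun q => β q a b) (Set.Ico 0 τ ×ˢ eball R)) →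
        (∀ a b : Fin n, ContDiffOn ℝ (⊤ : ℕ∞) (fun z => gt z a b) (eball R)) →
        (∀ a b : Fin n, ContDiffOn ℝ (⊤ : ℕ∞) (fun z => βt z a b) (eball R)) →
        (∀ q ∈ Set.Ico 0 τ ×ˢ eball (n := n) R, (g q).PosDef) →
        (∀ q ∈ Set.Ico 0 τ ×ˢ eball (n := n) R, (β q)ᵀ = -(β q)) →
        (∀ z ∈ eball (n := n) R, (gt z).PosDef) →
        (∀ z ∈ eball (n := n) R, (βt z)ᵀ = -(βt z)) →
        -- β is a torsion potential for g and the pluriclosed flow equations hold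
        (∀ q ∈ Set.Ico 0 τ ×ˢ eball (n := n) R, ∀ i j k : Fin n,
          wdbP k (fun r => β r i j) q = torsionP g i j k q) →
        (∀ q ∈ Set.Ico 0 τ ×ˢ eball (n := n) R, ∀ i j : Fin n,
          dtP (fun r => g r i j) q = - traceChernP g g i j q + torsionSqP g i j q) →
        (∀ q ∈ Set.Ico 0 τ ×ˢ eball (n := n) R, ∀ i j : Fin n,
          dtP (fun r => β r i j) q = lapBetaP g β i j q) →
        -- uniform equivalence Λ⁻¹·G̃ ≤ G ≤ Λ·G̃ of the generalized metrics
        (∀ q ∈ Set.Ico 0 τ ×ˢ eball (n := n) R,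
          (genMetric (g q) (β q) - ((Λ : ℂ))⁻¹ • genMetric (gt q.2) (βt q.2)).PosSemidef ∧
          ((Λ : ℂ) • genMetric (gt q.2) (βt q.2) - genMetric (g q) (β q)).PosSemidef) →
        -- bounds on the background up to order two
        (∀ z ∈ eball (n := n) R, ∀ a b : Fin n,
          BoundedDerivs2 B (fun w => gt w a b) z ∧
          BoundedDerivs2 B (fun w => (gt w)⁻¹ a b) z ∧
          BoundedDerivs2 B (fun w => βt w a b) z) →
        -- conclusion
        ∀ t ∈ Set.Ioo 0 τ, ∀ x ∈ eball (n := n) (R / 2),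
          (upsNormP g (fun s => genMetric (g s) (β s))
              (fun s => genMetric (gt s.2) (βt s.2)) (fun s => genMetric (g s) (β s))
              (t, x)).re ≤ K * (1 / t + R⁻¹ ^ 4) := by
  obtain ⟨K, hK, estimate⟩ :=
    calabi_C1_estimate_general n (zero_lt_one.trans_le hΛ) (abs_nonneg B)
  refine ⟨2 * K, fun τ R _ hτ1 hR hR1 g β gt βt sg sβ sgt sβt pg aβ pgt _ tor fg fβ hequiv hb
    t ht x hx => ?_⟩
  have subset : (PluriclosedFlow.spacetimeBall n τ R : Set (ℝ × (Fin n → ℂ)))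
      ⊆ Set.Ico 0 τ ×ˢ eball R :=
    Set.prod_mono Set.Ioo_subset_Ico_self subset_rfl
  have solution : PluriclosedFlow.IsPluriclosedSolution (PluriclosedFlow.spacetimeBall n τ R) g β :=
    ⟨fun a b => (sg a b).mono subset, fun a b => (sβ a b).mono subset,
      fun q hq => pg q (subset hq), fun q hq => aβ q (subset hq), fun q hq => tor q (subset hq),
      fun q hq => fg q (subset hq), fun q hq => fβ q (subset hq)⟩
  have background := PluriclosedFlow.isBoundedBackground_of_boundedDerivs2 sgt sβt pgt hb
  have rate := PluriclosedFlow.one_add_inv_add_inv_sq_le ht.1 (ht.2.le.trans hτ1) hR hR1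
  calc _ ≤ K * (1 + 1 / t + R⁻¹ ^ 2) := estimate τ R hR g β gt βt solution background
        (fun q hq => hequiv q (subset hq)) t ht x hx
    _ ≤ K * (2 * (1 / t + R⁻¹ ^ 4)) := mul_le_mul_of_nonneg_left rate hK
    _ = 2 * K * (1 / t + R⁻¹ ^ 4) := by ring
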